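/- arXiv:2209.10140 — 14 statements merged into one kernel-verified Lean document; each statement's English description precedes it below -/
import Mathlib

section
/- For every 0 ≤ α < 2, the function β ↦ (β²+1)^{1−α/2} F(α,β) is differentiable on [0,∞) and its derivative satisfies d/dβ [(β²+1)^{1−α/2} F(α,β)] = −(α−1)/(β²+1)^{α/2} for every β ≥ 0. -/
open MeasureTheory Real

/-- `F α β = β/(β²+1) − (α/(β²+1)^{1−α/2}) ∫_{−arctan β}^{π/2} cos^α θ dθ`. -/
noncomputable def F (α β : ℝ) : ℝ :=
  β / (β ^ 2 + 1) -
    α / (β ^ 2 + 1) ^ (1 - α / 2) * ∫ θ in (-Real.arctan β)..(Real.pi / 2), Real.cos θ ^ α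

theorem stmt0 (α : ℝ) (hα0 : 0 ≤ α) (hα2 : α < 2) :
    ∀ β ∈ Set.Ici (0 : ℝ),
      HasDerivWithinAt (fun b : ℝ => (b ^ 2 + 1) ^ (1 - α / 2) * F α b)
        (-(α - 1) / (β ^ 2 + 1) ^ (α / 2)) (Set.Ici 0) β := by
  intro β _
  apply HasDerivAt.hasDerivWithinAt
  have hcont : Continuous (fun θ : ℝ => Real.cos θ ^ α) :=
    Real.continuous_cos.rpow_const (fun _ => Or.inr hα0)
  have hfun : (fun b : ℝ => (b ^ 2 + 1) ^ (1 - α / 2) * F α b) =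
      fun b : ℝ => b * (b ^ 2 + 1) ^ (-(α / 2)) +
        α * ∫ θ in (Real.pi / 2)..(-Real.arctan b), Real.cos θ ^ α := by
    funext b
    have hb : (0 : ℝ) < b ^ 2 + 1 := by positivity
    have h1 : (b ^ 2 + 1) ^ (1 - α / 2) = (b ^ 2 + 1) * (b ^ 2 + 1) ^ (-(α / 2)) := by
      rw [sub_eq_add_neg, Real.rpow_add hb, Real.rpow_one]
    have h2 : (b ^ 2 + 1) ^ (-(α / 2)) ≠ 0 := (Real.rpow_pos_of_pos hb _).ne'
    rw [intervalIntegral.integral_symm, F, h1]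
    field_simp
    ring
  rw [hfun]
  have hb : (0 : ℝ) < β ^ 2 + 1 := by positivity
  have hI : HasDerivAt (fun u : ℝ => ∫ θ in (Real.pi / 2)..u, Real.cos θ ^ α)
      (Real.cos (-Real.arctan β) ^ α) (-Real.arctan β) :=
    intervalIntegral.integral_hasDerivAt_right (hcont.intervalIntegrable _ _)
      (hcont.stronglyMeasurableAtFilter _ _) hcont.continuousAt
  have hI2 := (HasDerivAt.comp β hI (Real.hasDerivAt_arctan β).neg).const_mul α
  have hq : HasDerivAt (fun b : ℝ => b ^ 2 + 1) (2 * β) β := by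
    simpa using (hasDerivAt_pow 2 β).add_const 1
  have hP := (hasDerivAt_id β).mul (hq.rpow_const (p := -(α / 2)) (Or.inl hb.ne'))
  have hcos : Real.cos (-Real.arctan β) ^ α = (β ^ 2 + 1) ^ (-(α / 2)) := by
    rw [Real.cos_neg, Real.cos_arctan, one_div, Real.sqrt_eq_rpow, ← Real.rpow_neg (by positivity),
      ← Real.rpow_mul (by positivity), add_comm]
    congr 1
    ring
  refine (hP.add hI2).congr_deriv ?_
  have h3 : (β ^ 2 + 1) ^ (-(α / 2) - 1) = (β ^ 2 + 1) ^ (-(α / 2)) / (β ^ 2 + 1) := by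
    rw [Real.rpow_sub hb, Real.rpow_one]
  have h4 : -(α - 1) / (β ^ 2 + 1) ^ (α / 2) = -(α - 1) * (β ^ 2 + 1) ^ (-(α / 2)) := by
    rw [Real.rpow_neg hb.le, div_eq_mul_inv]
  have h5 : 1 + β ^ 2 ≠ 0 := by positivity
  rw [hcos, h3, h4, add_comm 1 (β ^ 2)]
  simp only [id]
  generalize (β ^ 2 + 1) ^ (-(α / 2)) = P
  field_simp
  ring
end

section
/- For every α with 1 ≤ α < 2 and every β ≥ 0, one has F(α,β) < 0. -/
open MeasureTheory Real

theorem stmt1 (α : ℝ) (hα1 : 1 ≤ α) (hα2 : α < 2) (β : ℝ) (hβ : 0 ≤ β) :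
    F α β < 0 := by
  unfold F
  have hs : 0 < β ^ 2 + 1 := by positivity
  have hφ0 : 0 ≤ Real.arctan β := by simpa using Real.arctan_mono hβ
  have hφ1 := Real.arctan_lt_pi_div_two β
  have hcont : Continuous (fun θ : ℝ => Real.cos θ ^ α) :=
    Real.continuous_cos.rpow_const (fun _ => Or.inr (by linarith))
  have hint : ∀ a b : ℝ, IntervalIntegrable (fun θ : ℝ => Real.cos θ ^ α) volume a b :=
    fun a b => hcont.intervalIntegrable a b
  have hsplit := intervalIntegral.integral_add_adjacent_intervals
    (hint (-Real.arctan β) 0) (hint 0 (Real.pi / 2))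
  have hpos : 0 < ∫ θ in (0:ℝ)..(Real.pi / 2), Real.cos θ ^ α := by
    apply intervalIntegral.intervalIntegral_pos_of_pos_on (hint _ _)
    · intro x hx
      exact Real.rpow_pos_of_pos (Real.cos_pos_of_mem_Ioo ⟨by linarith [hx.1, Real.pi_pos], hx.2⟩) _
    · positivity
  have hc0 : 0 < Real.cos (Real.arctan β) := Real.cos_arctan_pos β
  have hlow : (∫ θ in (-Real.arctan β)..0, Real.cos θ * Real.cos (Real.arctan β) ^ (α - 1))
      ≤ ∫ θ in (-Real.arctan β)..0, Real.cos θ ^ α := by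
    apply intervalIntegral.integral_mono_on (by linarith)
      ((Real.continuous_cos.mul continuous_const).intervalIntegrable _ _) (hint _ _)
    intro x hx
    have hle : Real.cos (Real.arctan β) ≤ Real.cos x := by
      rw [← Real.cos_neg x]
      apply Real.cos_le_cos_of_nonneg_of_le_pi <;> linarith [hx.1, hx.2, Real.pi_pos]
    have hx0 : 0 < Real.cos x := lt_of_lt_of_le hc0 hle
    have e : Real.cos x ^ α = Real.cos x * Real.cos x ^ (α - 1) := by
      rw [Real.rpow_sub_one hx0.ne']; field_simp
    rw [e]
    exact mul_le_mul_of_nonneg_left (Real.rpow_le_rpow hc0.le hle (by linarith)) hx0.le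
  rw [intervalIntegral.integral_mul_const, integral_cos] at hlow
  have hval : (Real.sin 0 - Real.sin (-Real.arctan β)) * Real.cos (Real.arctan β) ^ (α - 1)
      = β / (β ^ 2 + 1) * (β ^ 2 + 1) ^ (1 - α / 2) := by
    have hc : Real.cos (Real.arctan β) = (β ^ 2 + 1) ^ (-(1/2) : ℝ) := by
      rw [Real.cos_arctan, Real.rpow_neg hs.le, ← Real.sqrt_eq_rpow, add_comm, one_div]
    have hsn : Real.sin (Real.arctan β) = β * Real.cos (Real.arctan β) := by
      rw [Real.sin_arctan, Real.cos_arctan]; ring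
    rw [Real.sin_neg, Real.sin_zero, hsn, hc, ← Real.rpow_mul hs.le, zero_sub, neg_neg, mul_assoc,
      ← Real.rpow_add hs, div_mul_eq_mul_div, mul_div_assoc, ← Real.rpow_sub_one hs.ne']
    congr 2; ring
  rw [hval] at hlow
  set I := ∫ θ in (-Real.arctan β)..(Real.pi / 2), Real.cos θ ^ α
  have hp : 0 < (β ^ 2 + 1) ^ (1 - α / 2) := Real.rpow_pos_of_pos hs _
  have hI : β / (β ^ 2 + 1) * (β ^ 2 + 1) ^ (1 - α / 2) < I := by linarith
  have h0 : 0 ≤ β / (β ^ 2 + 1) * (β ^ 2 + 1) ^ (1 - α / 2) := by positivity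
  rw [sub_neg, div_mul_eq_mul_div, lt_div_iff₀ hp]
  nlinarith
end

section
/- For every α with 0 ≤ α < 1, the function β ↦ (β²+1)^{1−α/2} F(α,β) is strictly monotonically increasing on [0,∞). -/
open MeasureTheory Real

theorem stmt2 (α : ℝ) (hα0 : 0 ≤ α) (hα1 : α < 1) :
    StrictMonoOn (fun b : ℝ => (b ^ 2 + 1) ^ (1 - α / 2) * F α b) (Set.Ici 0) := by
  have hcont : Continuous (fun θ : ℝ => Real.cos θ ^ α) :=
    Real.continuous_cos.rpow_const (fun _ => Or.inr hα0)
  have hfun : ∀ b : ℝ, (b ^ 2 + 1) ^ (1 - α / 2) * F α b =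
      b * (b ^ 2 + 1) ^ (-α / 2) +
        α * ∫ θ in (Real.pi / 2)..(-Real.arctan b), Real.cos θ ^ α := by
    intro b
    have hb : (0 : ℝ) < b ^ 2 + 1 := by positivity
    have hp : (0 : ℝ) < (b ^ 2 + 1) ^ (1 - α / 2) := Real.rpow_pos_of_pos hb _
    have h1 : (b ^ 2 + 1) ^ (1 - α / 2) = (b ^ 2 + 1) * (b ^ 2 + 1) ^ (-α / 2) := by
      rw [show 1 - α / 2 = 1 + -α / 2 by ring, Real.rpow_add hb, Real.rpow_one]
    rw [F, intervalIntegral.integral_symm (-Real.arctan b) (Real.pi / 2), mul_sub]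
    have h2 : (b ^ 2 + 1) ^ (1 - α / 2) * (b / (b ^ 2 + 1)) = b * (b ^ 2 + 1) ^ (-α / 2) := by
      rw [h1]; field_simp
    rw [h2, ← mul_assoc, mul_div_cancel₀ _ hp.ne']
    ring
  have hder : ∀ b : ℝ, HasDerivAt (fun b : ℝ => (b ^ 2 + 1) ^ (1 - α / 2) * F α b)
      ((1 - α) * (b ^ 2 + 1) ^ (-α / 2)) b := by
    intro b
    rw [funext hfun]
    have hb : (0 : ℝ) < b ^ 2 + 1 := by positivity
    have hI : HasDerivAt (fun x : ℝ => ∫ θ in (Real.pi / 2)..x, Real.cos θ ^ α)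
        (Real.cos (-Real.arctan b) ^ α) (-Real.arctan b) :=
      intervalIntegral.integral_hasDerivAt_right (hcont.intervalIntegrable _ _)
        hcont.stronglyMeasurable.stronglyMeasurableAtFilter hcont.continuousAt
    have hI2 := (hI.comp b (Real.hasDerivAt_arctan b).neg).const_mul α
    have hq : HasDerivAt (fun x : ℝ => x ^ 2 + 1) (2 * b) b := by
      simpa using ((hasDerivAt_id b).pow 2).add_const 1
    have hr := (hasDerivAt_id b).mul (hq.rpow_const (p := -α / 2) (Or.inl hb.ne'))
    refine (hr.add hI2).congr_deriv ?_
    have hc : Real.cos (-Real.arctan b) ^ α = (b ^ 2 + 1) ^ (-α / 2) := by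
      rw [Real.cos_neg, Real.cos_arctan, add_comm 1, one_div, Real.sqrt_eq_rpow,
        ← Real.rpow_neg hb.le, ← Real.rpow_mul hb.le]
      congr 1; ring
    rw [hc, Real.rpow_sub_one hb.ne', add_comm 1 (b ^ 2)]
    simp only [id]
    field_simp
    ring
  refine strictMonoOn_of_deriv_pos (convex_Ici 0)
    (fun b _ => (hder b).continuousAt.continuousWithinAt) ?_
  intro b _
  rw [(hder b).deriv]
  exact mul_pos (by linarith) (Real.rpow_pos_of_pos (by positivity) _)
end

section
/- For every α with 0 < α < 1, one has (β²+1)^{1−α/2} F(α,β) → ∞ as β → ∞. -/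
open MeasureTheory Real Filter

theorem stmt3 (α : ℝ) (hα0 : 0 < α) (hα1 : α < 1) :
    Filter.Tendsto (fun b : ℝ => (b ^ 2 + 1) ^ (1 - α / 2) * F α b)
      Filter.atTop Filter.atTop := by
  have hlim : Tendsto (fun b : ℝ => (2 * b) ^ (1 - α) / 2 + (-(α * Real.pi))) atTop atTop := by
    apply tendsto_atTop_add_const_right
    apply Tendsto.atTop_div_const (by norm_num)
    exact (tendsto_rpow_atTop (by linarith)).comp
      (Tendsto.const_mul_atTop (by norm_num) tendsto_id)
  refine tendsto_atTop_mono' _ ?_ hlim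
  filter_upwards [eventually_ge_atTop (1 : ℝ)] with b hb
  have hpos : 0 < b ^ 2 + 1 := by positivity
  have hI : (∫ θ in (-Real.arctan b)..(Real.pi / 2), Real.cos θ ^ α) ≤ Real.pi := by
    have h1 : ‖∫ θ in (-Real.arctan b)..(Real.pi / 2), Real.cos θ ^ α‖
        ≤ 1 * |Real.pi / 2 - (-Real.arctan b)| := by
      apply intervalIntegral.norm_integral_le_of_norm_le_const
      intro x _
      rw [Real.norm_eq_abs]
      exact (Real.abs_rpow_le_abs_rpow _ _).trans
        (Real.rpow_le_one (abs_nonneg _) (Real.abs_cos_le_one x) hα0.le)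
    have h2 := Real.arctan_lt_pi_div_two b
    have h3 := Real.neg_pi_div_two_lt_arctan b
    rw [abs_of_nonneg (by linarith)] at h1
    have h4 := le_abs_self (∫ θ in (-Real.arctan b)..(Real.pi / 2), Real.cos θ ^ α)
    rw [Real.norm_eq_abs] at h1
    linarith
  have hQ : 0 < (b ^ 2 + 1) ^ (α / 2) := Real.rpow_pos_of_pos hpos _
  have hP : (b ^ 2 + 1) ^ (1 - α / 2) = (b ^ 2 + 1) / (b ^ 2 + 1) ^ (α / 2) := by
    rw [Real.rpow_sub hpos, Real.rpow_one]
  have hQle : (b ^ 2 + 1) ^ (α / 2) ≤ (2 * b) ^ α := by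
    calc (b ^ 2 + 1) ^ (α / 2) ≤ ((2 * b) ^ (2 : ℝ)) ^ (α / 2) := by
          apply Real.rpow_le_rpow hpos.le _ (by positivity)
          rw [Real.rpow_two]; nlinarith
      _ = (2 * b) ^ α := by
          rw [← Real.rpow_mul (by positivity)]; congr 1; ring
  have key : (b ^ 2 + 1) ^ (1 - α / 2) * F α b = b / (b ^ 2 + 1) ^ (α / 2)
      - α * ∫ θ in (-Real.arctan b)..(Real.pi / 2), Real.cos θ ^ α := by
    unfold F
    rw [hP]
    generalize (∫ θ in (-Real.arctan b)..(Real.pi / 2), Real.cos θ ^ α) = I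
    have := hQ.ne'
    field_simp
  have h5 : (2 * b) ^ (1 - α) / 2 = b / (2 * b) ^ α := by
    rw [Real.rpow_sub (by positivity), Real.rpow_one]
    field_simp
  have h6 : b / (2 * b) ^ α ≤ b / (b ^ 2 + 1) ^ (α / 2) :=
    div_le_div_of_nonneg_left (by positivity) hQ hQle
  have h7 := mul_le_mul_of_nonneg_left hI hα0.le
  rw [key, h5]
  linarith
end

section
/- For every α with 0 < α < 1, there exists a unique β*(α) ∈ (0,∞) such that F(α,β*(α)) = 0; moreover F(α,β) < 0 for all 0 ≤ β < β*(α) and F(α,β) > 0 for all β > β*(α). -/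
open MeasureTheory Real

noncomputable def GG (α β : ℝ) : ℝ :=
  β * (β ^ 2 + 1) ^ (-(α / 2)) - α * ∫ θ in (-Real.arctan β)..(Real.pi / 2), Real.cos θ ^ α

lemma F_eq (α β : ℝ) : F α β = (β ^ 2 + 1) ^ (α / 2 - 1) * GG α β := by
  have hp : (0:ℝ) < β ^ 2 + 1 := by positivity
  unfold F GG
  have h1 : (β ^ 2 + 1) ^ (α / 2 - 1) * (β ^ 2 + 1) ^ (-(α / 2)) = (β ^ 2 + 1)⁻¹ := by
    rw [← Real.rpow_add hp, ← Real.rpow_neg_one]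
    congr 1; ring
  have h2 : (β ^ 2 + 1) ^ (α / 2 - 1) = ((β ^ 2 + 1) ^ (1 - α / 2))⁻¹ := by
    rw [← Real.rpow_neg hp.le]
    congr 1; ring
  rw [div_eq_mul_inv, ← h1, div_eq_mul_inv α ((β ^ 2 + 1) ^ (1 - α / 2)), ← h2]
  ring

lemma cos_cont (α : ℝ) (h : 0 < α) : Continuous fun θ : ℝ => Real.cos θ ^ α :=
  Real.continuous_cos.rpow_const fun _ => Or.inr h.le

lemma GG_deriv (α β : ℝ) (h : 0 < α) :
    HasDerivAt (GG α) ((1 - α) * (β ^ 2 + 1) ^ (-(α / 2))) β := by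
  have hp : (0:ℝ) < β ^ 2 + 1 := by positivity
  have hc := cos_cont α h
  have hI : HasDerivAt (fun u => ∫ θ in u..(Real.pi / 2), Real.cos θ ^ α)
      (-(Real.cos (-Real.arctan β) ^ α)) (-Real.arctan β) :=
    intervalIntegral.integral_hasDerivAt_left (hc.intervalIntegrable _ _)
      (hc.stronglyMeasurableAtFilter _ _) hc.continuousAt
  have hJ := (hI.comp β (Real.hasDerivAt_arctan β).neg).const_mul α
  have hq : HasDerivAt (fun b : ℝ => b ^ 2 + 1) (2 * β) β := by
    simpa using (hasDerivAt_pow 2 β).add_const 1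
  have hK := (hasDerivAt_id β).mul (hq.rpow_const (p := -(α / 2)) (Or.inl hp.ne'))
  have hL := hK.sub hJ
  have hcos : Real.cos (-Real.arctan β) ^ α = (β ^ 2 + 1) ^ (-(α / 2)) := by
    rw [Real.cos_neg, Real.cos_arctan, Real.sqrt_eq_rpow, one_div, ← Real.rpow_neg (by positivity),
      ← Real.rpow_mul (by positivity), add_comm]
    congr 1; ring
  refine hL.congr_deriv ?_
  rw [hcos, Real.rpow_sub_one hp.ne']
  have : 1 + β ^ 2 = β ^ 2 + 1 := by ring
  simp only [id, this]
  field_simp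
  ring

lemma GG_zero (α : ℝ) (h : 0 < α) : GG α 0 < 0 := by
  have : 0 < ∫ θ in (0:ℝ)..(Real.pi / 2), Real.cos θ ^ α := by
    apply intervalIntegral.intervalIntegral_pos_of_pos_on ((cos_cont α h).intervalIntegrable _ _)
    · intro x hx
      exact Real.rpow_pos_of_pos (Real.cos_pos_of_mem_Ioo ⟨by linarith [hx.1, Real.pi_pos], hx.2⟩) _
    · positivity
  simp only [GG, Real.arctan_zero, neg_zero, zero_mul]
  nlinarith

lemma GG_large (α : ℝ) (h : 0 < α) (h1 : α < 1) : ∃ b, 0 ≤ b ∧ 0 < GG α b := by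
  have hpi := Real.pi_gt_three
  set b : ℝ := (2 * Real.pi) ^ (1 / (1 - α)) with hb
  have hb1 : 1 ≤ b := Real.one_le_rpow (by linarith) (by apply div_nonneg <;> linarith)
  have hb0 : 0 < b := by linarith
  have hbp : b ^ (1 - α) = 2 * Real.pi := by
    rw [hb, ← Real.rpow_mul (by positivity), one_div_mul_cancel (by linarith), Real.rpow_one]
  have hI : ∫ θ in (-Real.arctan b)..(Real.pi / 2), Real.cos θ ^ α ≤ Real.pi := by
    have := intervalIntegral.norm_integral_le_of_norm_le_const (a := -Real.arctan b)
      (b := Real.pi / 2) (f := fun θ => Real.cos θ ^ α) (C := 1) (fun x _ =>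
        (Real.abs_rpow_le_abs_rpow _ _).trans
          (Real.rpow_le_one (abs_nonneg _) (Real.abs_cos_le_one x) h.le))
    have h2 := Real.arctan_lt_pi_div_two b
    have h3 := Real.neg_pi_div_two_lt_arctan b
    rw [abs_of_pos (by linarith)] at this
    have h4 := (le_abs_self _).trans this
    linarith
  refine ⟨b, hb0.le, ?_⟩
  have hK : Real.pi ≤ b * (b ^ 2 + 1) ^ (-(α / 2)) := by
    have e1 : (b ^ 2 + 1) ^ (α / 2) ≤ 2 * b ^ α := by
      calc (b ^ 2 + 1) ^ (α / 2) ≤ (2 * b ^ 2) ^ (α / 2) :=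
            Real.rpow_le_rpow (by positivity) (by nlinarith) (by positivity)
        _ = 2 ^ (α / 2) * b ^ α := by
            rw [Real.mul_rpow (by norm_num) (by positivity), ← Real.rpow_natCast b 2,
              ← Real.rpow_mul hb0.le]
            congr 2; push_cast; ring
        _ ≤ 2 * b ^ α := by
            gcongr
            calc (2:ℝ) ^ (α / 2) ≤ 2 ^ (1:ℝ) :=
                  Real.rpow_le_rpow_of_exponent_le (by norm_num) (by linarith)
              _ = 2 := Real.rpow_one _
    rw [Real.rpow_neg (by positivity), ← div_eq_mul_inv, le_div_iff₀ (by positivity)]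
    rw [Real.rpow_sub hb0, Real.rpow_one, div_eq_iff (by positivity)] at hbp
    calc Real.pi * (b ^ 2 + 1) ^ (α / 2) ≤ Real.pi * (2 * b ^ α) := by gcongr
      _ = b := by linarith
  unfold GG
  nlinarith

theorem stmt4 (α : ℝ) (hα0 : 0 < α) (hα1 : α < 1) :
    ∃ βs : ℝ, 0 < βs ∧ F α βs = 0 ∧
      (∀ β' : ℝ, 0 < β' → F α β' = 0 → β' = βs) ∧
      (∀ β : ℝ, 0 ≤ β → β < βs → F α β < 0) ∧
      (∀ β : ℝ, βs < β → 0 < F α β) := by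
  have hmono : StrictMono (GG α) := by
    apply strictMono_of_deriv_pos
    intro x
    rw [(GG_deriv α x hα0).deriv]
    exact mul_pos (by linarith) (Real.rpow_pos_of_pos (by positivity) _)
  have hcont : Continuous (GG α) :=
    continuous_iff_continuousAt.2 fun x => (GG_deriv α x hα0).continuousAt
  have hP : ∀ β : ℝ, 0 < (β ^ 2 + 1) ^ (α / 2 - 1) := fun β =>
    Real.rpow_pos_of_pos (by positivity) _
  have h0 := GG_zero α hα0
  obtain ⟨b, hb, hGb⟩ := GG_large α hα0 hα1
  obtain ⟨s, hs, hGs⟩ := intermediate_value_Icc hb hcont.continuousOn ⟨h0.le, hGb.le⟩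
  refine ⟨s, ?_, ?_, ?_, ?_, ?_⟩
  · apply hmono.lt_iff_lt.1
    rw [hGs]; exact h0
  · rw [F_eq, hGs, mul_zero]
  · intro β _ hF
    rw [F_eq] at hF
    have := (mul_eq_zero.1 hF).resolve_left (hP β).ne'
    exact hmono.injective (this.trans hGs.symm)
  · intro β _ hlt
    rw [F_eq]
    exact mul_neg_of_pos_of_neg (hP β) (hGs ▸ hmono hlt)
  · intro β hlt
    rw [F_eq]
    exact mul_pos (hP β) (hGs ▸ hmono hlt)
end

section
/- For every α with 0 ≤ α < 2, every β ≥ 0, and every a > 0, the integral ∫_0^∞ (y² − (α+1)(a−βy)²) / ((a−βy)² + y²)^{2+α/2} dy converges and equals F(α,β) / a^{1+α}. -/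
open MeasureTheory Real

theorem aux_cos_pos {β θ : ℝ} (h : θ ∈ Set.Ioo (-Real.arctan β) (π / 2)) : 0 < Real.cos θ := by
  apply Real.cos_pos_of_mem_Ioo
  exact ⟨by have := Real.arctan_lt_pi_div_two β; linarith [h.1], h.2⟩

theorem aux_cos_cont (α : ℝ) (hα0 : 0 ≤ α) : Continuous (fun θ : ℝ => Real.cos θ ^ α) :=
  Real.continuous_cos.rpow_const (fun _ => Or.inr hα0)

theorem aux_G_cont (α β : ℝ) (hα0 : 0 ≤ α) :
    Continuous (fun θ : ℝ => (-2 * β * Real.cos θ + (β ^ 2 - 1) * Real.sin θ) *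
      Real.cos θ ^ (α + 1)) := by
  have := aux_cos_cont (α + 1) (by linarith)
  fun_prop

theorem aux_G_deriv (α β θ : ℝ) (hc : 0 < Real.cos θ) :
    HasDerivAt (fun θ : ℝ => (-2 * β * Real.cos θ + (β ^ 2 - 1) * Real.sin θ) *
      Real.cos θ ^ (α + 1))
      (((β * Real.cos θ + Real.sin θ) ^ 2 - (α + 1) * (Real.cos θ - β * Real.sin θ) ^ 2 + α) *
        Real.cos θ ^ α) θ := by
  have h1 := ((Real.hasDerivAt_cos θ).const_mul (-2 * β)).add
    ((Real.hasDerivAt_sin θ).const_mul (β ^ 2 - 1))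
  have h2 := (Real.hasDerivAt_cos θ).rpow_const (p := α + 1) (Or.inl hc.ne')
  refine (h1.mul h2).congr_deriv ?_
  have e : Real.cos θ ^ (α + 1) = Real.cos θ ^ α * Real.cos θ := by
    rw [Real.rpow_add hc, Real.rpow_one]
  have e2 : α + 1 - 1 = α := by ring
  simp only [Pi.add_apply]
  rw [e2, e]
  have h3 := Real.sin_sq_add_cos_sq θ
  linear_combination (α * Real.cos θ ^ α) * h3

theorem aux_integral (α β : ℝ) (hα0 : 0 ≤ α) (hβ : 0 ≤ β) :
    ∫ θ in (-Real.arctan β)..(π / 2),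
      ((β * Real.cos θ + Real.sin θ) ^ 2 - (α + 1) * (Real.cos θ - β * Real.sin θ) ^ 2) *
        Real.cos θ ^ α =
    β * (β ^ 2 + 1) ^ (-α / 2) - α * ∫ θ in (-Real.arctan β)..(π / 2), Real.cos θ ^ α := by
  have hle : -Real.arctan β ≤ π / 2 := by
    have := Real.neg_pi_div_two_lt_arctan β
    linarith
  have hcc := aux_cos_cont α hα0
  have key := intervalIntegral.integral_eq_sub_of_hasDerivAt_of_le hle
    (aux_G_cont α β hα0).continuousOn (fun θ hθ => aux_G_deriv α β θ (aux_cos_pos hθ))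
    (by apply Continuous.intervalIntegrable; fun_prop)
  have split : ∫ θ in (-Real.arctan β)..(π / 2),
      ((β * Real.cos θ + Real.sin θ) ^ 2 - (α + 1) * (Real.cos θ - β * Real.sin θ) ^ 2 + α) *
        Real.cos θ ^ α = (∫ θ in (-Real.arctan β)..(π / 2),
      ((β * Real.cos θ + Real.sin θ) ^ 2 - (α + 1) * (Real.cos θ - β * Real.sin θ) ^ 2) *
        Real.cos θ ^ α) + α * ∫ θ in (-Real.arctan β)..(π / 2), Real.cos θ ^ α := by
    rw [← intervalIntegral.integral_const_mul, ← intervalIntegral.integral_add]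
    · congr 1; ext θ; ring
    · apply Continuous.intervalIntegrable; fun_prop
    · apply Continuous.intervalIntegrable; fun_prop
  rw [split] at key
  have hk : 0 < β ^ 2 + 1 := by positivity
  have hcos : Real.cos (Real.arctan β) = (β ^ 2 + 1) ^ (-(1 / 2) : ℝ) := by
    rw [Real.cos_arctan, Real.rpow_neg hk.le, ← Real.sqrt_eq_rpow, add_comm, one_div]
  have hsin : Real.sin (Real.arctan β) = β * (β ^ 2 + 1) ^ (-(1 / 2) : ℝ) := by
    rw [Real.sin_arctan, Real.rpow_neg hk.le, ← Real.sqrt_eq_rpow, add_comm, div_eq_mul_inv]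
  simp only [Real.cos_pi_div_two, Real.cos_neg, Real.sin_neg, hcos, hsin] at key
  rw [Real.zero_rpow (by linarith), ← Real.rpow_mul hk.le] at key
  have e : (β ^ 2 + 1) ^ (-α / 2) =
      (β ^ 2 + 1) * ((β ^ 2 + 1) ^ (-(1 / 2) : ℝ) * (β ^ 2 + 1) ^ (-(1 / 2) * (α + 1))) := by
    rw [← Real.rpow_add hk]
    nth_rw 2 [← Real.rpow_one (β ^ 2 + 1)]
    rw [← Real.rpow_add hk]
    congr 1; ring
  rw [e]
  linear_combination key

theorem aux_image (β a : ℝ) (ha : 0 < a) :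
    (fun θ : ℝ => a / (β ^ 2 + 1) * (β + Real.tan θ)) '' Set.Ioo (-Real.arctan β) (π / 2)
      = Set.Ioi 0 := by
  have hk : 0 < β ^ 2 + 1 := by positivity
  ext y
  constructor
  · rintro ⟨θ, hθ, rfl⟩
    have h1 : Real.tan (-Real.arctan β) < Real.tan θ :=
      Real.tan_lt_tan_of_lt_of_lt_pi_div_two
        (by have := Real.arctan_lt_pi_div_two β; linarith) hθ.2 hθ.1
    rw [Real.tan_neg, Real.tan_arctan] at h1
    have : 0 < β + Real.tan θ := by linarith
    simp only [Set.mem_Ioi]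
    positivity
  · intro hy
    have hy : 0 < y := hy
    refine ⟨Real.arctan (y * (β ^ 2 + 1) / a - β), ⟨?_, Real.arctan_lt_pi_div_two _⟩, ?_⟩
    · rw [← Real.arctan_neg]
      apply Real.arctan_strictMono
      have : 0 < y * (β ^ 2 + 1) / a := by positivity
      linarith
    · simp only [Real.tan_arctan]
      field_simp
      ring

theorem aux_integrand (α β a θ : ℝ) (ha : 0 < a) (hc : 0 < Real.cos θ) :
    |a / (β ^ 2 + 1) * (1 / Real.cos θ ^ 2)| •
      (((a / (β ^ 2 + 1) * (β + Real.tan θ)) ^ 2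
          - (α + 1) * (a - β * (a / (β ^ 2 + 1) * (β + Real.tan θ))) ^ 2) /
        ((a - β * (a / (β ^ 2 + 1) * (β + Real.tan θ))) ^ 2
          + (a / (β ^ 2 + 1) * (β + Real.tan θ)) ^ 2) ^ (2 + α / 2)) =
    ((β ^ 2 + 1) ^ (α / 2 - 1) / a ^ (1 + α)) *
      (((β * Real.cos θ + Real.sin θ) ^ 2 - (α + 1) * (Real.cos θ - β * Real.sin θ) ^ 2) *
        Real.cos θ ^ α) := by
  have hk : 0 < β ^ 2 + 1 := by positivity
  have hs := Real.sin_sq_add_cos_sq θ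
  rw [abs_of_pos (by positivity), Real.tan_eq_sin_div_cos, smul_eq_mul]
  set c := Real.cos θ
  set s := Real.sin θ
  have e1 : a / (β ^ 2 + 1) * (β + s / c) = a / ((β ^ 2 + 1) * c) * (β * c + s) := by
    field_simp
  have e2 : a - β * (a / ((β ^ 2 + 1) * c) * (β * c + s))
      = a / ((β ^ 2 + 1) * c) * (c - β * s) := by
    field_simp; ring
  rw [e1, e2]
  have e3 : (a / ((β ^ 2 + 1) * c) * (c - β * s)) ^ 2 + (a / ((β ^ 2 + 1) * c) * (β * c + s)) ^ 2
      = a ^ 2 / ((β ^ 2 + 1) * c ^ 2) := by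
    have : (c - β * s) ^ 2 + (β * c + s) ^ 2 = β ^ 2 + 1 := by
      linear_combination (β ^ 2 + 1) * hs
    rw [mul_pow, mul_pow, ← mul_add, this]
    field_simp
  have e4 : (a ^ 2 / ((β ^ 2 + 1) * c ^ 2)) ^ (2 + α / 2) =
      a ^ 3 * a ^ (1 + α) / ((β ^ 2 + 1) ^ 3 * (β ^ 2 + 1) ^ (α / 2 - 1) * (c ^ 4 * c ^ α)) := by
    rw [Real.div_rpow (by positivity) (by positivity), Real.mul_rpow hk.le (by positivity)]
    simp only [← Real.rpow_natCast]
    rw [← Real.rpow_mul ha.le, ← Real.rpow_mul hc.le, ← Real.rpow_add ha,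
      ← Real.rpow_add hc, ← Real.rpow_add (by simpa using hk)]
    norm_num
    ring_nf
  rw [e3, e4]
  have p1 : 0 < a ^ (1 + α) := by positivity
  have p2 : 0 < (β ^ 2 + 1) ^ (α / 2 - 1) := by positivity
  have p3 : 0 < c ^ α := by positivity
  generalize a ^ (1 + α) = A at *
  generalize (β ^ 2 + 1) ^ (α / 2 - 1) = B at *
  generalize c ^ α = C at *
  field_simp

theorem stmt7 (α β a : ℝ) (hα0 : 0 ≤ α) (hα2 : α < 2) (hβ : 0 ≤ β) (ha : 0 < a) :
    MeasureTheory.IntegrableOn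
      (fun y : ℝ => (y ^ 2 - (α + 1) * (a - β * y) ^ 2) /
        ((a - β * y) ^ 2 + y ^ 2) ^ (2 + α / 2)) (Set.Ioi 0) ∧
    ∫ y in Set.Ioi (0 : ℝ),
        (y ^ 2 - (α + 1) * (a - β * y) ^ 2) / ((a - β * y) ^ 2 + y ^ 2) ^ (2 + α / 2) =
      F α β / a ^ (1 + α) := by
  have hk : 0 < β ^ 2 + 1 := by positivity
  have hle : -Real.arctan β ≤ π / 2 := by
    have := Real.neg_pi_div_two_lt_arctan β
    linarith
  have hder : ∀ θ ∈ Set.Ioo (-Real.arctan β) (π / 2),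
      HasDerivWithinAt (fun θ : ℝ => a / (β ^ 2 + 1) * (β + Real.tan θ))
        (a / (β ^ 2 + 1) * (1 / Real.cos θ ^ 2)) (Set.Ioo (-Real.arctan β) (π / 2)) θ := by
    intro θ hθ
    exact (((Real.hasDerivAt_tan (aux_cos_pos hθ).ne').const_add β).const_mul _).hasDerivWithinAt
  have hinj : Set.InjOn (fun θ : ℝ => a / (β ^ 2 + 1) * (β + Real.tan θ))
      (Set.Ioo (-Real.arctan β) (π / 2)) := by
    intro x hx y hy hxy
    have hb := Real.arctan_lt_pi_div_two β
    have h1 : a / (β ^ 2 + 1) ≠ 0 := by positivity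
    have h2 := mul_left_cancel₀ h1 hxy
    exact Real.tan_inj_of_lt_of_lt_pi_div_two (by linarith [hx.1]) hx.2 (by linarith [hy.1]) hy.2
      (by linarith)
  have hcc := aux_cos_cont α hα0
  rw [← aux_image β a ha]
  constructor
  · rw [integrableOn_image_iff_integrableOn_abs_deriv_smul measurableSet_Ioo hder hinj]
    rw [integrableOn_congr_fun (fun θ hθ => aux_integrand α β a θ ha (aux_cos_pos hθ))
      measurableSet_Ioo]
    apply IntegrableOn.mono_set _ Set.Ioo_subset_Icc_self
    apply Continuous.integrableOn_Icc
    fun_prop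
  · rw [integral_image_eq_integral_abs_deriv_smul measurableSet_Ioo hder hinj]
    rw [setIntegral_congr_fun measurableSet_Ioo
      (fun θ hθ => aux_integrand α β a θ ha (aux_cos_pos hθ))]
    rw [← integral_Ioc_eq_integral_Ioo, ← intervalIntegral.integral_of_le hle,
      intervalIntegral.integral_const_mul, aux_integral α β hα0 hβ, F]
    have q1 : (β ^ 2 + 1) ^ (1 - α / 2) = ((β ^ 2 + 1) ^ (α / 2 - 1))⁻¹ := by
      rw [← Real.rpow_neg hk.le]; congr 1; ring
    have q2 : (β ^ 2 + 1) ^ (α / 2 - 1) * (β ^ 2 + 1) ^ (-α / 2) = (β ^ 2 + 1)⁻¹ := by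
      rw [← Real.rpow_add hk, ← Real.rpow_neg_one]; congr 1; ring
    rw [q1, div_inv_eq_mul, div_eq_mul_inv β, ← q2]
    ring
end

section
/- For every real α ≥ 0 and every β ≥ 0, one has ∫_{−arctan β}^{π/2} ((β + tan θ)² − (α+1)(1 − β tan θ)²) (cos θ)^{α+2} dθ = β (β²+1)^{−α/2} − α ∫_{−arctan β}^{π/2} (cos θ)^α dθ. -/
open MeasureTheory Real

theorem stmt8 (α β : ℝ) (hα : 0 ≤ α) (hβ : 0 ≤ β) :
    ∫ θ in (-Real.arctan β)..(Real.pi / 2),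
        ((β + Real.tan θ) ^ 2 - (α + 1) * (1 - β * Real.tan θ) ^ 2) * Real.cos θ ^ (α + 2) =
      β * (β ^ 2 + 1) ^ (-(α / 2)) -
        α * ∫ θ in (-Real.arctan β)..(Real.pi / 2), Real.cos θ ^ α := by
  have hlt : -Real.arctan β < Real.pi / 2 := by
    have := Real.neg_pi_div_two_lt_arctan β
    linarith
  have hlo : -(Real.pi / 2) < -Real.arctan β := by
    have := Real.arctan_lt_pi_div_two β
    linarith
  have hc : Continuous fun θ : ℝ => Real.cos θ ^ α :=
    Real.continuous_cos.rpow_const (fun _ => Or.inr hα)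
  have hG : Continuous fun θ : ℝ => ((β * Real.cos θ + Real.sin θ) ^ 2
      - (α + 1) * (Real.cos θ - β * Real.sin θ) ^ 2) * Real.cos θ ^ α := by
    fun_prop
  have h1 : ∫ θ in (-Real.arctan β)..(Real.pi / 2),
        ((β + Real.tan θ) ^ 2 - (α + 1) * (1 - β * Real.tan θ) ^ 2) * Real.cos θ ^ (α + 2)
      = ∫ θ in (-Real.arctan β)..(Real.pi / 2), ((β * Real.cos θ + Real.sin θ) ^ 2
      - (α + 1) * (Real.cos θ - β * Real.sin θ) ^ 2) * Real.cos θ ^ α := by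
    rw [intervalIntegral.integral_of_le hlt.le, intervalIntegral.integral_of_le hlt.le,
      integral_Ioc_eq_integral_Ioo, integral_Ioc_eq_integral_Ioo]
    refine setIntegral_congr_fun measurableSet_Ioo ?_
    intro θ hθ
    have hp : 0 < Real.cos θ := Real.cos_pos_of_mem_Ioo ⟨hlo.trans hθ.1, hθ.2⟩
    simp only
    rw [Real.rpow_add hp, Real.tan_eq_sin_div_cos, Real.rpow_two]
    field_simp
  have h2 : ∫ θ in (-Real.arctan β)..(Real.pi / 2), (((β * Real.cos θ + Real.sin θ) ^ 2
      - (α + 1) * (Real.cos θ - β * Real.sin θ) ^ 2) * Real.cos θ ^ α + α * Real.cos θ ^ α)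
      = ((β ^ 2 - 1) * Real.sin (π / 2) * Real.cos (π / 2) ^ (α + 1)
          - 2 * β * Real.cos (π / 2) ^ (α + 2))
        - ((β ^ 2 - 1) * Real.sin (-Real.arctan β) * Real.cos (-Real.arctan β) ^ (α + 1)
          - 2 * β * Real.cos (-Real.arctan β) ^ (α + 2)) := by
    refine intervalIntegral.integral_eq_sub_of_hasDerivAt_of_le (f := fun θ =>
      (β ^ 2 - 1) * Real.sin θ * Real.cos θ ^ (α + 1) - 2 * β * Real.cos θ ^ (α + 2)) hlt.le ?_ ?_ ?_
    · have e1 : Continuous fun θ : ℝ => Real.cos θ ^ (α + 1) :=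
        Real.continuous_cos.rpow_const (fun _ => Or.inr (by linarith))
      have e2 : Continuous fun θ : ℝ => Real.cos θ ^ (α + 2) :=
        Real.continuous_cos.rpow_const (fun _ => Or.inr (by linarith))
      exact Continuous.continuousOn (by fun_prop)
    · intro θ hθ
      have hp : 0 < Real.cos θ := Real.cos_pos_of_mem_Ioo ⟨hlo.trans hθ.1, hθ.2⟩
      have d1 := (Real.hasDerivAt_cos θ).rpow_const (p := α + 1) (Or.inl hp.ne')
      have d2 := (Real.hasDerivAt_cos θ).rpow_const (p := α + 2) (Or.inl hp.ne')
      have d := (((Real.hasDerivAt_sin θ).const_mul (β ^ 2 - 1)).mul d1).sub (d2.const_mul (2 * β))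
      refine d.congr_deriv ?_
      have i1 : α + 1 - 1 = α := by ring
      have i2 : α + 2 - 1 = α + 1 := by ring
      rw [i1, i2, Real.rpow_add hp, Real.rpow_one]
      have hs := Real.sin_sq_add_cos_sq θ
      linear_combination (α * Real.cos θ ^ α) * hs
    · exact (hG.add (continuous_const.mul hc)).intervalIntegrable _ _
  have hc2 : Continuous fun θ : ℝ => α * Real.cos θ ^ α := by fun_prop
  rw [intervalIntegral.integral_add (hG.intervalIntegrable _ _)
    (hc2.intervalIntegrable _ _), intervalIntegral.integral_const_mul] at h2
  rw [h1, eq_sub_iff_add_eq, h2]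
  have hq : 0 < β ^ 2 + 1 := by positivity
  have hp : 0 < Real.cos (Real.arctan β) := Real.cos_arctan_pos β
  have hsin : Real.sin (Real.arctan β) = β * Real.cos (Real.arctan β) := by
    rw [Real.sin_arctan, Real.cos_arctan]; ring
  have hsq : Real.cos (Real.arctan β) ^ 2 * (β ^ 2 + 1) = 1 := by
    rw [Real.cos_sq_arctan, add_comm (1:ℝ)]; field_simp
  have hpow : Real.cos (Real.arctan β) ^ α = (β ^ 2 + 1) ^ (-(α / 2)) := by
    have : β ^ 2 + 1 = Real.cos (Real.arctan β) ^ (-2 : ℝ) := by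
      rw [Real.rpow_neg hp.le, Real.rpow_two]
      exact eq_inv_of_mul_eq_one_right hsq
    rw [this, ← Real.rpow_mul hp.le]
    congr 1; ring
  rw [Real.cos_pi_div_two, Real.zero_rpow (by linarith), Real.zero_rpow (by linarith),
    Real.sin_neg, Real.cos_neg, hsin, Real.rpow_add hp, Real.rpow_add hp, Real.rpow_one,
    Real.rpow_two, hpow]
  linear_combination (β * (β ^ 2 + 1) ^ (-(α / 2))) * hsq
end

section
/- For every α with 0 ≤ α < 2 there exists a constant C_α > 0, depending only on α, such that for every β ≥ 0, every M > 0, and every a with 0 < a ≤ M/2, one has |∫_{M/max(β,1)}^∞ ((α+1)(a−βy)² − y²) / ((a−βy)² + y²)^{2+α/2} dy| ≤ C_α / M^{1+α}. -/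
open MeasureTheory Real

theorem stmt9 (α : ℝ) (hα0 : 0 ≤ α) (hα2 : α < 2) :
    ∃ C : ℝ, 0 < C ∧ ∀ β M a : ℝ, 0 ≤ β → 0 < M → 0 < a → a ≤ M / 2 →
      |∫ y in Set.Ioi (M / max β 1),
          ((α + 1) * (a - β * y) ^ 2 - y ^ 2) / ((a - β * y) ^ 2 + y ^ 2) ^ (2 + α / 2)| ≤
        C / M ^ (1 + α) := by
  refine ⟨2 ^ (2 + α), by positivity, ?_⟩
  intro β M a hβ hM ha haM
  obtain ⟨m, hm⟩ : ∃ m, m = max β 1 := ⟨_, rfl⟩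
  have hm1 : 1 ≤ m := hm ▸ le_max_right _ _
  have hm0 : 0 < m := by linarith
  rw [← hm]
  have hc : 0 < M / m := by positivity
  have hint := (integrableOn_Ioi_rpow_of_lt (a := -(2 + α)) (by linarith) hc).const_mul
    ((α + 1) * (m / 2) ^ (-(2 + α)))
  have hb : ∀ y ∈ Set.Ioi (M / m),
      ‖((α + 1) * (a - β * y) ^ 2 - y ^ 2) / ((a - β * y) ^ 2 + y ^ 2) ^ (2 + α / 2)‖ ≤
        (α + 1) * (m / 2) ^ (-(2 + α)) * y ^ (-(2 + α)) := by
    intro y hy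
    have hy' : M / m < y := hy
    have hy0 : 0 < y := hc.trans hy'
    have hMy : M < y * m := (div_lt_iff₀ hm0).1 hy'
    obtain ⟨D, hD⟩ : ∃ D, D = (a - β * y) ^ 2 + y ^ 2 := ⟨_, rfl⟩
    have hD0 : 0 < D := by rw [hD]; positivity
    have hDm : (m / 2 * y) ^ 2 ≤ D := by
      rcases le_total β 1 with h | h
      · rw [max_eq_right h] at hm
        subst hm
        rw [hD]; nlinarith [sq_nonneg (a - β * y), sq_nonneg y]
      · rw [max_eq_left h] at hm
        subst hm
        have h1 : m / 2 * y ≤ m * y - a := by nlinarith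
        have h2 : (m / 2 * y) ^ 2 ≤ (m * y - a) ^ 2 := by gcongr
        rw [hD]; nlinarith [sq_nonneg y]
    have hnum : |(α + 1) * (a - β * y) ^ 2 - y ^ 2| ≤ (α + 1) * D := by
      have p1 := sq_nonneg (a - β * y)
      have p2 := sq_nonneg y
      rw [abs_le, hD]
      constructor <;> nlinarith [mul_nonneg hα0 p1, mul_nonneg hα0 p2]
    rw [← hD, norm_div, Real.norm_eq_abs, Real.norm_eq_abs, abs_of_pos (rpow_pos_of_pos hD0 _),
      mul_assoc, ← mul_rpow (by positivity) hy0.le]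
    have hsplit : D ^ (2 + α / 2) = D * D ^ (1 + α / 2) := by
      rw [show 2 + α / 2 = 1 + (1 + α / 2) by ring, rpow_add hD0 1, rpow_one]
    have hlow : (m / 2 * y) ^ (2 + α) ≤ D ^ (1 + α / 2) := by
      have := rpow_le_rpow (by positivity) hDm (show 0 ≤ 1 + α / 2 by linarith)
      rwa [← rpow_natCast, ← rpow_mul (by positivity),
        show ((2 : ℕ) : ℝ) * (1 + α / 2) = 2 + α by push_cast; ring] at this
    have hpos : 0 < (m / 2 * y) ^ (2 + α) := by positivity
    rw [rpow_neg (by positivity), ← div_eq_mul_inv, hsplit]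
    calc _ ≤ (α + 1) * D / (D * D ^ (1 + α / 2)) := by gcongr
      _ = (α + 1) / D ^ (1 + α / 2) := by field_simp
      _ ≤ _ := by gcongr
  have key := norm_integral_le_of_norm_le hint
    ((ae_restrict_iff' measurableSet_Ioi).2 (Filter.Eventually.of_forall hb))
  rw [Real.norm_eq_abs] at key
  refine key.trans ?_
  rw [integral_const_mul, integral_Ioi_rpow_of_lt (by linarith) hc]
  rw [show -(2 + α) + 1 = -(1 + α) by ring, rpow_neg (by positivity), rpow_neg (by positivity),
    div_rpow hM.le hm0.le, div_rpow hm0.le (by norm_num),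
    show m ^ (2 + α) = m * m ^ (1 + α) by
      rw [show 2 + α = 1 + (1 + α) by ring, rpow_add hm0 1, rpow_one]]
  have e : (α + 1) * (m * m ^ (1 + α) / 2 ^ (2 + α))⁻¹ *
      (-(M ^ (1 + α) / m ^ (1 + α))⁻¹ / -(1 + α)) = 2 ^ (2 + α) / M ^ (1 + α) / m := by
    have : (1 + α) ≠ 0 := by linarith
    have h1 : m ^ (1 + α) ≠ 0 := by positivity
    have h2 : M ^ (1 + α) ≠ 0 := by positivity
    have h3 : (2:ℝ) ^ (2 + α) ≠ 0 := by positivity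
    generalize m ^ (1 + α) = A at *
    generalize M ^ (1 + α) = B at *
    generalize (2:ℝ) ^ (2 + α) = E at *
    rw [neg_div_neg_eq]
    field_simp
    ring
  rw [e]
  exact div_le_self (by positivity) hm1
end

section
/- For every α with 0 ≤ α < 2 there exists a constant C_α > 0, depending only on α, such that for every β ≥ 0, every M > 0, and every a with 0 < a ≤ M/2, one has |∫_0^{M/max(β,1)} ((α+1)(a−M)² − y²) / ((a−M)² + y²)^{2+α/2} dy| ≤ C_α / M^{1+α}. -/
open MeasureTheory Real

theorem stmt10 (α : ℝ) (hα0 : 0 ≤ α) (hα2 : α < 2) :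
    ∃ C : ℝ, 0 < C ∧ ∀ β M a : ℝ, 0 ≤ β → 0 < M → 0 < a → a ≤ M / 2 →
      |∫ y in Set.Ioo 0 (M / max β 1),
          ((α + 1) * (a - M) ^ 2 - y ^ 2) / ((a - M) ^ 2 + y ^ 2) ^ (2 + α / 2)| ≤
        C / M ^ (1 + α) := by
  refine ⟨(α + 1) * 4 ^ (1 + α / 2), by positivity, ?_⟩
  intro β M a hβ hM ha haM
  have hL : M / max β 1 ≤ M := div_le_self hM.le (le_max_right _ _)
  have hL0 : 0 ≤ M / max β 1 := by positivity
  have key : ∀ y ∈ Set.Ioo 0 (M / max β 1),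
      ‖((α + 1) * (a - M) ^ 2 - y ^ 2) / ((a - M) ^ 2 + y ^ 2) ^ (2 + α / 2)‖ ≤
        (α + 1) / (M ^ 2 / 4) ^ (1 + α / 2) := by
    intro y _
    have h1 : M ^ 2 / 4 ≤ (a - M) ^ 2 + y ^ 2 := by nlinarith [sq_nonneg y]
    have hM2 : 0 < M ^ 2 / 4 := by positivity
    have hs : 0 < (a - M) ^ 2 + y ^ 2 := hM2.trans_le h1
    have hp : ((a - M) ^ 2 + y ^ 2) ^ (2 + α / 2) =
        ((a - M) ^ 2 + y ^ 2) * ((a - M) ^ 2 + y ^ 2) ^ (1 + α / 2) := by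
      rw [show 2 + α / 2 = 1 + (1 + α / 2) by ring, rpow_add hs, rpow_one]
    have hq : (M ^ 2 / 4) ^ (1 + α / 2) ≤ ((a - M) ^ 2 + y ^ 2) ^ (1 + α / 2) :=
      rpow_le_rpow hM2.le h1 (by positivity)
    have hq0 : 0 < (M ^ 2 / 4) ^ (1 + α / 2) := by positivity
    have hn : |(α + 1) * (a - M) ^ 2 - y ^ 2| ≤ (α + 1) * ((a - M) ^ 2 + y ^ 2) := by
      have := mul_nonneg hα0 (sq_nonneg y)
      have := mul_nonneg hα0 (sq_nonneg (a - M))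
      rw [abs_le]
      constructor <;> nlinarith [sq_nonneg y, sq_nonneg (a - M)]
    have hP : 0 < ((a - M) ^ 2 + y ^ 2) ^ (1 + α / 2) := hq0.trans_le hq
    rw [Real.norm_eq_abs, abs_div, hp, abs_of_pos (mul_pos hs hP)]
    calc _ ≤ (α + 1) * ((a - M) ^ 2 + y ^ 2) /
          (((a - M) ^ 2 + y ^ 2) * ((a - M) ^ 2 + y ^ 2) ^ (1 + α / 2)) :=
          div_le_div_of_nonneg_right hn (mul_pos hs hP).le
      _ = (α + 1) / ((a - M) ^ 2 + y ^ 2) ^ (1 + α / 2) := by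
          rw [mul_comm (α + 1), mul_div_mul_left _ _ hs.ne']
      _ ≤ _ := div_le_div_of_nonneg_left (by positivity) hq0 hq
  have := norm_setIntegral_le_of_norm_le_const (μ := volume) (by simp) key
  rw [Real.norm_eq_abs] at this
  refine this.trans ?_
  rw [Real.volume_real_Ioo_of_le hL0, sub_zero]
  have e : (M ^ 2 / 4) ^ (1 + α / 2) = M * M ^ (1 + α) / 4 ^ (1 + α / 2) := by
    rw [div_rpow (by positivity) (by norm_num), ← rpow_natCast, ← rpow_mul hM.le]
    congr 1
    rw [show ((2 : ℕ) : ℝ) * (1 + α / 2) = 1 + (1 + α) by push_cast; ring, rpow_add hM, rpow_one]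
  calc _ ≤ (α + 1) / (M ^ 2 / 4) ^ (1 + α / 2) * M := by gcongr
    _ = _ := by
      rw [e]
      have : 0 < M ^ (1 + α) := by positivity
      field_simp
end

section
/- For every α with 0 ≤ α < 2 there exists a constant C_α > 0, depending only on α, such that the following holds: for every M > 0 and every measurable set E ⊆ ℝ² of finite Lebesgue measure with E ∩ [−M,M]² = ∅, the function B(a) := ∫_E (a−y₁)/((a−y₁)² + y₂²)^{1+α/2} dy₁ dy₂ is twice differentiable on (0, M/2] and satisfies |B′(a)| ≤ C_α |E| / M^{2+α} and |B″(a)| ≤ C_α |E| / M^{3+α} for every a ∈ (0, M/2]. -/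
open MeasureTheory Real

lemma aux_diff (E : Set (ℝ × ℝ)) (hE : MeasurableSet E) (hv : volume E < ⊤)
    (L : ℝ) (F F' : ℝ → ℝ × ℝ → ℝ) (K K' : ℝ)
    (hm : ∀ b, Measurable (F b)) (hm' : ∀ b, Measurable (F' b))
    (hd : ∀ b, |b| < L → ∀ y ∈ E, HasDerivAt (fun b => F b y) (F' b y) b)
    (hK : ∀ b, |b| < L → ∀ y ∈ E, |F b y| ≤ K)
    (hK' : ∀ b, |b| < L → ∀ y ∈ E, |F' b y| ≤ K') (a : ℝ) (ha : |a| < L) :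
    HasDerivAt (fun b => ∫ y in E, F b y) (∫ y in E, F' a y) a := by
  have hs : {b : ℝ | |b| < L} ∈ nhds a :=
    (isOpen_lt continuous_abs continuous_const).mem_nhds ha
  have hfin : IsFiniteMeasure (volume.restrict E) := ⟨by simpa using hv⟩
  refine (hasDerivAt_integral_of_dominated_loc_of_deriv_le (bound := fun _ => K') hs
    (Filter.Eventually.of_forall fun b => (hm b).aestronglyMeasurable) ?_
    (hm' a).aestronglyMeasurable ?_ (integrable_const _) ?_).2
  · refine Integrable.of_bound (hm a).aestronglyMeasurable K ?_
    exact (ae_restrict_iff' hE).2 (Filter.Eventually.of_forall fun y hy => hK a ha y hy)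
  · exact (ae_restrict_iff' hE).2 (Filter.Eventually.of_forall fun y hy b hb => hK' b hb y hy)
  · exact (ae_restrict_iff' hE).2 (Filter.Eventually.of_forall fun y hy b hb => hd b hb y hy)

lemma aux_d1 (p u v : ℝ) (b : ℝ) (h : 0 < (b - u) ^ 2 + v ^ 2) :
    HasDerivAt (fun b => ((b - u) ^ 2 + v ^ 2) ^ p)
      (2 * p * (b - u) * ((b - u) ^ 2 + v ^ 2) ^ (p - 1)) b := by
  have h1 : HasDerivAt (fun b => (b - u) ^ 2 + v ^ 2) (2 * (b - u)) b := by
    have := (((hasDerivAt_id b).sub_const u).pow 2).add_const (v ^ 2)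
    simpa using this
  convert h1.rpow_const (p := p) (Or.inl h.ne') using 1
  ring

lemma aux_u (b u : ℝ) : HasDerivAt (fun b => b - u) 1 b := (hasDerivAt_id b).sub_const u

lemma aux_bd {u v s m : ℝ} (hm : 0 < m) (hR : m ^ 2 ≤ u ^ 2 + v ^ 2) (hs : 0 ≤ s) :
    (u ^ 2 + v ^ 2) ^ (-s) ≤ m ^ (-(2 * s)) := by
  have : m ^ (-(2 * s)) = (m ^ 2) ^ (-s) := by
    rw [← Real.rpow_natCast, ← Real.rpow_mul hm.le]; congr 1; push_cast; ring
  rw [this]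
  exact Real.rpow_le_rpow_of_nonpos (by positivity) hR (by linarith)

lemma aux_bd1 {u v s m : ℝ} (hm : 0 < m) (hR : m ^ 2 ≤ u ^ 2 + v ^ 2) (hs : 1 / 2 ≤ s) :
    |u| * (u ^ 2 + v ^ 2) ^ (-s) ≤ m ^ (1 - 2 * s) := by
  have hp : 0 < u ^ 2 + v ^ 2 := lt_of_lt_of_le (by positivity) hR
  have h1 : |u| ≤ (u ^ 2 + v ^ 2) ^ (1 / 2 : ℝ) := by
    rw [← Real.sqrt_eq_rpow]
    exact Real.abs_le_sqrt (by nlinarith [sq_nonneg v])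
  calc _ ≤ (u ^ 2 + v ^ 2) ^ (1 / 2 : ℝ) * (u ^ 2 + v ^ 2) ^ (-s) := by gcongr
    _ = (u ^ 2 + v ^ 2) ^ (-(s - 1 / 2)) := by rw [← Real.rpow_add hp]; congr 1; ring
    _ ≤ _ := by
      have := aux_bd hm hR (s := s - 1 / 2) (by linarith)
      convert this using 2; ring

lemma aux_bd2 {u v s : ℝ} (hp : 0 < u ^ 2 + v ^ 2) :
    u ^ 2 * (u ^ 2 + v ^ 2) ^ (-s - 1) ≤ (u ^ 2 + v ^ 2) ^ (-s) := by
  rw [show (u ^ 2 + v ^ 2) ^ (-s) = (u ^ 2 + v ^ 2) * (u ^ 2 + v ^ 2) ^ (-s - 1) by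
    rw [Real.rpow_sub_one hp.ne']; field_simp]
  have : 0 < (u ^ 2 + v ^ 2) ^ (-s - 1) := by positivity
  gcongr
  nlinarith [sq_nonneg v]

theorem stmt11 (α : ℝ) (hα0 : 0 ≤ α) (hα2 : α < 2) :
    ∃ C : ℝ, 0 < C ∧ ∀ M : ℝ, 0 < M → ∀ E : Set (ℝ × ℝ),
      MeasurableSet E → volume E < ⊤ →
      E ∩ (Set.Icc (-M) M ×ˢ Set.Icc (-M) M) = ∅ →
      ∀ B : ℝ → ℝ,
        (∀ b : ℝ, B b = ∫ y in E,
          (b - y.1) / ((b - y.1) ^ 2 + y.2 ^ 2) ^ (1 + α / 2)) →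
        ∀ a ∈ Set.Ioc 0 (M / 2),
          DifferentiableAt ℝ B a ∧ DifferentiableAt ℝ (deriv B) a ∧
          |deriv B a| ≤ C * (volume E).toReal / M ^ (2 + α) ∧
          |deriv (deriv B) a| ≤ C * (volume E).toReal / M ^ (3 + α) := by
  obtain ⟨p, hp⟩ : ∃ p, p = 1 + α / 2 := ⟨_, rfl⟩
  have hp1 : 1 ≤ p := by linarith
  refine ⟨(6 * p + 4 * p * (p + 1)) * 4 ^ (3 + α), by positivity, ?_⟩
  intro M hM E hE hv hdisj B hB a ha
  rw [← hp] at hB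
  have hm : 0 < M / 4 := by positivity
  have hR : ∀ b, |b| < 3 * M / 4 → ∀ y ∈ E, (M / 4) ^ 2 ≤ (b - y.1) ^ 2 + y.2 ^ 2 := by
    intro b hb y hy
    have hn : ¬ (y ∈ Set.Icc (-M) M ×ˢ Set.Icc (-M) M) := fun h =>
      (Set.eq_empty_iff_forall_notMem.1 hdisj y) ⟨hy, h⟩
    rw [abs_lt] at hb
    by_contra hc
    push Not at hc
    apply hn
    have h1 : |b - y.1| ≤ M / 4 := abs_le_of_sq_le_sq (by nlinarith [sq_nonneg y.2]) hm.le
    have h2 : |y.2| ≤ M / 4 := abs_le_of_sq_le_sq (by nlinarith [sq_nonneg (b - y.1)]) hm.le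
    rw [abs_le] at h1 h2
    refine ⟨⟨?_, ?_⟩, ⟨?_, ?_⟩⟩ <;> linarith
  have hRp : ∀ b, |b| < 3 * M / 4 → ∀ y ∈ E, 0 < (b - y.1) ^ 2 + y.2 ^ 2 := fun b hb y hy =>
    lt_of_lt_of_le (by positivity) (hR b hb y hy)
  let F : ℝ → ℝ × ℝ → ℝ := fun b y => (b - y.1) * ((b - y.1) ^ 2 + y.2 ^ 2) ^ (-p)
  let F1 : ℝ → ℝ × ℝ → ℝ := fun b y => ((b - y.1) ^ 2 + y.2 ^ 2) ^ (-p)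
    - 2 * p * ((b - y.1) ^ 2 * ((b - y.1) ^ 2 + y.2 ^ 2) ^ (-p - 1))
  let F2 : ℝ → ℝ × ℝ → ℝ := fun b y =>
    (b - y.1) * (- 6 * p * ((b - y.1) ^ 2 + y.2 ^ 2) ^ (-(p + 1))
    + 4 * p * (p + 1) * ((b - y.1) ^ 2 * ((b - y.1) ^ 2 + y.2 ^ 2) ^ (-(p + 1) - 1)))
  have hBF : B = fun b => ∫ y in E, F b y := by
    funext b
    rw [hB]
    congr 1
    funext y
    simp only [F]
    rw [Real.rpow_neg (by positivity), div_eq_mul_inv]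
  have hK : ∀ b, |b| < 3 * M / 4 → ∀ y ∈ E, |F b y| ≤ (M / 4) ^ (1 - 2 * p) := by
    intro b hb y hy
    have := hRp b hb y hy
    simp only [F]
    rw [abs_mul, abs_of_nonneg (a := _ ^ (-p)) (by positivity)]
    exact aux_bd1 hm (hR b hb y hy) (by linarith)
  have hK1 : ∀ b, |b| < 3 * M / 4 → ∀ y ∈ E, |F1 b y| ≤ (2 * p) * (M / 4) ^ (-(2 * p)) := by
    intro b hb y hy
    have h0 := hRp b hb y hy
    have h1 := aux_bd hm (hR b hb y hy) (s := p) (by linarith)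
    have h2 := aux_bd2 (s := p) h0
    have h3 : 0 ≤ (b - y.1) ^ 2 * ((b - y.1) ^ 2 + y.2 ^ 2) ^ (-p - 1) := by positivity
    have h4 : 0 ≤ ((b - y.1) ^ 2 + y.2 ^ 2) ^ (-p) := by positivity
    simp only [F1]
    rw [abs_le]
    constructor <;> nlinarith
  have hK2 : ∀ b, |b| < 3 * M / 4 → ∀ y ∈ E,
      |F2 b y| ≤ (6 * p + 4 * p * (p + 1)) * (M / 4) ^ (1 - 2 * (p + 1)) := by
    intro b hb y hy
    have h0 := hRp b hb y hy
    have h1 := aux_bd1 hm (hR b hb y hy) (s := p + 1) (by linarith)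
    have h2 := aux_bd2 (s := p + 1) h0
    have h3 : 0 ≤ (b - y.1) ^ 2 * ((b - y.1) ^ 2 + y.2 ^ 2) ^ (-(p + 1) - 1) := by positivity
    have h4 : 0 ≤ ((b - y.1) ^ 2 + y.2 ^ 2) ^ (-(p + 1)) := by positivity
    have hc : 0 ≤ 4 * p * (p + 1) := by positivity
    simp only [F2]
    rw [abs_mul]
    calc _ ≤ |b - y.1| * ((6 * p + 4 * p * (p + 1)) * ((b - y.1) ^ 2 + y.2 ^ 2) ^ (-(p + 1))) := by
          gcongr
          rw [abs_le]
          have h5 := mul_le_mul_of_nonneg_left h2 hc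
          have h6 := mul_nonneg hc h3
          have h7 := mul_nonneg hc h4
          have h8 : 0 ≤ p * ((b - y.1) ^ 2 + y.2 ^ 2) ^ (-(p + 1)) := by positivity
          constructor <;> nlinarith
      _ = (6 * p + 4 * p * (p + 1)) * (|b - y.1| * ((b - y.1) ^ 2 + y.2 ^ 2) ^ (-(p + 1))) := by ring
      _ ≤ _ := by gcongr
  have hD : ∀ b, |b| < 3 * M / 4 → ∀ y ∈ E, HasDerivAt (fun b => F b y) (F1 b y) b := by
    intro b hb y hy
    have h0 := hRp b hb y hy
    refine HasDerivAt.congr_deriv ((aux_u b y.1).mul (aux_d1 (-p) y.1 y.2 b h0)) ?_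
    simp only [F1]
    ring
  have hD1 : ∀ b, |b| < 3 * M / 4 → ∀ y ∈ E, HasDerivAt (fun b => F1 b y) (F2 b y) b := by
    intro b hb y hy
    have h0 := hRp b hb y hy
    refine HasDerivAt.congr_deriv ((aux_d1 (-p) y.1 y.2 b h0).sub
      ((((aux_u b y.1).pow 2).mul (aux_d1 (-p - 1) y.1 y.2 b h0)).const_mul (2 * p))) ?_
    simp only [F2, Pi.pow_apply]
    rw [show -(p + 1) = -p - 1 by ring]
    push_cast
    ring
  have hmF : ∀ b, Measurable (F b) := fun b => by simp only [F]; fun_prop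
  have hmF1 : ∀ b, Measurable (F1 b) := fun b => by simp only [F1]; fun_prop
  have hmF2 : ∀ b, Measurable (F2 b) := fun b => by simp only [F2]; fun_prop
  have haL : |a| < 3 * M / 4 := by
    rw [abs_of_pos ha.1]; linarith [ha.2]
  have hB1 : ∀ b, |b| < 3 * M / 4 → HasDerivAt B (∫ y in E, F1 b y) b := by
    intro b hb
    rw [hBF]
    exact aux_diff E hE hv _ F F1 _ _ hmF hmF1 hD hK hK1 b hb
  have hB2 : HasDerivAt (deriv B) (∫ y in E, F2 a y) a := by
    refine (aux_diff E hE hv _ F1 F2 _ _ hmF1 hmF2 hD1 hK1 hK2 a haL).congr_of_eventuallyEq ?_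
    filter_upwards [(isOpen_lt continuous_abs continuous_const).mem_nhds haL] with b hb
    exact (hB1 b hb).deriv
  refine ⟨(hB1 a haL).differentiableAt, hB2.differentiableAt, ?_, ?_⟩
  · rw [(hB1 a haL).deriv]
    have := norm_setIntegral_le_of_norm_le_const (f := F1 a) hv (fun y hy => hK1 a haL y hy)
    refine this.trans ?_
    rw [Real.rpow_neg hm.le, show 2 * p = 2 + α by rw [hp]; ring, Real.div_rpow hM.le (by norm_num),
      inv_div, Measure.real, mul_div_assoc', div_mul_eq_mul_div]
    gcongr <;> first | norm_num; done | nlinarith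
  · rw [hB2.deriv]
    have := norm_setIntegral_le_of_norm_le_const (f := F2 a) hv (fun y hy => hK2 a haL y hy)
    refine this.trans (le_of_eq ?_)
    rw [show 1 - 2 * (p + 1) = -(3 + α) by rw [hp]; ring, Real.rpow_neg hm.le,
      Real.div_rpow hM.le (by norm_num),
      inv_div, Measure.real, mul_div_assoc', div_mul_eq_mul_div]
end

section
/- For every α with 0 ≤ α < 2 there exists a constant C_α > 0, depending only on α, such that the following holds: for every δ > 0 and every measurable set E ⊆ ℝ² contained in the open disk of radius δ centered at the origin, the function C(a) := ∫_E (y₁−a)/((a−y₁)² + y₂²)^{1+α/2} dy₁ dy₂ is twice differentiable on (δ, ∞) and satisfies |C″(a)| ≤ C_α δ² / a^{3+α} for every a ≥ 2δ. -/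
open MeasureTheory Real

lemma aux_gen (E : Set (ℝ × ℝ)) (hE : MeasurableSet E) (hfin : volume E < ⊤) (δ : ℝ)
    (F F' : ℝ → ℝ × ℝ → ℝ) (G G' : ℝ → ℝ)
    (hF : ∀ b, Measurable (F b)) (hF' : ∀ b, Measurable (F' b))
    (hG : ∀ b, δ < b → ∀ y ∈ E, |F b y| ≤ G b)
    (hG' : ∀ d b, δ < d → d ≤ b → ∀ y ∈ E, |F' b y| ≤ G' d)
    (hd : ∀ b, δ < b → ∀ y ∈ E, HasDerivAt (fun x => F x y) (F' b y) b)
    (a : ℝ) (ha : δ < a) :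
    HasDerivAt (fun b => ∫ y in E, F b y) (∫ y in E, F' a y) a := by
  have : IsFiniteMeasure (volume.restrict E) := ⟨by simpa using hfin⟩
  have hm : δ < (δ + a) / 2 := by linarith
  refine (hasDerivAt_integral_of_dominated_loc_of_deriv_le (s := Set.Ioi ((δ + a) / 2))
    (bound := fun _ => G' ((δ + a) / 2)) (Ioi_mem_nhds (by linarith)) ?_ ?_ ?_ ?_ ?_ ?_).2
  · exact Filter.Eventually.of_forall fun b => (hF b).aestronglyMeasurable
  · refine Integrable.of_bound (hF a).aestronglyMeasurable (G a) ?_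
    exact (ae_restrict_iff' hE).2 (Filter.Eventually.of_forall fun y hy => hG a ha y hy)
  · exact (hF' a).aestronglyMeasurable
  · exact (ae_restrict_iff' hE).2 (Filter.Eventually.of_forall fun y hy x hx =>
      hG' _ x hm (le_of_lt hx) y hy)
  · exact integrable_const _
  · exact (ae_restrict_iff' hE).2 (Filter.Eventually.of_forall fun y hy x hx =>
      hd x (lt_trans hm hx) y hy)

lemma aux_bd_s12 (q : ℝ) (hq : 0 ≤ q) (j : ℕ) (hj : (j : ℝ) ≤ 2 * q) (d u t : ℝ) (hd : 0 < d)
    (hu : d ≤ u) : u ^ j * (u ^ 2 + t ^ 2) ^ (-q) ≤ d ^ ((j : ℝ) - 2 * q) := by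
  have hu0 : 0 < u := lt_of_lt_of_le hd hu
  calc u ^ j * (u ^ 2 + t ^ 2) ^ (-q) ≤ u ^ j * (u ^ 2) ^ (-q) := by
        apply mul_le_mul_of_nonneg_left _ (by positivity)
        exact rpow_le_rpow_of_nonpos (by positivity) (by nlinarith [sq_nonneg t]) (by linarith)
    _ = u ^ ((j : ℝ) - 2 * q) := by
        rw [← rpow_natCast u 2, ← rpow_mul hu0.le, ← rpow_natCast u j, ← rpow_add hu0]
        congr 1; push_cast; ring
    _ ≤ _ := rpow_le_rpow_of_nonpos hd hu (by linarith)

theorem stmt12 (α : ℝ) (hα0 : 0 ≤ α) (hα2 : α < 2) :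
    ∃ Cα : ℝ, 0 < Cα ∧ ∀ δ : ℝ, 0 < δ → ∀ E : Set (ℝ × ℝ),
      MeasurableSet E →
      E ⊆ {y : ℝ × ℝ | y.1 ^ 2 + y.2 ^ 2 < δ ^ 2} →
      ∀ C : ℝ → ℝ,
        (∀ b : ℝ, C b = ∫ y in E,
          (y.1 - b) / ((b - y.1) ^ 2 + y.2 ^ 2) ^ (1 + α / 2)) →
        (∀ a : ℝ, δ < a → DifferentiableAt ℝ C a ∧ DifferentiableAt ℝ (deriv C) a) ∧
        (∀ a : ℝ, 2 * δ ≤ a → |deriv (deriv C) a| ≤ Cα * δ ^ 2 / a ^ (3 + α)) := by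
  obtain ⟨p, hp⟩ : ∃ p, p = 1 + α / 2 := ⟨_, rfl⟩
  have hp1 : 1 ≤ p := by linarith
  obtain ⟨K, hK⟩ : ∃ K, K = 6 * p + 4 * p * (p + 1) := ⟨_, rfl⟩
  have hK0 : 0 < K := by rw [hK]; positivity
  refine ⟨4 * K * 2 ^ (3 + α), by positivity, ?_⟩
  intro δ hδ E hE hsub C hC
  have hbox : E ⊆ Set.Icc (-δ) δ ×ˢ Set.Icc (-δ) δ := by
    intro y hy
    have h : y.1 ^ 2 + y.2 ^ 2 < δ ^ 2 := hsub hy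
    have h1 := abs_le_of_sq_le_sq' (show y.1 ^ 2 ≤ δ ^ 2 by nlinarith [sq_nonneg y.2]) hδ.le
    have h2 := abs_le_of_sq_le_sq' (show y.2 ^ 2 ≤ δ ^ 2 by nlinarith [sq_nonneg y.1]) hδ.le
    exact ⟨h1, h2⟩
  have hvol : volume E ≤ ENNReal.ofReal (4 * δ ^ 2) := by
    refine (measure_mono hbox).trans ?_
    rw [Measure.volume_eq_prod, Measure.prod_prod, Real.volume_Icc,
      ← ENNReal.ofReal_mul (by linarith)]
    exact ENNReal.ofReal_le_ofReal (by nlinarith)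
  have hfin : volume E < ⊤ := lt_of_le_of_lt hvol ENNReal.ofReal_lt_top
  have hvolr : (volume E).toReal ≤ 4 * δ ^ 2 := ENNReal.toReal_le_of_le_ofReal (by positivity) hvol
  have hle : ∀ y ∈ E, y.1 ≤ δ := fun y hy => (hbox hy).1.2
  let F0 : ℝ → ℝ × ℝ → ℝ := fun b y => -((b - y.1) * ((b - y.1) ^ 2 + y.2 ^ 2) ^ (-p))
  let F1 : ℝ → ℝ × ℝ → ℝ := fun b y => -(((b - y.1) ^ 2 + y.2 ^ 2) ^ (-p)) +
    2 * p * ((b - y.1) ^ 2 * ((b - y.1) ^ 2 + y.2 ^ 2) ^ (-(p + 1)))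
  let F2 : ℝ → ℝ × ℝ → ℝ := fun b y =>
    6 * p * ((b - y.1) * ((b - y.1) ^ 2 + y.2 ^ 2) ^ (-(p + 1))) -
    4 * p * (p + 1) * ((b - y.1) ^ 3 * ((b - y.1) ^ 2 + y.2 ^ 2) ^ (-(p + 2)))
  have hm0 : ∀ b, Measurable (F0 b) := fun b => by dsimp only [F0]; fun_prop
  have hm1 : ∀ b, Measurable (F1 b) := fun b => by dsimp only [F1]; fun_prop
  have hm2 : ∀ b, Measurable (F2 b) := fun b => by dsimp only [F2]; fun_prop
  have hB0 : ∀ d b, δ < d → d ≤ b → ∀ y ∈ E, |F0 b y| ≤ (d - δ) ^ (1 - 2 * p) := by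
    intro d b hd hb y hy
    have hy1 := hle y hy
    have h := aux_bd_s12 p (by linarith) 1 (by push_cast; linarith) (d - δ) (b - y.1) y.2
      (by linarith) (by linarith)
    have hu : 0 < b - y.1 := by linarith
    rw [pow_one, Nat.cast_one] at h
    simp only [F0]
    rwa [abs_neg, abs_of_nonneg (by positivity)]
  have hB1 : ∀ d b, δ < d → d ≤ b → ∀ y ∈ E, |F1 b y| ≤ (1 + 2 * p) * (d - δ) ^ (- 2 * p) := by
    intro d b hd hb y hy
    have hy1 := hle y hy
    have h := aux_bd_s12 p (by linarith) 0 (by push_cast; linarith) (d - δ) (b - y.1) y.2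
      (by linarith) (by linarith)
    have h' := aux_bd_s12 (p + 1) (by linarith) 2 (by push_cast; linarith) (d - δ) (b - y.1) y.2
      (by linarith) (by linarith)
    have hu : 0 < b - y.1 := by linarith
    rw [show ((0 : ℕ) : ℝ) - 2 * p = - 2 * p by push_cast; ring, pow_zero, one_mul] at h
    rw [show ((2 : ℕ) : ℝ) - 2 * (p + 1) = - 2 * p by push_cast; ring] at h'
    have h'' := mul_le_mul_of_nonneg_left h' (show 0 ≤ 2 * p by linarith)
    simp only [F1]
    refine (abs_add_le _ _).trans ?_
    rw [abs_neg, abs_of_nonneg (by positivity), abs_of_nonneg (by positivity)]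
    linarith
  have hB2 : ∀ d b, δ < d → d ≤ b → ∀ y ∈ E, |F2 b y| ≤ K * (d - δ) ^ (- (3 + α)) := by
    intro d b hd hb y hy
    have hy1 := hle y hy
    have h := aux_bd_s12 (p + 1) (by linarith) 1 (by push_cast; linarith) (d - δ) (b - y.1) y.2
      (by linarith) (by linarith)
    have h' := aux_bd_s12 (p + 2) (by linarith) 3 (by push_cast; linarith) (d - δ) (b - y.1) y.2
      (by linarith) (by linarith)
    have hu : 0 < b - y.1 := by linarith
    rw [show ((1 : ℕ) : ℝ) - 2 * (p + 1) = - (3 + α) by push_cast; rw [hp]; ring, pow_one] at h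
    rw [show ((3 : ℕ) : ℝ) - 2 * (p + 2) = - (3 + α) by push_cast; rw [hp]; ring] at h'
    have h1 := mul_le_mul_of_nonneg_left h (show 0 ≤ 6 * p by linarith)
    have h2 := mul_le_mul_of_nonneg_left h' (show 0 ≤ 4 * p * (p + 1) by positivity)
    simp only [F2]
    refine (abs_sub _ _).trans ?_
    rw [abs_of_nonneg (by positivity), abs_of_nonneg (by positivity), hK]
    linarith
  have hQ : ∀ b, δ < b → ∀ y ∈ E, 0 < (b - y.1) ^ 2 + y.2 ^ 2 := by
    intro b hb y hy
    have hu : 0 < b - y.1 := by linarith [hle y hy]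
    positivity
  have hdu : ∀ (b : ℝ) (y : ℝ × ℝ), HasDerivAt (fun x => x - y.1) 1 b := fun b y =>
    (hasDerivAt_id b).sub_const _
  have hdQ : ∀ b, δ < b → ∀ y ∈ E, ∀ q : ℝ,
      HasDerivAt (fun x => ((x - y.1) ^ 2 + y.2 ^ 2) ^ (-q))
        (-(2 * q) * (b - y.1) * ((b - y.1) ^ 2 + y.2 ^ 2) ^ (-(q + 1))) b := by
    intro b hb y hy q
    have h := (((hdu b y).pow 2).add_const (y.2 ^ 2)).rpow_const (p := -q) (Or.inl (hQ b hb y hy).ne')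
    refine HasDerivAt.congr_deriv h ?_
    rw [show -q - 1 = -(q + 1) by ring]
    simp only [Pi.pow_apply]
    push_cast
    ring
  have hd0 : ∀ b, δ < b → ∀ y ∈ E, HasDerivAt (fun x => F0 x y) (F1 b y) b := by
    intro b hb y hy
    have h := ((hdu b y).mul (hdQ b hb y hy p)).neg
    refine HasDerivAt.congr_deriv h ?_
    simp only [F1]
    ring
  have hd1 : ∀ b, δ < b → ∀ y ∈ E, HasDerivAt (fun x => F1 x y) (F2 b y) b := by
    intro b hb y hy
    have h := (hdQ b hb y hy p).neg.add
      ((((hdu b y).pow 2).mul (hdQ b hb y hy (p + 1))).const_mul (2 * p))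
    refine HasDerivAt.congr_deriv h ?_
    simp only [F2]
    rw [show p + 1 + 1 = p + 2 by ring]
    simp
    ring
  have hC0 : C = fun b => ∫ y in E, F0 b y := by
    funext b
    rw [hC]
    congr 1
    funext y
    simp only [F0]
    rw [rpow_neg (by positivity), ← hp, div_eq_mul_inv]
    ring
  have hD1 : ∀ a, δ < a → HasDerivAt C (∫ y in E, F1 a y) a := by
    intro a ha
    rw [hC0]
    exact aux_gen E hE hfin δ F0 F1 _ _ hm0 hm1 (fun b hb => hB0 b b hb le_rfl) hB1 hd0 a ha
  have hD2 : ∀ a, δ < a → HasDerivAt (deriv C) (∫ y in E, F2 a y) a := by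
    intro a ha
    refine (aux_gen E hE hfin δ F1 F2 _ _ hm1 hm2 (fun b hb => hB1 b b hb le_rfl) hB2 hd1 a
      ha).congr_of_eventuallyEq ?_
    filter_upwards [Ioi_mem_nhds ha] with x hx
    exact (hD1 x hx).deriv
  refine ⟨fun a ha => ⟨(hD1 a ha).differentiableAt, (hD2 a ha).differentiableAt⟩, ?_⟩
  intro a ha
  have ha0 : 0 < a := by linarith
  rw [(hD2 a (by linarith)).deriv]
  have hI := norm_setIntegral_le_of_norm_le_const (μ := volume) (f := F2 a) hfin
    (fun y hy => hB2 a a (by linarith) le_rfl y hy)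
  rw [Real.norm_eq_abs] at hI
  have h1 : (a - δ) ^ (-(3 + α)) ≤ (a / 2) ^ (-(3 + α)) :=
    rpow_le_rpow_of_nonpos (by linarith) (by linarith) (by linarith)
  have h2 : (a / 2) ^ (-(3 + α)) = 2 ^ (3 + α) / a ^ (3 + α) := by
    rw [rpow_neg (by positivity), div_rpow ha0.le (by norm_num), inv_div]
  calc _ ≤ _ := hI
    _ ≤ K * (a / 2) ^ (-(3 + α)) * (4 * δ ^ 2) := by
      apply mul_le_mul (mul_le_mul_of_nonneg_left h1 hK0.le) hvolr (by positivity) (by positivity)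
    _ = _ := by rw [h2]; ring
end

section
/- Let 0 ≤ α < 2, β ≥ 0, and M > 0. For a ∈ (0, M), define A(a) := ∫_0^{M/max(β,1)} ( ∫_{βy₂}^{M} (a−y₁)/((a−y₁)² + y₂²)^{1+α/2} dy₁ ) dy₂ (the inner integral converges for a.e. y₂ and the outer integral converges absolutely). Then A is twice differentiable on (0, M) and for every a ∈ (0, M), A″(a) = ∫_0^{M/max(β,1)} [ ((α+1)(a−M)² − y₂²)/((a−M)² + y₂²)^{2+α/2} + (y₂² − (α+1)(a−βy₂)²)/((a−βy₂)² + y₂²)^{2+α/2} ] dy₂. -/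
open MeasureTheory Real

lemma aux_param (R M : ℝ) (f f' : ℝ → ℝ → ℝ)
    (hf : ContinuousOn (fun p : ℝ × ℝ => f p.1 p.2) (Set.Ioo 0 M ×ˢ Set.Icc 0 R))
    (hf' : ContinuousOn (fun p : ℝ × ℝ => f' p.1 p.2) (Set.Ioo 0 M ×ˢ Set.Icc 0 R))
    (hd : ∀ a ∈ Set.Ioo 0 M, ∀ y ∈ Set.Icc 0 R, HasDerivAt (fun x => f x y) (f' a y) a)
    (a : ℝ) (ha : a ∈ Set.Ioo 0 M) :
    HasDerivAt (fun x => ∫ y in Set.Ioo 0 R, f x y) (∫ y in Set.Ioo 0 R, f' a y) a := by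
  obtain ⟨ε, hε, hball⟩ := Metric.nhds_basis_closedBall.mem_iff.1 (isOpen_Ioo.mem_nhds ha)
  have hK : IsCompact (Metric.closedBall a ε ×ˢ Set.Icc (0:ℝ) R) :=
    (isCompact_closedBall a ε).prod isCompact_Icc
  obtain ⟨C, hC⟩ := hK.exists_bound_of_continuousOn
    (hf'.mono (Set.prod_mono hball subset_rfl))
  have slice : ∀ g : ℝ → ℝ → ℝ,
      ContinuousOn (fun p : ℝ × ℝ => g p.1 p.2) (Set.Ioo 0 M ×ˢ Set.Icc 0 R) →
      ∀ x ∈ Set.Ioo 0 M, IntegrableOn (g x) (Set.Ioo 0 R) := by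
    intro g hg x hx
    have h1 : ContinuousOn (g x) (Set.Icc 0 R) :=
      hg.comp (f := fun y : ℝ => (x, y)) (by fun_prop) (fun y hy => ⟨hx, hy⟩)
    exact (h1.integrableOn_compact isCompact_Icc).mono_set Set.Ioo_subset_Icc_self
  refine (hasDerivAt_integral_of_dominated_loc_of_deriv_le (bound := fun _ => C)
    (Metric.ball_mem_nhds a hε) ?_ (slice f hf a ha) (slice f' hf' a ha).aestronglyMeasurable
    ?_ ?_ ?_).2
  · filter_upwards [isOpen_Ioo.mem_nhds ha] with x hx
    exact (slice f hf x hx).aestronglyMeasurable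
  · refine (ae_restrict_iff' measurableSet_Ioo).2 (Filter.Eventually.of_forall ?_)
    intro y hy x hx
    exact hC (x, y) ⟨Metric.ball_subset_closedBall hx, Set.Ioo_subset_Icc_self hy⟩
  · exact integrable_const C
  · refine (ae_restrict_iff' measurableSet_Ioo).2 (Filter.Eventually.of_forall ?_)
    intro y hy x hx
    exact hd x (hball (Metric.ball_subset_closedBall hx)) y (Set.Ioo_subset_Icc_self hy)

lemma aux_phi (α : ℝ) : ∃ φ : ℝ → ℝ, ∀ s, 0 < s →
    HasDerivAt φ (1 / (2 * s ^ (1 + α / 2))) s := by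
  by_cases h : α = 0
  · refine ⟨fun s => (1/2) * Real.log s, fun s hs => ?_⟩
    refine HasDerivAt.congr_deriv ((Real.hasDerivAt_log hs.ne').const_mul (1/2)) ?_
    subst h
    simp
    ring
  · refine ⟨fun s => (-1/α) * s ^ (-(α/2)), fun s hs => ?_⟩
    refine HasDerivAt.congr_deriv ((Real.hasDerivAt_rpow_const (p := -(α/2)) (Or.inl hs.ne')).const_mul (-1/α)) ?_
    rw [show -(α/2) - 1 = -(1 + α/2) by ring, Real.rpow_neg hs.le]
    field_simp

lemma aux_g (α y c a : ℝ) (h : 0 < (a - c) ^ 2 + y ^ 2) :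
    HasDerivAt (fun x => (x - c) / ((x - c) ^ 2 + y ^ 2) ^ (1 + α / 2))
      ((y ^ 2 - (α + 1) * (a - c) ^ 2) / ((a - c) ^ 2 + y ^ 2) ^ (2 + α / 2)) a := by
  have h1 : HasDerivAt (fun x => x - c) 1 a := (hasDerivAt_id a).sub_const c
  have h2 : HasDerivAt (fun x => (x - c) ^ 2 + y ^ 2) (2 * (a - c)) a := by
    refine HasDerivAt.congr_deriv ((h1.pow 2).add_const (y ^ 2)) ?_
    simp
  have h3 := h2.rpow_const (p := 1 + α / 2) (Or.inl h.ne')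
  have hp : 0 < ((a - c) ^ 2 + y ^ 2) ^ (α / 2) := Real.rpow_pos_of_pos h _
  have e1 : ((a - c) ^ 2 + y ^ 2) ^ (1 + α / 2)
      = ((a - c) ^ 2 + y ^ 2) * ((a - c) ^ 2 + y ^ 2) ^ (α / 2) := by
    rw [Real.rpow_add h, Real.rpow_one]
  have e2 : ((a - c) ^ 2 + y ^ 2) ^ (2 + α / 2)
      = ((a - c) ^ 2 + y ^ 2) ^ 2 * ((a - c) ^ 2 + y ^ 2) ^ (α / 2) := by
    rw [Real.rpow_add h, Real.rpow_two]
  have e3 : (1 + α / 2 - 1) = α / 2 := by ring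
  refine (h1.div h3 (Real.rpow_pos_of_pos h _).ne').congr_deriv ?_
  rw [e3, e1, e2]
  have := hp.ne'
  have := h.ne'
  generalize ((a - c) ^ 2 + y ^ 2) ^ (α / 2) = P at *
  field_simp
  ring

theorem stmt13 (α β M : ℝ) (hα0 : 0 ≤ α) (hα2 : α < 2) (hβ : 0 ≤ β) (hM : 0 < M)
    (A : ℝ → ℝ)
    (hA : ∀ a : ℝ, A a = ∫ y₂ in Set.Ioo 0 (M / max β 1),
      ∫ y₁ in Set.Ioo (β * y₂) M, (a - y₁) / ((a - y₁) ^ 2 + y₂ ^ 2) ^ (1 + α / 2)) :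
    ∀ a ∈ Set.Ioo (0 : ℝ) M,
      DifferentiableAt ℝ A a ∧ DifferentiableAt ℝ (deriv A) a ∧
      deriv (deriv A) a = ∫ y₂ in Set.Ioo 0 (M / max β 1),
        (((α + 1) * (a - M) ^ 2 - y₂ ^ 2) / ((a - M) ^ 2 + y₂ ^ 2) ^ (2 + α / 2) +
          (y₂ ^ 2 - (α + 1) * (a - β * y₂) ^ 2) / ((a - β * y₂) ^ 2 + y₂ ^ 2) ^ (2 + α / 2)) := by
  obtain ⟨φ, hφ⟩ := aux_phi α
  set R := M / max β 1 with hR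
  have hφc : ContinuousOn φ (Set.Ioi 0) := fun s hs => (hφ s hs).continuousAt.continuousWithinAt
  have hphi : ∀ y c a : ℝ, 0 < (a - c) ^ 2 + y ^ 2 →
      HasDerivAt (fun x => φ ((x - c) ^ 2 + y ^ 2))
        ((a - c) / ((a - c) ^ 2 + y ^ 2) ^ (1 + α / 2)) a := by
    intro y c a h
    have h1 : HasDerivAt (fun x => x - c) 1 a := (hasDerivAt_id a).sub_const c
    have h2 : HasDerivAt (fun x => (x - c) ^ 2 + y ^ 2) (2 * (a - c)) a := by
      refine HasDerivAt.congr_deriv ((h1.pow 2).add_const (y ^ 2)) ?_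
      simp
    refine ((hφ _ h).comp a h2).congr_deriv ?_
    have := (Real.rpow_pos_of_pos h (1 + α / 2)).ne'
    field_simp
  have hE : ∀ a ∈ Set.Ioo 0 M, ∀ y : ℝ, 0 < (a - M) ^ 2 + y ^ 2 := by
    intro a ha y
    have := sub_neg.2 ha.2
    nlinarith [sq_nonneg y, mul_pos_of_neg_of_neg this this]
  have hD : ∀ a ∈ Set.Ioo 0 M, ∀ y : ℝ, 0 < (a - β * y) ^ 2 + y ^ 2 := by
    intro a ha y
    by_cases hy : y = 0
    · subst hy
      have := pow_pos ha.1 2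
      simpa using this
    · have : 0 < y ^ 2 := by positivity
      positivity
  have hDc : ∀ q : ℝ, ContinuousOn (fun p : ℝ × ℝ => ((p.1 - β * p.2) ^ 2 + p.2 ^ 2) ^ q)
      (Set.Ioo 0 M ×ˢ Set.Icc 0 R) := fun q =>
    ContinuousOn.rpow_const (by fun_prop) (fun p hp => Or.inl (hD p.1 hp.1 p.2).ne')
  have hEc : ∀ q : ℝ, ContinuousOn (fun p : ℝ × ℝ => ((p.1 - M) ^ 2 + p.2 ^ 2) ^ q)
      (Set.Ioo 0 M ×ˢ Set.Icc 0 R) := fun q =>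
    ContinuousOn.rpow_const (by fun_prop) (fun p hp => Or.inl (hE p.1 hp.1 p.2).ne')
  let f0 : ℝ → ℝ → ℝ := fun a y => φ ((a - β * y) ^ 2 + y ^ 2) - φ ((a - M) ^ 2 + y ^ 2)
  let f1 : ℝ → ℝ → ℝ := fun a y => (a - β * y) / ((a - β * y) ^ 2 + y ^ 2) ^ (1 + α / 2)
    - (a - M) / ((a - M) ^ 2 + y ^ 2) ^ (1 + α / 2)
  let f2 : ℝ → ℝ → ℝ := fun a y =>
    (((α + 1) * (a - M) ^ 2 - y ^ 2) / ((a - M) ^ 2 + y ^ 2) ^ (2 + α / 2) +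
          (y ^ 2 - (α + 1) * (a - β * y) ^ 2) / ((a - β * y) ^ 2 + y ^ 2) ^ (2 + α / 2))
  have c0 : ContinuousOn (fun p : ℝ × ℝ => f0 p.1 p.2) (Set.Ioo 0 M ×ˢ Set.Icc 0 R) := by
    refine ContinuousOn.sub ?_ ?_
    · exact hφc.comp (f := fun p : ℝ × ℝ => (p.1 - β * p.2) ^ 2 + p.2 ^ 2) (by fun_prop)
        (fun p hp => hD p.1 hp.1 p.2)
    · exact hφc.comp (f := fun p : ℝ × ℝ => (p.1 - M) ^ 2 + p.2 ^ 2) (by fun_prop)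
        (fun p hp => hE p.1 hp.1 p.2)
  have c1 : ContinuousOn (fun p : ℝ × ℝ => f1 p.1 p.2) (Set.Ioo 0 M ×ˢ Set.Icc 0 R) := by
    refine ContinuousOn.sub (ContinuousOn.div (by fun_prop) (hDc _) ?_)
      (ContinuousOn.div (by fun_prop) (hEc _) ?_)
    · exact fun p hp => (Real.rpow_pos_of_pos (hD p.1 hp.1 p.2) _).ne'
    · exact fun p hp => (Real.rpow_pos_of_pos (hE p.1 hp.1 p.2) _).ne'
  have c2 : ContinuousOn (fun p : ℝ × ℝ => f2 p.1 p.2) (Set.Ioo 0 M ×ˢ Set.Icc 0 R) := by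
    refine ContinuousOn.add (ContinuousOn.div (by fun_prop) (hEc _) ?_)
      (ContinuousOn.div (by fun_prop) (hDc _) ?_)
    · exact fun p hp => (Real.rpow_pos_of_pos (hE p.1 hp.1 p.2) _).ne'
    · exact fun p hp => (Real.rpow_pos_of_pos (hD p.1 hp.1 p.2) _).ne'
  have d0 := aux_param R M f0 f1 c0 c1 (fun a ha y _ =>
    (hphi y (β * y) a (hD a ha y)).sub (hphi y M a (hE a ha y)))
  have d1 := aux_param R M f1 f2 c1 c2 (fun a ha y _ => by
    refine ((aux_g α y (β * y) a (hD a ha y)).sub (aux_g α y M a (hE a ha y))).congr_deriv ?_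
    simp only [f2]
    ring)
  have hAeq : A = fun a => ∫ y in Set.Ioo 0 R, f0 a y := by
    funext a
    rw [hA]
    refine setIntegral_congr_fun measurableSet_Ioo ?_
    intro y hy
    have hy0 : 0 < y ^ 2 := pow_pos hy.1 2
    have hm : 0 < max β 1 := lt_of_lt_of_le one_pos (le_max_right _ _)
    have hle : β * y ≤ M := by
      have h1 : y * max β 1 < M := (lt_div_iff₀ hm).1 hy.2
      nlinarith [le_max_left β 1, hy.1]
    have hpos : ∀ x : ℝ, 0 < (a - x) ^ 2 + y ^ 2 := fun x => by positivity
    have hder : ∀ x : ℝ, HasDerivAt (fun x => -φ ((a - x) ^ 2 + y ^ 2))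
        ((a - x) / ((a - x) ^ 2 + y ^ 2) ^ (1 + α / 2)) x := by
      intro x
      have e : ∀ x, (x - a) ^ 2 = (a - x) ^ 2 := fun x => by ring
      have := (hphi y a x (by rw [e]; exact hpos x)).neg
      simp only [e] at this
      refine this.congr_deriv ?_
      rw [← neg_div, neg_sub]
    have hcont : Continuous (fun x => (a - x) / ((a - x) ^ 2 + y ^ 2) ^ (1 + α / 2)) := by
      refine Continuous.div (by fun_prop)
        (Continuous.rpow_const (by fun_prop) (fun x => Or.inl (hpos x).ne')) ?_
      exact fun x => (Real.rpow_pos_of_pos (hpos x) _).ne'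
    have := intervalIntegral.integral_eq_sub_of_hasDerivAt (a := β * y) (b := M)
      (fun x _ => hder x) (hcont.intervalIntegrable _ _)
    rw [intervalIntegral.integral_of_le hle, integral_Ioc_eq_integral_Ioo] at this
    simp only [f0]
    rw [this]
    ring
  intro a ha
  have hd0 : ∀ x ∈ Set.Ioo 0 M, HasDerivAt A (∫ y in Set.Ioo 0 R, f1 x y) x := by
    rw [hAeq]; exact d0
  have hev : deriv A =ᶠ[nhds a] fun x => ∫ y in Set.Ioo 0 R, f1 x y := by
    filter_upwards [isOpen_Ioo.mem_nhds ha] with x hx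
    exact (hd0 x hx).deriv
  have h2 := (d1 a ha).congr_of_eventuallyEq hev
  exact ⟨(hd0 a ha).differentiableAt, h2.differentiableAt, h2.deriv⟩
end

section
/- For every α with 0 ≤ α < 2 there exists a constant C_α > 0, depending only on α, such that the following holds: for every β ≥ 0, every M > 0, and every a with 0 < a ≤ M/2, the function A(a) := ∫_0^{M/max(β,1)} ( ∫_{βy₂}^{M} (a−y₁)/((a−y₁)² + y₂²)^{1+α/2} dy₁ ) dy₂ is twice differentiable at a and satisfies |A″(a) − F(α,β)/a^{1+α}| ≤ C_α / M^{1+α}. -/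
open MeasureTheory Real

lemma dui (f f' : ℝ → ℝ → ℝ) (b0 δ L : ℝ) (hδ : 0 < δ)
    (hf : ∀ b ∈ Metric.ball b0 δ, ContinuousOn (f b) (Set.Icc 0 L))
    (hf' : ContinuousOn (Function.uncurry f') (Metric.closedBall b0 δ ×ˢ Set.Icc 0 L))
    (hd : ∀ b ∈ Metric.ball b0 δ, ∀ y ∈ Set.Icc 0 L, HasDerivAt (fun b => f b y) (f' b y) b) :
    HasDerivAt (fun b => ∫ y in Set.Ioo 0 L, f b y) (∫ y in Set.Ioo 0 L, f' b0 y) b0 := by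
  obtain ⟨B, hB⟩ := ((isCompact_closedBall b0 δ).prod isCompact_Icc).exists_bound_of_continuousOn hf'
  have hsub : Set.Ioo 0 L ⊆ Set.Icc 0 L := Set.Ioo_subset_Icc_self
  have hb0 : b0 ∈ Metric.ball b0 δ := Metric.mem_ball_self hδ
  refine (hasDerivAt_integral_of_dominated_loc_of_deriv_le (F := f) (F' := f')
    (bound := fun _ => B) (Metric.ball_mem_nhds b0 hδ) ?_ ?_ ?_ ?_ ?_ ?_).2
  · filter_upwards [Metric.ball_mem_nhds b0 hδ] with b hb
    exact ((hf b hb).mono hsub).aestronglyMeasurable measurableSet_Ioo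
  · exact ((hf b0 hb0).integrableOn_Icc).mono_set hsub
  · refine ContinuousOn.aestronglyMeasurable ?_ measurableSet_Ioo
    refine hf'.comp (f := fun y : ℝ => (b0, y)) (by fun_prop) ?_
    intro y hy
    exact ⟨Metric.mem_closedBall_self hδ.le, hsub hy⟩
  · filter_upwards [ae_restrict_mem measurableSet_Ioo] with y hy b hb
    exact hB (b, y) ⟨Metric.ball_subset_closedBall hb, hsub hy⟩
  · exact integrable_const _
  · filter_upwards [ae_restrict_mem measurableSet_Ioo] with y hy b hb
    exact hd b hb y (hsub hy)

lemma exPhi (α : ℝ) : ∃ Φ : ℝ → ℝ, ∀ t : ℝ, 0 < t →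
    HasDerivAt Φ (-(1/2) * t ^ (-(1 + α / 2))) t := by
  by_cases h : α = 0
  · refine ⟨fun t => -(1/2) * Real.log t, fun t ht => ?_⟩
    refine ((Real.hasDerivAt_log ht.ne').const_mul (-(1/2 : ℝ))).congr_deriv ?_
    subst h
    norm_num [Real.rpow_neg_one]
  · refine ⟨fun t => (1/α) * t ^ (-(α/2)), fun t ht => ?_⟩
    refine ((Real.hasDerivAt_rpow_const (p := -(α/2)) (Or.inl ht.ne')).const_mul (1/α)).congr_deriv ?_
    rw [show -(α/2) - 1 = -(1+α/2) by ring]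
    field_simp

/-- The kernel `∂ₓ (x / (x²+y²)^{1+α/2})`. -/
noncomputable def KK (α x y : ℝ) : ℝ :=
  (x ^ 2 + y ^ 2) ^ (-(1 + α / 2)) - (2 + α) * x ^ 2 * (x ^ 2 + y ^ 2) ^ (-(2 + α / 2))

/-- first kernel -/
noncomputable def kk (α x y : ℝ) : ℝ := x * (x ^ 2 + y ^ 2) ^ (-(1 + α / 2))

lemma hasDeriv_kk (α x y : ℝ) (h : 0 < x ^ 2 + y ^ 2) :
    HasDerivAt (fun x => kk α x y) (KK α x y) x := by
  have h1 : HasDerivAt (fun x : ℝ => x ^ 2 + y ^ 2) (2 * x) x := by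
    simpa using ((hasDerivAt_id x).pow 2).add_const (y ^ 2)
  have h2 := (hasDerivAt_id x).mul (h1.rpow_const (p := -(1 + α / 2)) (Or.inl h.ne'))
  unfold kk KK
  refine HasDerivAt.congr_deriv h2 ?_
  simp only [id]
  rw [show -(1 + α / 2) - 1 = -(2 + α / 2) by ring]
  ring

lemma hasDeriv_Phi (α : ℝ) (Φ : ℝ → ℝ) (hΦ : ∀ t : ℝ, 0 < t →
    HasDerivAt Φ (-(1/2) * t ^ (-(1 + α / 2))) t) (x y : ℝ) (h : 0 < x ^ 2 + y ^ 2) :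
    HasDerivAt (fun x => Φ (x ^ 2 + y ^ 2)) (-kk α x y) x := by
  have h1 : HasDerivAt (fun x : ℝ => x ^ 2 + y ^ 2) (2 * x) x := by
    simpa using ((hasDerivAt_id x).pow 2).add_const (y ^ 2)
  have := (hΦ _ h).comp x h1
  unfold kk
  refine HasDerivAt.congr_deriv this ?_
  ring

lemma KK_bound (α x y : ℝ) (hα : 0 ≤ α) (c : ℝ) (hc : 0 < c) (h : c ^ 2 ≤ x ^ 2 + y ^ 2) :
    |KK α x y| ≤ (3 + α) * c ^ (-(2 + α)) := by
  unfold KK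
  have hD : 0 < x ^ 2 + y ^ 2 := lt_of_lt_of_le (by positivity) h
  set D := x ^ 2 + y ^ 2 with hDd
  have e : D ^ (-(1 + α / 2)) = D * D ^ (-(2 + α / 2)) := by
    rw [show -(1 + α / 2) = 1 + -(2 + α / 2) by ring, Real.rpow_add hD, Real.rpow_one]
  have hp : 0 < D ^ (-(2 + α / 2)) := Real.rpow_pos_of_pos hD _
  have h1 : |D ^ (-(1 + α / 2)) - (2 + α) * x ^ 2 * D ^ (-(2 + α / 2))|
      ≤ (3 + α) * D ^ (-(1 + α / 2)) := by
    rw [e, show D * D ^ (-(2 + α / 2)) - (2 + α) * x ^ 2 * D ^ (-(2 + α / 2))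
      = (D - (2 + α) * x ^ 2) * D ^ (-(2 + α / 2)) by ring, abs_mul, abs_of_pos hp, ← mul_assoc]
    refine mul_le_mul_of_nonneg_right ?_ hp.le
    rw [abs_le]
    constructor <;> nlinarith [sq_nonneg x, sq_nonneg y, mul_nonneg hα (sq_nonneg x),
      mul_nonneg hα (sq_nonneg y)]
  refine h1.trans (mul_le_mul_of_nonneg_left ?_ (by linarith))
  have : c ^ (-(2 + α)) = (c ^ 2) ^ (-(1 + α / 2)) := by
    rw [← Real.rpow_natCast, ← Real.rpow_mul hc.le]
    congr 1; push_cast; ring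
  rw [this]
  exact Real.rpow_le_rpow_of_nonpos (by positivity) h (by linarith)

lemma kk_cont (α : ℝ) : ContinuousOn (fun p : ℝ × ℝ => kk α p.1 p.2)
    {p | 0 < p.1 ^ 2 + p.2 ^ 2} := by
  unfold kk
  refine ContinuousOn.mul (by fun_prop) (ContinuousOn.rpow_const (by fun_prop) ?_)
  intro p hp; exact Or.inl (ne_of_gt hp)

lemma KK_cont (α : ℝ) : ContinuousOn (fun p : ℝ × ℝ => KK α p.1 p.2)
    {p | 0 < p.1 ^ 2 + p.2 ^ 2} := by
  unfold KK
  refine ContinuousOn.sub (ContinuousOn.rpow_const (by fun_prop) ?_)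
    (ContinuousOn.mul (by fun_prop) (ContinuousOn.rpow_const (by fun_prop) ?_)) <;>
  · intro p hp; exact Or.inl (ne_of_gt hp)

lemma Dpos (β b y : ℝ) (hb : 0 < b) : 0 < (b - β * y) ^ 2 + y ^ 2 := by
  by_cases h : y = 0
  · subst h; simpa using by positivity
  · positivity

lemma Dpos' (M b y : ℝ) (hb : b < M) : 0 < (b - M) ^ 2 + y ^ 2 := by
  have : b - M ≠ 0 := sub_ne_zero.mpr hb.ne
  positivity

/-- The full antiderivative. -/
noncomputable def PP (α β a y : ℝ) : ℝ :=
  (-(a * β / (β ^ 2 + 1)) + (β ^ 2 - 1) / (β ^ 2 + 1) * y) *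
      ((a - β * y) ^ 2 + y ^ 2) ^ (-(1 + α / 2))
    - α / (β ^ 2 + 1) ^ (1 - α / 2) / a ^ (1 + α) *
      ∫ θ in (-Real.arctan β)..(Real.arctan (((β ^ 2 + 1) * y - a * β) / a)), Real.cos θ ^ α

lemma PP_deriv (α β a y : ℝ) (hα : 0 ≤ α) (ha : 0 < a) :
    HasDerivAt (PP α β a) (KK α (a - β * y) y) y := by
  have hD := Dpos β a y ha
  have hs : 0 < β ^ 2 + 1 := by positivity
  have hcont : Continuous fun θ : ℝ => Real.cos θ ^ α :=
    Real.continuous_cos.rpow_const (fun _ => Or.inr hα)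
  have hu : HasDerivAt (fun y => ((β ^ 2 + 1) * y - a * β) / a) ((β ^ 2 + 1) / a) y := by
    simpa using (((hasDerivAt_id y).const_mul (β ^ 2 + 1)).sub_const (a * β)).div_const a
  have hH := ((hcont.integral_hasStrictDerivAt (-Real.arctan β)
    (Real.arctan (((β ^ 2 + 1) * y - a * β) / a))).hasDerivAt).comp y hu.arctan
  have hDd : HasDerivAt (fun y => (a - β * y) ^ 2 + y ^ 2)
      (2 * ((β ^ 2 + 1) * y - a * β)) y := by
    have := ((((hasDerivAt_id y).const_mul β).const_sub a).pow 2).add ((hasDerivAt_id y).pow 2)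
    refine HasDerivAt.congr_deriv this ?_
    simp; ring
  have hl : HasDerivAt (fun y => -(a * β / (β ^ 2 + 1)) + (β ^ 2 - 1) / (β ^ 2 + 1) * y)
      ((β ^ 2 - 1) / (β ^ 2 + 1)) y := by
    simpa using ((hasDerivAt_id y).const_mul ((β ^ 2 - 1) / (β ^ 2 + 1))).const_add
      (-(a * β / (β ^ 2 + 1)))
  have hfin := (hl.mul (hDd.rpow_const (p := -(1 + α / 2)) (Or.inl hD.ne'))).sub
    (hH.const_mul (α / (β ^ 2 + 1) ^ (1 - α / 2) / a ^ (1 + α)))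
  refine HasDerivAt.congr_deriv (f := PP α β a) hfin ?_
  have key : α / (β ^ 2 + 1) ^ (1 - α / 2) / a ^ (1 + α) *
      (Real.cos (Real.arctan (((β ^ 2 + 1) * y - a * β) / a)) ^ α *
        (1 / (1 + (((β ^ 2 + 1) * y - a * β) / a) ^ 2) * ((β ^ 2 + 1) / a)))
      = α / (β ^ 2 + 1) * ((a - β * y) ^ 2 + y ^ 2) ^ (-(1 + α / 2)) := by
    have e1 : 1 + (((β ^ 2 + 1) * y - a * β) / a) ^ 2
        = (β ^ 2 + 1) * ((a - β * y) ^ 2 + y ^ 2) / a ^ 2 := by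
      field_simp; ring
    rw [Real.cos_arctan, e1]
    set D := (a - β * y) ^ 2 + y ^ 2
    set s := β ^ 2 + 1
    have e2 : (1 / √(s * D / a ^ 2)) ^ α = (s ^ (α/2))⁻¹ * (D ^ (α/2))⁻¹ * a ^ α := by
      rw [Real.sqrt_eq_rpow, one_div, ← Real.rpow_neg (by positivity), ← Real.rpow_mul (by positivity),
        Real.div_rpow (by positivity) (by positivity), Real.mul_rpow hs.le hD.le,
        show -(1/2) * α = -(α/2) by ring, Real.rpow_neg hs.le, Real.rpow_neg hD.le,
        Real.rpow_neg (by positivity), ← Real.rpow_natCast, ← Real.rpow_mul ha.le]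
      push_cast
      rw [show 2 * (α/2) = α by ring, div_inv_eq_mul]
    rw [e2, Real.rpow_sub hs, Real.rpow_one, Real.rpow_add ha, Real.rpow_one, Real.rpow_neg hD.le,
      Real.rpow_add hD, Real.rpow_one]
    have p1 := Real.rpow_pos_of_pos hs (α/2)
    have p2 := Real.rpow_pos_of_pos hD (α/2)
    have p3 := Real.rpow_pos_of_pos ha α
    field_simp
  rw [key]
  unfold KK
  have e : ((a - β * y) ^ 2 + y ^ 2) ^ (-(1 + α / 2))
      = ((a - β * y) ^ 2 + y ^ 2) * ((a - β * y) ^ 2 + y ^ 2) ^ (-(2 + α / 2)) := by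
    rw [show -(1 + α / 2) = 1 + -(2 + α / 2) by ring, Real.rpow_add hD, Real.rpow_one]
  rw [show -(1 + α / 2) - 1 = -(2 + α / 2) by ring, e]
  generalize ((a - β * y) ^ 2 + y ^ 2) ^ (-(2 + α / 2)) = W
  field_simp
  ring

lemma PP_zero (α β a : ℝ) (ha : 0 < a) :
    PP α β a 0 = -(β / (β ^ 2 + 1) / a ^ (1 + α)) := by
  unfold PP
  have e1 : ((β ^ 2 + 1) * 0 - a * β) / a = -β := by field_simp; ring
  have e2 : ((a - β * 0) ^ 2 + (0:ℝ) ^ 2) ^ (-(1 + α / 2)) = (a * a ^ (1 + α))⁻¹ := by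
    rw [show (a - β * 0) ^ 2 + (0:ℝ) ^ 2 = a ^ 2 by ring, ← Real.rpow_natCast,
      ← Real.rpow_mul ha.le]
    nth_rewrite 2 [← Real.rpow_one a]
    rw [← Real.rpow_add ha, ← Real.rpow_neg ha.le]
    congr 1; push_cast; ring
  rw [e1, e2, Real.arctan_neg, intervalIntegral.integral_same]
  have := Real.rpow_pos_of_pos ha (1 + α)
  field_simp
  ring

lemma PP_lim (α β a : ℝ) (hα : 0 ≤ α) (ha : 0 < a) :
    Filter.Tendsto (PP α β a) Filter.atTop (nhds (0 - α / (β ^ 2 + 1) ^ (1 - α / 2) / a ^ (1 + α) *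
      ∫ θ in (-Real.arctan β)..(Real.pi / 2), Real.cos θ ^ α)) := by
  unfold PP
  have hcont : Continuous fun θ : ℝ => Real.cos θ ^ α :=
    Real.continuous_cos.rpow_const (fun _ => Or.inr hα)
  refine Filter.Tendsto.sub ?_ (Filter.Tendsto.const_mul _ ?_)
  · set p := -(a * β / (β ^ 2 + 1))
    set q := (β ^ 2 - 1) / (β ^ 2 + 1)
    have hlim : Filter.Tendsto (fun y : ℝ => (|p| + |q|) * y ^ (-(1 + α))) Filter.atTop (nhds 0) := by
      simpa using (tendsto_rpow_neg_atTop (y := 1 + α) (by linarith)).const_mul (|p| + |q|)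
    refine squeeze_zero_norm' ?_ hlim
    filter_upwards [Filter.eventually_ge_atTop 1] with y hy
    have hy0 : 0 < y := by linarith
    have hD := Dpos β a y ha
    rw [Real.norm_eq_abs, abs_mul, abs_of_pos (Real.rpow_pos_of_pos hD _),
      show -(1 + α) = 1 + -(2 + α) by ring, Real.rpow_add hy0, Real.rpow_one, ← mul_assoc]
    refine mul_le_mul ?_ ?_ (Real.rpow_pos_of_pos hD _).le (by positivity)
    · refine (abs_add_le _ _).trans ?_
      rw [abs_mul, abs_of_pos hy0]
      nlinarith [abs_nonneg p]
    · have : y ^ (-(2 + α)) = (y ^ 2) ^ (-(1 + α / 2)) := by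
        rw [← Real.rpow_natCast, ← Real.rpow_mul hy0.le]
        congr 1; push_cast; ring
      rw [this]
      exact Real.rpow_le_rpow_of_nonpos (by positivity) (by nlinarith [sq_nonneg (a - β * y)])
        (by linarith)
  · have h1 : Filter.Tendsto (fun y : ℝ => ((β ^ 2 + 1) * y - a * β) / a) Filter.atTop
        Filter.atTop := by
      refine Filter.Tendsto.atTop_div_const ha ?_
      exact Filter.tendsto_atTop_add_const_right _ _
        (Filter.tendsto_id.const_mul_atTop (by positivity))
    have h2 := (Real.tendsto_arctan_atTop.mono_right nhdsWithin_le_nhds).comp h1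
    have h3 : Continuous fun x : ℝ => ∫ θ in (-Real.arctan β)..x, Real.cos θ ^ α :=
      intervalIntegral.continuous_primitive (fun _ _ => hcont.intervalIntegrable _ _) _
    exact (h3.tendsto _).comp h2

lemma KK_line_cont (α β a : ℝ) (ha : 0 < a) : Continuous fun y => KK α (a - β * y) y := by
  rw [← continuousOn_univ]
  refine (KK_cont α).comp (f := fun y : ℝ => (a - β * y, y)) (by fun_prop) ?_
  intro y _
  exact Dpos β a y ha

lemma tail_ptwise (α β a M y : ℝ) (hα : 0 ≤ α) (hM : 0 < M) (haM : a ≤ M / 2)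
    (hy : M / max β 1 < y) :
    |KK α (a - β * y) y| ≤ (3 + α) * (max β 1 / 2) ^ (-(2 + α)) * y ^ (-(2 + α)) := by
  have hm : 0 < max β 1 := lt_max_of_lt_right one_pos
  have hy0 : 0 < y := lt_trans (by positivity) hy
  rw [div_lt_iff₀ hm] at hy
  have := KK_bound α (a - β * y) y hα (max β 1 / 2 * y) (by positivity) (by
    rcases le_total β 1 with h | h
    · rw [max_eq_right h]; nlinarith [sq_nonneg (a - β * y), sq_nonneg y]
    · rw [max_eq_left h] at hy ⊢
      have h1 : β / 2 * y ≤ β * y - a := by nlinarith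
      have h2 : 0 ≤ β / 2 * y := by positivity
      nlinarith [pow_le_pow_left₀ h2 h1 2, sq_nonneg y])
  rwa [Real.mul_rpow (by positivity) hy0.le, ← mul_assoc] at this

lemma tail_int (α β a M : ℝ) (hα : 0 ≤ α) (ha : 0 < a) (hM : 0 < M) (haM : a ≤ M / 2) :
    IntegrableOn (fun y => KK α (a - β * y) y) (Set.Ioi (M / max β 1)) := by
  have hm : 0 < max β 1 := lt_max_of_lt_right one_pos
  refine Integrable.mono' ((integrableOn_Ioi_rpow_of_lt (a := -(2 + α)) (by linarith)
    (c := M / max β 1) (by positivity)).const_mul ((3 + α) * (max β 1 / 2) ^ (-(2 + α))))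
    (KK_line_cont α β a ha).aestronglyMeasurable ?_
  filter_upwards [ae_restrict_mem measurableSet_Ioi] with y hy
  exact tail_ptwise α β a M y hα hM haM hy

lemma tail_bound (α β a M : ℝ) (hα : 0 ≤ α) (hM : 0 < M) (haM : a ≤ M / 2) :
    |∫ y in Set.Ioi (M / max β 1), KK α (a - β * y) y|
      ≤ (3 + α) * 2 ^ (2 + α) / M ^ (1 + α) := by
  have hm : 0 < max β 1 := lt_max_of_lt_right one_pos
  have hm1 : 1 ≤ max β 1 := le_max_right _ _
  have h1 := norm_integral_le_of_norm_le ((integrableOn_Ioi_rpow_of_lt (a := -(2 + α)) (by linarith)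
    (c := M / max β 1) (by positivity)).const_mul ((3 + α) * (max β 1 / 2) ^ (-(2 + α))))
    (f := fun y => KK α (a - β * y) y) (by
      filter_upwards [ae_restrict_mem measurableSet_Ioi] with y hy
      exact tail_ptwise α β a M y hα hM haM hy)
  rw [Real.norm_eq_abs] at h1
  refine h1.trans ?_
  rw [integral_const_mul, integral_Ioi_rpow_of_lt (by linarith) (by positivity)]
  set m := max β 1
  have e : (3 + α) * (m / 2) ^ (-(2 + α)) * (-(M / m) ^ (-(2 + α) + 1) / (-(2 + α) + 1))
      = (3 + α) * 2 ^ (2 + α) / M ^ (1 + α) * (m * (1 + α))⁻¹ := by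
    rw [show -(2 + α) + 1 = -(1 + α) by ring, neg_div_neg_eq, Real.rpow_neg (by positivity),
      Real.rpow_neg (by positivity), Real.div_rpow hm.le (by norm_num), Real.div_rpow hM.le hm.le,
      show m ^ (2 + α) = m * m ^ (1 + α) by
        nth_rewrite 2 [← Real.rpow_one m]
        rw [← Real.rpow_add hm]; congr 1; ring]
    have p1 := Real.rpow_pos_of_pos hm (1 + α)
    have p2 := Real.rpow_pos_of_pos hM (1 + α)
    have p3 : 0 < 1 + α := by linarith
    field_simp
  rw [e]
  refine mul_le_of_le_one_right (by positivity) ?_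
  exact inv_le_one_of_one_le₀ (by nlinarith)

lemma full_integral (α β a : ℝ) (hα : 0 ≤ α) (ha : 0 < a)
    (hi : IntegrableOn (fun y => KK α (a - β * y) y) (Set.Ioi 0)) :
    ∫ y in Set.Ioi 0, KK α (a - β * y) y = F α β / a ^ (1 + α) := by
  rw [integral_Ioi_of_hasDerivAt_of_tendsto' (fun y _ => PP_deriv α β a y hα ha) hi
    (PP_lim α β a hα ha), PP_zero α β a ha]
  unfold F
  ring

lemma second_est (α β a M : ℝ) (hα : 0 ≤ α) (ha : 0 < a) (hM : 0 < M) (haM : a ≤ M / 2) :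
    |(∫ y in Set.Ioo 0 (M / max β 1), (KK α (a - β * y) y - KK α (a - M) y))
      - F α β / a ^ (1 + α)| ≤ 2 * ((3 + α) * 2 ^ (2 + α)) / M ^ (1 + α) := by
  have hm : 0 < max β 1 := lt_max_of_lt_right one_pos
  have hm1 : 1 ≤ max β 1 := le_max_right _ _
  have hL : 0 < M / max β 1 := by positivity
  have hLM : M / max β 1 ≤ M := div_le_self hM.le hm1
  have hc := KK_line_cont α β a ha
  have i1 : IntegrableOn (fun y => KK α (a - β * y) y) (Set.Ioc 0 (M / max β 1)) :=
    (hc.continuousOn.integrableOn_Icc).mono_set Set.Ioc_subset_Icc_self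
  have i2 := tail_int α β a M hα ha hM haM
  have hu : Set.Ioi (0:ℝ) = Set.Ioc 0 (M / max β 1) ∪ Set.Ioi (M / max β 1) :=
    (Set.Ioc_union_Ioi_eq_Ioi hL.le).symm
  have i3 : IntegrableOn (fun y => KK α (a - β * y) y) (Set.Ioi 0) := by
    rw [hu]; exact i1.union i2
  have hfull := full_integral α β a hα ha i3
  rw [hu, setIntegral_union (Set.Ioc_disjoint_Ioi le_rfl) measurableSet_Ioi i1 i2,
    integral_Ioc_eq_integral_Ioo] at hfull
  have hc2 : Continuous fun y => KK α (a - M) y := by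
    rw [← continuousOn_univ]
    refine (KK_cont α).comp (f := fun y : ℝ => (a - M, y)) (by fun_prop) ?_
    intro y _
    exact Dpos' M a y (by linarith)
  have j1 : IntegrableOn (fun y => KK α (a - M) y) (Set.Ioo 0 (M / max β 1)) :=
    (hc2.continuousOn.integrableOn_Icc).mono_set Set.Ioo_subset_Icc_self
  rw [integral_sub (i1.mono_set Set.Ioo_subset_Ioc_self) j1, ← hfull]
  have ht := tail_bound α β a M hα hM haM
  have hb : |∫ y in Set.Ioo 0 (M / max β 1), KK α (a - M) y|
      ≤ (3 + α) * 2 ^ (2 + α) / M ^ (1 + α) := by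
    have := norm_setIntegral_le_of_norm_le_const (μ := volume) (s := Set.Ioo 0 (M / max β 1))
      (f := fun y => KK α (a - M) y) (C := (3 + α) * (M / 2) ^ (-(2 + α))) (by simp)
      (fun y _ => KK_bound α (a - M) y hα (M / 2) (by positivity)
        (by nlinarith [sq_nonneg y]))
    rw [Real.norm_eq_abs] at this
    refine this.trans ?_
    rw [Real.volume_real_Ioo_of_le hL.le, sub_zero]
    have h0 : 0 ≤ (3 + α) * (M / 2) ^ (-(2 + α)) := by positivity
    refine (mul_le_mul_of_nonneg_left hLM h0).trans (le_of_eq ?_)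
    rw [Real.rpow_neg (by positivity), Real.div_rpow hM.le (by norm_num),
      show M ^ (2 + α) = M * M ^ (1 + α) by
        nth_rewrite 2 [← Real.rpow_one M]
        rw [← Real.rpow_add hM]; congr 1; ring]
    have p2 := Real.rpow_pos_of_pos hM (1 + α)
    field_simp
  rw [show 2 * ((3 + α) * 2 ^ (2 + α)) / M ^ (1 + α) =
    (3 + α) * 2 ^ (2 + α) / M ^ (1 + α) + (3 + α) * 2 ^ (2 + α) / M ^ (1 + α) by ring]
  rw [abs_le] at *
  constructor <;> linarith [ht.1, ht.2, hb.1, hb.2]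

lemma inner_eq (α : ℝ) (Φ : ℝ → ℝ) (hΦ : ∀ t : ℝ, 0 < t →
    HasDerivAt Φ (-(1/2) * t ^ (-(1 + α / 2))) t) (b l M y : ℝ) (hy : 0 < y) (hl : l ≤ M) :
    ∫ y₁ in Set.Ioo l M, (b - y₁) / ((b - y₁) ^ 2 + y ^ 2) ^ (1 + α / 2)
      = Φ ((b - M) ^ 2 + y ^ 2) - Φ ((b - l) ^ 2 + y ^ 2) := by
  have hp : ∀ t : ℝ, 0 < (b - t) ^ 2 + y ^ 2 := fun t => by positivity
  have e : ∀ t : ℝ, (b - t) / ((b - t) ^ 2 + y ^ 2) ^ (1 + α / 2) = kk α (b - t) y := by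
    intro t
    unfold kk
    rw [Real.rpow_neg (hp t).le, div_eq_mul_inv]
  simp_rw [e]
  rw [← integral_Ioc_eq_integral_Ioo, ← intervalIntegral.integral_of_le hl]
  refine intervalIntegral.integral_eq_sub_of_hasDerivAt
    (f := fun t => Φ ((b - t) ^ 2 + y ^ 2)) (fun t _ => ?_) ?_
  · have := (hasDeriv_Phi α Φ hΦ (b - t) y (hp t)).comp t ((hasDerivAt_id t).const_sub b)
    refine HasDerivAt.congr_deriv this ?_
    ring
  · refine Continuous.intervalIntegrable ?_ _ _
    rw [← continuousOn_univ]
    exact (kk_cont α).comp (f := fun t : ℝ => (b - t, y)) (by fun_prop) (fun t _ => hp t)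

lemma first_deriv (α β M : ℝ) (A : ℝ → ℝ) (hM : 0 < M)
    (hA : ∀ b : ℝ, A b = ∫ y₂ in Set.Ioo 0 (M / max β 1),
          ∫ y₁ in Set.Ioo (β * y₂) M, (b - y₁) / ((b - y₁) ^ 2 + y₂ ^ 2) ^ (1 + α / 2))
    (b : ℝ) (hb : 0 < b) (hbM : b < M) :
    HasDerivAt A (∫ y in Set.Ioo 0 (M / max β 1), (kk α (b - β * y) y - kk α (b - M) y)) b := by
  obtain ⟨Φ, hΦ⟩ := exPhi α
  have hm : 0 < max β 1 := lt_max_of_lt_right one_pos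
  have hA' : A = fun b => ∫ y in Set.Ioo 0 (M / max β 1),
      (Φ ((b - M) ^ 2 + y ^ 2) - Φ ((b - β * y) ^ 2 + y ^ 2)) := by
    funext b
    rw [hA b]
    refine setIntegral_congr_fun measurableSet_Ioo fun y hy => ?_
    refine inner_eq α Φ hΦ b (β * y) M y hy.1 ?_
    have h1 := hy.2
    rw [lt_div_iff₀ hm] at h1
    have := mul_le_mul_of_nonneg_left (le_max_left β 1) hy.1.le
    linarith
  have hΦc : ContinuousOn Φ (Set.Ioi 0) := fun t ht => (hΦ t ht).continuousAt.continuousWithinAt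
  obtain ⟨δ, hδ, hball⟩ : ∃ δ > 0, Metric.closedBall b δ ⊆ Set.Ioo 0 M :=
    Metric.nhds_basis_closedBall.mem_iff.mp (Ioo_mem_nhds hb hbM)
  have hball' : Metric.ball b δ ⊆ Set.Ioo 0 M := Metric.ball_subset_closedBall.trans hball
  rw [hA']
  refine dui (fun b y => Φ ((b - M) ^ 2 + y ^ 2) - Φ ((b - β * y) ^ 2 + y ^ 2))
    (fun b y => kk α (b - β * y) y - kk α (b - M) y) b δ _ hδ ?_ ?_ ?_
  · intro c hc
    refine ContinuousOn.sub (hΦc.comp (by fun_prop) ?_) (hΦc.comp (by fun_prop) ?_)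
    · intro y _; exact Dpos' M c y (hball' hc).2
    · intro y _; exact Dpos β c y (hball' hc).1
  · refine ContinuousOn.sub
      ((kk_cont α).comp (f := fun p : ℝ × ℝ => (p.1 - β * p.2, p.2)) (by fun_prop) ?_)
      ((kk_cont α).comp (f := fun p : ℝ × ℝ => (p.1 - M, p.2)) (by fun_prop) ?_)
    · intro p hp; exact Dpos β p.1 p.2 (hball hp.1).1
    · intro p hp; exact Dpos' M p.1 p.2 (hball hp.1).2
  · intro c hc y _
    have h1 := (hasDeriv_Phi α Φ hΦ (c - M) y (Dpos' M c y (hball' hc).2)).comp c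
      ((hasDerivAt_id c).sub_const M)
    have h2 := (hasDeriv_Phi α Φ hΦ (c - β * y) y (Dpos β c y (hball' hc).1)).comp c
      ((hasDerivAt_id c).sub_const (β * y))
    refine HasDerivAt.congr_deriv (h1.sub h2) ?_
    ring

lemma second_deriv (α β M : ℝ) (b : ℝ) (hb : 0 < b) (hbM : b < M) :
    HasDerivAt (fun b => ∫ y in Set.Ioo 0 (M / max β 1), (kk α (b - β * y) y - kk α (b - M) y))
      (∫ y in Set.Ioo 0 (M / max β 1), (KK α (b - β * y) y - KK α (b - M) y)) b := by
  obtain ⟨δ, hδ, hball⟩ : ∃ δ > 0, Metric.closedBall b δ ⊆ Set.Ioo 0 M :=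
    Metric.nhds_basis_closedBall.mem_iff.mp (Ioo_mem_nhds hb hbM)
  have hball' : Metric.ball b δ ⊆ Set.Ioo 0 M := Metric.ball_subset_closedBall.trans hball
  refine dui (fun b y => kk α (b - β * y) y - kk α (b - M) y)
    (fun b y => KK α (b - β * y) y - KK α (b - M) y) b δ _ hδ ?_ ?_ ?_
  · intro c hc
    refine ContinuousOn.sub
      ((kk_cont α).comp (f := fun y : ℝ => (c - β * y, y)) (by fun_prop) ?_)
      ((kk_cont α).comp (f := fun y : ℝ => (c - M, y)) (by fun_prop) ?_)
    · intro y _; exact Dpos β c y (hball' hc).1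
    · intro y _; exact Dpos' M c y (hball' hc).2
  · refine ContinuousOn.sub
      ((KK_cont α).comp (f := fun p : ℝ × ℝ => (p.1 - β * p.2, p.2)) (by fun_prop) ?_)
      ((KK_cont α).comp (f := fun p : ℝ × ℝ => (p.1 - M, p.2)) (by fun_prop) ?_)
    · intro p hp; exact Dpos β p.1 p.2 (hball hp.1).1
    · intro p hp; exact Dpos' M p.1 p.2 (hball hp.1).2
  · intro c hc y _
    have h1 := (hasDeriv_kk α (c - M) y (Dpos' M c y (hball' hc).2)).comp c
      ((hasDerivAt_id c).sub_const M)
    have h2 := (hasDeriv_kk α (c - β * y) y (Dpos β c y (hball' hc).1)).comp c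
      ((hasDerivAt_id c).sub_const (β * y))
    refine HasDerivAt.congr_deriv (h2.sub h1) ?_
    ring

theorem stmt14 (α : ℝ) (hα0 : 0 ≤ α) (hα2 : α < 2) :
    ∃ C : ℝ, 0 < C ∧ ∀ β M : ℝ, 0 ≤ β → 0 < M →
      ∀ A : ℝ → ℝ,
        (∀ b : ℝ, A b = ∫ y₂ in Set.Ioo 0 (M / max β 1),
          ∫ y₁ in Set.Ioo (β * y₂) M, (b - y₁) / ((b - y₁) ^ 2 + y₂ ^ 2) ^ (1 + α / 2)) →
        ∀ a : ℝ, 0 < a → a ≤ M / 2 →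
          DifferentiableAt ℝ A a ∧ DifferentiableAt ℝ (deriv A) a ∧
          |deriv (deriv A) a - F α β / a ^ (1 + α)| ≤ C / M ^ (1 + α) := by
  refine ⟨2 * ((3 + α) * 2 ^ (2 + α)), by positivity, ?_⟩
  intro β M _ hM A hA a ha haM
  have haM' : a < M := by linarith
  have h1 := first_deriv α β M A hM hA
  have h2 := second_deriv α β M a ha haM'
  have hev : deriv A =ᶠ[nhds a] fun b =>
      ∫ y in Set.Ioo 0 (M / max β 1), (kk α (b - β * y) y - kk α (b - M) y) := by
    filter_upwards [Ioo_mem_nhds ha haM'] with b hb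
    exact (h1 b hb.1 hb.2).deriv
  have h3 := h2.congr_of_eventuallyEq hev
  refine ⟨(h1 a ha haM').differentiableAt, h3.differentiableAt, ?_⟩
  rw [h3.deriv]
  exact second_est α β a M hα0 ha hM haM
end

section
/- For every α with 0 ≤ α < 2 there exists a constant C_α > 0, depending only on α, such that the following holds. Let β ≥ 0, M > 0, 0 < δ ≤ M/4, and let Ω₀ ⊆ ℝ² be a bounded open set with |Ω₀| ≤ 100 M² that satisfies Ω₀ ∩ {x ∈ [−M,M]² : |x| > δ} = {x ∈ (0,∞)² : β x₂ < x₁} ∩ {x ∈ [−M,M]² : |x| > δ}. For a ∈ [2δ, M/2] define V(a) := lim_{ε→0⁺} ∫_{Ω₀ \ B̄((a,0),ε)} (a−y₁)/((a−y₁)² + y₂²)^{1+α/2} dy₁ dy₂. Then this principal-value limit exists for every a ∈ [2δ, M/2], V is twice differentiable there, and |V″(a) − F(α,β)/a^{1+α}| ≤ C_α (1/M^{1+α} + δ²/a^{3+α}) for every a ∈ [2δ, M/2]. -/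
open MeasureTheory Real Filter

noncomputable def k0 (p u v : ℝ) : ℝ := u / (u ^ 2 + v ^ 2) ^ p
noncomputable def k1 (p u v : ℝ) : ℝ :=
  (u ^ 2 + v ^ 2) ^ (-p) - 2 * p * u ^ 2 * (u ^ 2 + v ^ 2) ^ (-p - 1)
noncomputable def k2 (p u v : ℝ) : ℝ :=
  -(6 * p) * u * (u ^ 2 + v ^ 2) ^ (-p - 1) + 4 * p * (p + 1) * u ^ 3 * (u ^ 2 + v ^ 2) ^ (-p - 2)

lemma hasDeriv_s (t u v : ℝ) (h : 0 < u ^ 2 + v ^ 2) :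
    HasDerivAt (fun u : ℝ => (u ^ 2 + v ^ 2) ^ t) (2 * u * t * (u ^ 2 + v ^ 2) ^ (t - 1)) u := by
  have h1 : HasDerivAt (fun u : ℝ => u ^ 2 + v ^ 2) (2 * u) u := by
    simpa using (hasDerivAt_pow 2 u).add_const (v ^ 2)
  exact h1.rpow_const (Or.inl h.ne')

lemma k0_eq (p u v : ℝ) : k0 p u v = u * (u ^ 2 + v ^ 2) ^ (-p) := by
  unfold k0
  rw [Real.rpow_neg (by positivity)]; rfl

lemma k0_deriv (p u v : ℝ) (h : 0 < u ^ 2 + v ^ 2) :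
    HasDerivAt (fun u => k0 p u v) (k1 p u v) u := by
  have := (hasDerivAt_id u).mul (hasDeriv_s (-p) u v h)
  have e : (fun u => k0 p u v) = (id * fun u : ℝ => (u ^ 2 + v ^ 2) ^ (-p)) := by
    ext x; simp [k0_eq]
  rw [e]
  refine this.congr_deriv ?_
  unfold k1
  simp only [id]
  ring

lemma k1_deriv (p u v : ℝ) (h : 0 < u ^ 2 + v ^ 2) :
    HasDerivAt (fun u => k1 p u v) (k2 p u v) u := by
  have h1 := hasDeriv_s (-p) u v h
  have h2 := ((hasDerivAt_pow 2 u).const_mul (2 * p)).mul (hasDeriv_s (-p - 1) u v h)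
  have := h1.sub h2
  refine (this.congr_deriv ?_)
  unfold k2
  have e : (u ^ 2 + v ^ 2) ^ (-p - 1 - 1) = (u ^ 2 + v ^ 2) ^ (-p - 2) := by congr 1; ring
  rw [e]
  push_cast
  ring

lemma s_eq (u v t : ℝ) : (u ^ 2 + v ^ 2) ^ t = (√(u ^ 2 + v ^ 2)) ^ (2 * t) := by
  rw [Real.rpow_mul (Real.sqrt_nonneg _)]
  norm_cast
  rw [Real.sq_sqrt (by positivity)]

lemma abs_u_le (u v : ℝ) : |u| ≤ √(u ^ 2 + v ^ 2) := by
  apply Real.abs_le_sqrt; nlinarith [sq_nonneg v]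

lemma rle (d u v : ℝ) (hd : 0 < d) (h : d ^ 2 ≤ u ^ 2 + v ^ 2) : d ≤ √(u ^ 2 + v ^ 2) :=
  Real.le_sqrt_of_sq_le h

lemma k0_bound (p u v d : ℝ) (hp : 1 ≤ p) (hd : 0 < d) (h : d ^ 2 ≤ u ^ 2 + v ^ 2) :
    |k0 p u v| ≤ d ^ (-(2 * p - 1)) := by
  rw [k0_eq, s_eq, abs_mul]
  have hr := rle d u v hd h
  have hu := abs_u_le u v
  set r := √(u ^ 2 + v ^ 2)
  have r0 : 0 < r := hd.trans_le hr
  rw [abs_of_pos (Real.rpow_pos_of_pos r0 _)]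
  calc |u| * r ^ (2 * -p) ≤ r ^ (1:ℝ) * r ^ (2 * -p) := by
        rw [Real.rpow_one]; gcongr
    _ = r ^ (-(2 * p - 1)) := by rw [← Real.rpow_add r0]; congr 1; ring
    _ ≤ _ := Real.rpow_le_rpow_of_nonpos hd hr (by linarith)

lemma k1_bound (p u v d : ℝ) (hp : 1 ≤ p) (hd : 0 < d) (h : d ^ 2 ≤ u ^ 2 + v ^ 2) :
    |k1 p u v| ≤ (1 + 2 * p) * d ^ (-(2 * p)) := by
  unfold k1
  rw [s_eq, s_eq]
  have hr := rle d u v hd h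
  have hu := abs_u_le u v
  set r := √(u ^ 2 + v ^ 2)
  have r0 : 0 < r := hd.trans_le hr
  have h2 : u ^ 2 ≤ r ^ 2 := by rw [← sq_abs]; gcongr
  have e : r ^ 2 * r ^ (2 * (-p - 1)) = r ^ (-(2 * p)) := by
    rw [← Real.rpow_natCast, ← Real.rpow_add r0]; congr 1; push_cast; ring
  have e1 : r ^ (2 * -p) = r ^ (-(2 * p)) := by congr 1; ring
  have e2 : u ^ 2 * r ^ (2 * (-p - 1)) ≤ r ^ (-(2 * p)) := by
    rw [← e]; gcongr
  have e3 : r ^ (-(2 * p)) ≤ d ^ (-(2 * p)) := Real.rpow_le_rpow_of_nonpos hd hr (by linarith)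
  have e4 : 0 < r ^ (-(2 * p)) := Real.rpow_pos_of_pos r0 _
  have e5 : 0 ≤ u ^ 2 * r ^ (2 * (-p - 1)) := by positivity
  rw [e1, abs_le]
  constructor <;> nlinarith

lemma k2_bound (p u v d : ℝ) (hp : 1 ≤ p) (hd : 0 < d) (h : d ^ 2 ≤ u ^ 2 + v ^ 2) :
    |k2 p u v| ≤ (6 * p + 4 * p * (p + 1)) * d ^ (-(2 * p + 1)) := by
  unfold k2
  rw [s_eq, s_eq]
  have hr := rle d u v hd h
  have hu := abs_u_le u v
  set r := √(u ^ 2 + v ^ 2)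
  have r0 : 0 < r := hd.trans_le hr
  have h2 : |u| ^ 3 ≤ r ^ 3 := by gcongr
  have e : r ^ 3 * r ^ (2 * (-p - 2)) = r ^ (-(2 * p + 1)) := by
    rw [← Real.rpow_natCast, ← Real.rpow_add r0]; congr 1; push_cast; ring
  have e1 : r ^ (1:ℝ) * r ^ (2 * (-p - 1)) = r ^ (-(2 * p + 1)) := by
    rw [← Real.rpow_add r0]; congr 1; ring
  rw [Real.rpow_one] at e1
  have e3 : r ^ (-(2 * p + 1)) ≤ d ^ (-(2 * p + 1)) :=
    Real.rpow_le_rpow_of_nonpos hd hr (by linarith)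
  have a1 : 0 < r ^ (2 * (-p - 1)) := Real.rpow_pos_of_pos r0 _
  have a2 : 0 < r ^ (2 * (-p - 2)) := Real.rpow_pos_of_pos r0 _
  calc _ ≤ |(-(6 * p) * u * r ^ (2 * (-p - 1)))| + |4 * p * (p + 1) * u ^ 3 * r ^ (2 * (-p - 2))| :=
        abs_add_le _ _
    _ = 6 * p * (|u| * r ^ (2 * (-p - 1))) + 4 * p * (p + 1) * (|u| ^ 3 * r ^ (2 * (-p - 2))) := by
        simp only [abs_mul, abs_neg, abs_pow]
        rw [abs_of_pos a1, abs_of_pos a2, abs_of_pos (by linarith : 0 < p), abs_of_pos (by linarith : 0 < p+1)]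
        norm_num; ring
    _ ≤ 6 * p * (r * r ^ (2 * (-p - 1))) + 4 * p * (p + 1) * (r ^ 3 * r ^ (2 * (-p - 2))) := by
        gcongr
    _ = (6 * p + 4 * p * (p + 1)) * r ^ (-(2 * p + 1)) := by rw [e, e1]; ring
    _ ≤ _ := by gcongr

lemma phi_exists (p : ℝ) : ∃ φ : ℝ → ℝ, Measurable φ ∧
    ∀ s, 0 < s → HasDerivAt φ (-(1 / 2) * s ^ (-p)) s := by
  by_cases h : p = 1
  · refine ⟨fun s => -(1/2) * Real.log s, by fun_prop, fun s hs => ?_⟩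
    subst h
    rw [Real.rpow_neg_one]
    exact (Real.hasDerivAt_log hs.ne').const_mul _
  · refine ⟨fun s => (-(1/2) / (1 - p)) * s ^ (1 - p), by fun_prop, fun s hs => ?_⟩
    have := (Real.hasDerivAt_rpow_const (p := 1 - p) (Or.inl hs.ne')).const_mul (-(1/2) / (1 - p))
    refine this.congr_deriv ?_
    have : 1 - p ≠ 0 := sub_ne_zero.2 (Ne.symm h)
    rw [show 1 - p - 1 = -p by ring]
    field_simp

lemma phi_deriv (p : ℝ) (φ : ℝ → ℝ) (hφ : ∀ s, 0 < s → HasDerivAt φ (-(1 / 2) * s ^ (-p)) s)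
    (u v : ℝ) (h : 0 < u ^ 2 + v ^ 2) :
    HasDerivAt (fun u => φ (u ^ 2 + v ^ 2)) (-k0 p u v) u := by
  have h1 : HasDerivAt (fun u : ℝ => u ^ 2 + v ^ 2) (2 * u) u := by
    simpa using (hasDerivAt_pow 2 u).add_const (v ^ 2)
  refine ((hφ _ h).comp u h1).congr_deriv ?_
  rw [k0_eq]; ring

lemma k0_meas (p : ℝ) : Measurable (fun z : ℝ × ℝ => k0 p z.1 z.2) := by unfold k0; fun_prop
lemma k1_meas (p : ℝ) : Measurable (fun z : ℝ × ℝ => k1 p z.1 z.2) := by unfold k1; fun_prop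
lemma k2_meas (p : ℝ) : Measurable (fun z : ℝ × ℝ => k2 p z.1 z.2) := by unfold k2; fun_prop

lemma k0_def (p u v : ℝ) : k0 p u v = u / (u ^ 2 + v ^ 2) ^ p := rfl
lemma k1_def (p u v : ℝ) : k1 p u v =
  (u ^ 2 + v ^ 2) ^ (-p) - 2 * p * u ^ 2 * (u ^ 2 + v ^ 2) ^ (-p - 1) := rfl

attribute [irreducible] k0 k1 k2

lemma diffInt {X : Type*} [MeasurableSpace X] (ν : Measure X) [IsFiniteMeasure ν]
    (f f' : ℝ → X → ℝ) (J : Set ℝ) (hJ : IsOpen J) (a : ℝ) (ha : a ∈ J)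
    (hm : ∀ a, AEStronglyMeasurable (f a) ν) (hm' : AEStronglyMeasurable (f' a) ν) (B : ℝ)
    (hint : Integrable (f a) ν) (hb : ∀ᵐ x ∂ν, ∀ b ∈ J, |f' b x| ≤ B)
    (hd : ∀ᵐ x ∂ν, ∀ b ∈ J, HasDerivAt (fun b => f b x) (f' b x) b) :
    HasDerivAt (fun b => ∫ x, f b x ∂ν) (∫ x, f' a x ∂ν) a :=
  (hasDerivAt_integral_of_dominated_loc_of_deriv_le (bound := fun _ => B) (hJ.mem_nhds ha)
    (Eventually.of_forall hm) hint hm' hb (integrable_const B) hd).2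

/-- general differentiation for the kernels -/
lemma diffK {X : Type*} [MeasurableSpace X] (ν : Measure X) (S : Set X) (hS : MeasurableSet S)
    (hfin : ν S < ⊤) (P Q : X → ℝ) (hP : Measurable P) (hQ : Measurable Q)
    (p : ℝ) (hp : 1 ≤ p) (J : Set ℝ) (hJ : IsOpen J) (d : ℝ) (hd : 0 < d)
    (h : ∀ b ∈ J, ∀ x ∈ S, d ^ 2 ≤ (b - P x) ^ 2 + Q x ^ 2) (a : ℝ) (ha : a ∈ J) :
    IntegrableOn (fun x => k0 p (a - P x) (Q x)) S ν ∧
    IntegrableOn (fun x => k1 p (a - P x) (Q x)) S ν ∧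
    HasDerivAt (fun b => ∫ x in S, k0 p (b - P x) (Q x) ∂ν) (∫ x in S, k1 p (a - P x) (Q x) ∂ν) a ∧
    HasDerivAt (fun b => ∫ x in S, k1 p (b - P x) (Q x) ∂ν) (∫ x in S, k2 p (a - P x) (Q x) ∂ν) a := by
  have : IsFiniteMeasure (ν.restrict S) := ⟨by simpa using hfin⟩
  have m0 : ∀ b, Measurable (fun x => k0 p (b - P x) (Q x)) := fun b =>
    (k0_meas p).comp ((measurable_const.sub hP).prodMk hQ)
  have m1 : ∀ b, Measurable (fun x => k1 p (b - P x) (Q x)) := fun b =>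
    (k1_meas p).comp ((measurable_const.sub hP).prodMk hQ)
  have m2 : ∀ b, Measurable (fun x => k2 p (b - P x) (Q x)) := fun b =>
    (k2_meas p).comp ((measurable_const.sub hP).prodMk hQ)
  have hd2 : 0 < d ^ 2 := by positivity
  have i0 : IntegrableOn (fun x => k0 p (a - P x) (Q x)) S ν :=
    Integrable.of_bound (m0 a).aestronglyMeasurable (d ^ (-(2 * p - 1)))
      (ae_restrict_of_forall_mem hS fun x hx => k0_bound p _ _ d hp hd (h a ha x hx))
  have i1 : IntegrableOn (fun x => k1 p (a - P x) (Q x)) S ν :=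
    Integrable.of_bound (m1 a).aestronglyMeasurable ((1 + 2 * p) * d ^ (-(2 * p)))
      (ae_restrict_of_forall_mem hS fun x hx => k1_bound p _ _ d hp hd (h a ha x hx))
  refine ⟨i0, i1, ?_, ?_⟩
  · refine diffInt (ν.restrict S) (fun b x => k0 p (b - P x) (Q x)) (fun b x => k1 p (b - P x) (Q x)) J hJ a ha
      (fun b => (m0 b).aestronglyMeasurable) (m1 a).aestronglyMeasurable
      ((1 + 2 * p) * d ^ (-(2 * p))) i0
      (ae_restrict_of_forall_mem hS fun x hx b hb => k1_bound p _ _ d hp hd (h b hb x hx))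
      (ae_restrict_of_forall_mem hS fun x hx b hb => ?_)
    exact HasDerivAt.comp_sub_const (f := fun u => k0 p u (Q x)) b (P x) (k0_deriv p _ _ (hd2.trans_le (h b hb x hx)))
  · refine diffInt (ν.restrict S) (fun b x => k1 p (b - P x) (Q x)) (fun b x => k2 p (b - P x) (Q x)) J hJ a ha
      (fun b => (m1 b).aestronglyMeasurable) (m2 a).aestronglyMeasurable
      ((6 * p + 4 * p * (p + 1)) * d ^ (-(2 * p + 1))) i1
      (ae_restrict_of_forall_mem hS fun x hx b hb => k2_bound p _ _ d hp hd (h b hb x hx))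
      (ae_restrict_of_forall_mem hS fun x hx b hb => ?_)
    exact HasDerivAt.comp_sub_const (f := fun u => k1 p u (Q x)) b (P x) (k1_deriv p _ _ (hd2.trans_le (h b hb x hx)))

lemma diffPhi (p : ℝ) (hp : 1 ≤ p) (φ : ℝ → ℝ) (hφm : Measurable φ)
    (hφ : ∀ s, 0 < s → HasDerivAt φ (-(1 / 2) * s ^ (-p)) s) (H : ℝ) (hH : 0 ≤ H)
    (g : ℝ → ℝ) (hg : Continuous g) (J : Set ℝ) (hJ : IsOpen J) (d : ℝ) (hd : 0 < d)
    (h : ∀ b ∈ J, ∀ x ∈ Set.Icc 0 H, d ^ 2 ≤ (b - g x) ^ 2 + x ^ 2) (a : ℝ) (ha : a ∈ J) :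
    IntegrableOn (fun x => φ ((a - g x) ^ 2 + x ^ 2)) (Set.Ioc 0 H) ∧
    HasDerivAt (fun b => ∫ x in Set.Ioc 0 H, φ ((b - g x) ^ 2 + x ^ 2))
      (∫ x in Set.Ioc 0 H, -k0 p (a - g x) x) a := by
  have hd2 : 0 < d ^ 2 := by positivity
  have hsub : ∀ x ∈ Set.Ioc 0 H, x ∈ Set.Icc 0 H := fun x hx => Set.Ioc_subset_Icc_self hx
  have gm := hg.measurable
  have i0 : IntegrableOn (fun x => φ ((a - g x) ^ 2 + x ^ 2)) (Set.Ioc 0 H) := by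
    refine (ContinuousOn.integrableOn_Icc ?_).mono_set Set.Ioc_subset_Icc_self
    intro x hx
    have : ContinuousAt φ ((a - g x) ^ 2 + x ^ 2) := (hφ _ (hd2.trans_le (h a ha x hx))).continuousAt
    refine ContinuousAt.continuousWithinAt ?_
    exact ContinuousAt.comp (f := fun x => (a - g x) ^ 2 + x ^ 2) this (by fun_prop)
  refine ⟨i0, ?_⟩
  refine diffInt (volume.restrict (Set.Ioc 0 H)) (fun b x => φ ((b - g x) ^ 2 + x ^ 2)) (fun b x => -k0 p (b - g x) x) J hJ a ha
      (fun b => (by fun_prop : Measurable _).aestronglyMeasurable)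
      (((k0_meas p).comp ((measurable_const.sub gm).prodMk measurable_id)).neg).aestronglyMeasurable (d ^ (-(2 * p - 1))) i0
      (ae_restrict_of_forall_mem measurableSet_Ioc fun x hx b hb => ?_)
      (ae_restrict_of_forall_mem measurableSet_Ioc fun x hx b hb => ?_)
  · rw [abs_neg]; exact k0_bound p _ _ d hp hd (h b hb x (hsub x hx))
  · exact HasDerivAt.comp_sub_const (f := fun u => φ (u ^ 2 + x ^ 2)) b (g x) (phi_deriv p φ hφ _ _ (hd2.trans_le (h b hb x (hsub x hx))))


noncomputable def Wf (α β θ : ℝ) : ℝ :=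
  cos θ ^ α * (1 - (2 + α) * (cos θ - β * sin θ) ^ 2 / (β ^ 2 + 1))

lemma cos_rpow_cont (α : ℝ) (h : 0 ≤ α) : Continuous (fun θ => cos θ ^ α) :=
  Real.continuous_cos.rpow_const (fun _ => Or.inr h)

lemma Wf_cont (α β : ℝ) (h : 0 ≤ α) : Continuous (Wf α β) := by
  unfold Wf
  have := cos_rpow_cont α h
  fun_prop

lemma Z_deriv (α β θ : ℝ) (h : 0 ≤ α) (hc : 0 ≤ cos θ) :
    HasDerivAt (fun θ => -(cos θ ^ (α + 1) * (2 * β * cos θ + (1 - β ^ 2) * sin θ)) / (β ^ 2 + 1))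
      (Wf α β θ + α / (β ^ 2 + 1) * cos θ ^ α) θ := by
  have h1 := (Real.hasDerivAt_cos θ).rpow_const (p := α + 1) (Or.inr (by linarith))
  have h2 := ((Real.hasDerivAt_cos θ).const_mul (2 * β)).add
    ((Real.hasDerivAt_sin θ).const_mul (1 - β ^ 2))
  have := ((h1.mul h2).neg).div_const (β ^ 2 + 1)
  refine this.congr_deriv ?_
  unfold Wf
  have e : cos θ ^ (α + 1) = cos θ ^ α * cos θ := by
    rw [Real.rpow_add' hc (by linarith), Real.rpow_one]
  have q : β ^ 2 + 1 ≠ 0 := by positivity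
  simp only [Pi.add_apply]
  rw [e, show α + 1 - 1 = α by ring]
  have sc := Real.sin_sq_add_cos_sq θ
  field_simp
  rw [← sub_eq_zero]
  linear_combination ((cos θ ^ α)*(1+β^2+α)) * sc

lemma W_int (α β : ℝ) (h : 0 ≤ α) :
    (β ^ 2 + 1) ^ (α / 2) * (∫ θ in (-Real.arctan β)..(Real.pi / 2), Wf α β θ) = F α β := by
  have hle : -arctan β ≤ π / 2 := by linarith [Real.neg_pi_div_two_lt_arctan β]
  have cc := cos_rpow_cont α h
  have wc := Wf_cont α β h
  have ftc := intervalIntegral.integral_eq_sub_of_hasDerivAt (a := -arctan β) (b := π / 2)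
    (f := fun θ => -(cos θ ^ (α + 1) * (2 * β * cos θ + (1 - β ^ 2) * sin θ)) / (β ^ 2 + 1))
    (f' := fun θ => Wf α β θ + α / (β ^ 2 + 1) * cos θ ^ α)
    (fun θ hθ => by
      rw [Set.uIcc_of_le hle] at hθ
      exact Z_deriv α β θ h (Real.cos_nonneg_of_mem_Icc
        ⟨by linarith [hθ.1, Real.arctan_lt_pi_div_two β], hθ.2⟩))
    (by apply Continuous.intervalIntegrable; fun_prop)
  rw [intervalIntegral.integral_add (wc.intervalIntegrable _ _)
    (by apply Continuous.intervalIntegrable; fun_prop), intervalIntegral.integral_const_mul] at ftc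
  have hq : (0:ℝ) < β ^ 2 + 1 := by positivity
  have hcos : cos (arctan β) = (β ^ 2 + 1) ^ (-(1/2) : ℝ) := by
    rw [Real.cos_arctan, Real.sqrt_eq_rpow, Real.rpow_neg hq.le, one_div, add_comm]
  have hsin : sin (arctan β) = β * cos (arctan β) := by
    rw [Real.cos_arctan, Real.sin_arctan]; ring
  simp only [Real.cos_pi_div_two, Real.cos_neg, Real.sin_neg, hsin] at ftc
  rw [Real.zero_rpow (by linarith), zero_mul, neg_zero, zero_div] at ftc
  have e : (β ^ 2 + 1) ^ (α / 2) * (cos (arctan β) ^ (α + 1) * cos (arctan β)) = (β ^ 2 + 1)⁻¹ := by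
    have cp := Real.cos_arctan_pos β
    have : cos (arctan β) ^ (α + 1) * cos (arctan β) = cos (arctan β) ^ (α + 2) := by
      rw [← Real.rpow_add_one cp.ne']; ring_nf
    rw [this, hcos, ← Real.rpow_mul hq.le, ← Real.rpow_add hq, ← Real.rpow_neg_one]
    congr 1; ring
  have e2 : (β ^ 2 + 1) ^ (1 - α / 2) = (β ^ 2 + 1) / (β ^ 2 + 1) ^ (α / 2) := by
    rw [Real.rpow_sub hq, Real.rpow_one]
  unfold F
  rw [e2]
  have hq' : (0:ℝ) < (β ^ 2 + 1) ^ (α / 2) := by positivity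
  set I := ∫ θ in (-Real.arctan β)..(Real.pi / 2), Wf α β θ
  set K := ∫ θ in (-Real.arctan β)..(Real.pi / 2), Real.cos θ ^ α
  have hI : I = (cos (arctan β) ^ (α + 1) * cos (arctan β)) * β - α / (β ^ 2 + 1) * K := by
    have : I = 0 - -(cos (arctan β) ^ (α + 1) * (2 * β * cos (arctan β) + (1 - β ^ 2) * -(β * cos (arctan β)))) / (β ^ 2 + 1) - α / (β ^ 2 + 1) * K := by linarith
    rw [this]; field_simp; ring
  rw [hI, mul_sub, ← mul_assoc, e]
  field_simp

lemma k1_sub (α β a θ : ℝ) (ha : 0 < a) (hc : 0 < cos θ) :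
    k1 (1 + α / 2) (a - β * (a * (β + tan θ) / (β ^ 2 + 1))) (a * (β + tan θ) / (β ^ 2 + 1)) *
      (a / (β ^ 2 + 1) * (1 / cos θ ^ 2)) =
    a ^ (-(1 + α)) * (β ^ 2 + 1) ^ (α / 2) * Wf α β θ := by
  have hq : (0:ℝ) < β ^ 2 + 1 := by positivity
  have sc := Real.sin_sq_add_cos_sq θ
  rw [k1_def, Real.tan_eq_sin_div_cos]
  unfold Wf
  set c := cos θ
  set s := sin θ
  have hu : a - β * (a * (β + s / c) / (β ^ 2 + 1)) = a * (c - β * s) / ((β ^ 2 + 1) * c) := by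
    field_simp; ring
  have hS : (a * (c - β * s) / ((β ^ 2 + 1) * c)) ^ 2 + (a * (β + s / c) / (β ^ 2 + 1)) ^ 2
      = a ^ 2 / ((β ^ 2 + 1) * c ^ 2) := by
    field_simp
    linear_combination (β ^ 2 + 1) * sc
  rw [hu, hS]
  have hS0 : 0 < a ^ 2 / ((β ^ 2 + 1) * c ^ 2) := by positivity
  have e1 : (a ^ 2 / ((β ^ 2 + 1) * c ^ 2)) ^ (-(1 + α / 2) - 1) =
    (a ^ 2 / ((β ^ 2 + 1) * c ^ 2)) ^ (-(1 + α / 2)) / (a ^ 2 / ((β ^ 2 + 1) * c ^ 2)) := by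
    rw [Real.rpow_sub hS0, Real.rpow_one]
  have e2 : (a ^ 2 / ((β ^ 2 + 1) * c ^ 2)) ^ (-(1 + α / 2)) =
      a ^ (-(1 + α)) * (β ^ 2 + 1) ^ (α / 2) * c ^ α * ((β ^ 2 + 1) * c ^ 2 / a) := by
    rw [Real.rpow_neg hS0.le, Real.div_rpow (by positivity) (by positivity),
      Real.mul_rpow (by positivity) (by positivity)]
    have a1 : (a ^ 2) ^ (1 + α / 2) = a ^ (1 + α) * a := by
      rw [← Real.rpow_natCast, ← Real.rpow_mul ha.le, ← Real.rpow_add_one ha.ne']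
      congr 1; push_cast; ring
    have a2 : (c ^ 2) ^ (1 + α / 2) = c ^ α * c ^ 2 := by
      rw [← Real.rpow_natCast, ← Real.rpow_mul hc.le, ← Real.rpow_add hc]
      congr 1; push_cast; ring
    have a3 : (β ^ 2 + 1) ^ (1 + α / 2) = (β ^ 2 + 1) ^ (α / 2) * (β ^ 2 + 1) := by
      rw [← Real.rpow_add_one hq.ne']; congr 1; ring
    rw [a1, a2, a3, Real.rpow_neg ha.le]
    field_simp
  rw [e1, e2]
  field_simp

lemma k1_int (α β a T : ℝ) (ha : 0 < a) (hT : 0 ≤ T) :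
    ∫ y in (0:ℝ)..T, k1 (1 + α / 2) (a - β * y) y =
      a ^ (-(1 + α)) * (β ^ 2 + 1) ^ (α / 2) *
        ∫ θ in (-arctan β)..(arctan ((β ^ 2 + 1) * T / a - β)), Wf α β θ := by
  have hq : (0:ℝ) < β ^ 2 + 1 := by positivity
  set t1 := arctan ((β ^ 2 + 1) * T / a - β)
  have hle : -arctan β ≤ t1 := by
    rw [← Real.arctan_neg]; apply Real.arctan_strictMono.monotone
    have : 0 ≤ (β ^ 2 + 1) * T / a := by positivity
    linarith
  have hcos : ∀ θ ∈ Set.uIcc (-arctan β) t1, 0 < cos θ := by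
    intro θ hθ
    rw [Set.uIcc_of_le hle] at hθ
    exact Real.cos_pos_of_mem_Ioo ⟨by linarith [hθ.1, Real.arctan_lt_pi_div_two β],
      by linarith [hθ.2, Real.arctan_lt_pi_div_two ((β ^ 2 + 1) * T / a - β)]⟩
  have cv := intervalIntegral.integral_comp_mul_deriv' (a := -arctan β) (b := t1)
    (f := fun θ => a * (β + tan θ) / (β ^ 2 + 1))
    (f' := fun θ => a / (β ^ 2 + 1) * (1 / cos θ ^ 2))
    (g := fun y => k1 (1 + α / 2) (a - β * y) y)
    (fun θ hθ => by
      have := ((((Real.hasDerivAt_tan (hcos θ hθ).ne').const_add β).const_mul a).div_const (β^2+1))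
      exact this.congr_deriv (by ring))
    (by
      apply ContinuousOn.mul continuousOn_const
      apply ContinuousOn.div continuousOn_const (by fun_prop)
      intro θ hθ; exact (pow_pos (hcos θ hθ) 2).ne')
    (by
      apply Continuous.continuousOn
      have hs : ∀ y : ℝ, (a - β * y) ^ 2 + y ^ 2 ≠ 0 := by
        intro y h0
        have h1 : y = 0 := by nlinarith [sq_nonneg (a - β * y), sq_nonneg y]
        subst h1
        simp at h0; exact ha.ne' h0
      simp only [k1_def]
      have c1 : ∀ t : ℝ, Continuous fun y : ℝ => ((a - β * y) ^ 2 + y ^ 2) ^ t := fun t =>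
        Continuous.rpow_const (by fun_prop) (fun y => Or.inl (hs y))
      have := c1 (-(1 + α / 2))
      have := c1 (-(1 + α / 2) - 1)
      fun_prop)
  have f0 : a * (β + tan (-arctan β)) / (β ^ 2 + 1) = 0 := by
    rw [Real.tan_neg, Real.tan_arctan]; simp
  have f1 : a * (β + tan t1) / (β ^ 2 + 1) = T := by
    rw [Real.tan_arctan]; field_simp; ring
  simp only [f0, f1] at cv
  rw [← cv, ← intervalIntegral.integral_const_mul]
  apply intervalIntegral.integral_congr
  intro θ hθ
  exact k1_sub α β a θ ha (hcos θ hθ)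

lemma arctan_le_self' (x : ℝ) (hx : 0 ≤ x) : arctan x ≤ x := by
  have := Real.le_tan (Real.arctan_nonneg.2 hx) (Real.arctan_lt_pi_div_two x)
  rwa [Real.tan_arctan] at this

lemma tail (α β a M : ℝ) (hα : 0 ≤ α) (hβ : 0 ≤ β) (hM : 0 < M) (ha : 0 < a) (haM : a ≤ M / 2) :
    |(∫ y in (0:ℝ)..(M / max 1 β), k1 (1 + α / 2) (a - β * y) y) - F α β / a ^ (1 + α)| ≤
      (3 + α) * 2 ^ (1 + α) / M ^ (1 + α) := by
  have hq : (0:ℝ) < β ^ 2 + 1 := by positivity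
  set m := max 1 β with hm
  have m1 : 1 ≤ m := le_max_left _ _
  have mβ : β ≤ m := le_max_right _ _
  have m0 : 0 < m := by linarith
  have hmq : m ^ 2 ≤ β ^ 2 + 1 := by
    rcases max_choice 1 β with h | h <;> rw [hm, h] <;> nlinarith
  set H := M / m
  have hH : 0 < H := by positivity
  rw [k1_int α β a H ha hH.le, ← W_int α β hα]
  set t1 := arctan ((β ^ 2 + 1) * H / a - β) with ht1
  have wc := Wf_cont α β hα
  have hsplit : (∫ θ in (-arctan β)..(π/2), Wf α β θ) =
      (∫ θ in (-arctan β)..t1, Wf α β θ) + ∫ θ in t1..(π/2), Wf α β θ :=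
    (intervalIntegral.integral_add_adjacent_intervals (wc.intervalIntegrable _ _)
      (wc.intervalIntegrable _ _)).symm
  rw [hsplit, Real.rpow_neg ha.le]
  set w := 2 * a / ((β ^ 2 + 1) * H) with hw
  have w0 : 0 < w := by positivity
  have ht1le : t1 ≤ π / 2 := (Real.arctan_lt_pi_div_two _).le
  have hx : w⁻¹ ≤ (β ^ 2 + 1) * H / a - β := by
    have h1 : 2 * β ≤ (β ^ 2 + 1) * H / a := by
      rw [le_div_iff₀ ha]
      have : H * m = M := by simp only [H]; field_simp
      have h2 : 2 * a ≤ H * m := by linarith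
      have h3 : m * β ≤ β ^ 2 + 1 := by
        nlinarith
      calc 2 * β * a = (2 * a) * β := by ring
        _ ≤ H * m * β := by gcongr
        _ = H * (m * β) := by ring
        _ ≤ H * (β ^ 2 + 1) := by gcongr
        _ = _ := by ring
    have h2 : w⁻¹ = ((β ^ 2 + 1) * H / a) / 2 := by rw [hw]; field_simp
    rw [h2]; linarith
  have hpi : π / 2 - t1 ≤ w := by
    have h1 : arctan w⁻¹ ≤ t1 := Real.arctan_strictMono.monotone hx
    have h2 := Real.arctan_inv_of_pos w0
    have h3 := arctan_le_self' w w0.le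
    linarith
  have t1pos : 0 < t1 := Real.arctan_pos.2 ((inv_pos.2 w0).trans_le hx)
  have hbound : |∫ θ in t1..(π/2), Wf α β θ| ≤ ((3 + α) * w ^ α) * |π / 2 - t1| := by
    rw [← Real.norm_eq_abs]
    apply intervalIntegral.norm_integral_le_of_norm_le_const
    intro θ hθ
    rw [Set.uIoc_of_le ht1le] at hθ
    have c0 : 0 ≤ cos θ := Real.cos_nonneg_of_mem_Icc ⟨by linarith [hθ.1, Real.pi_pos], hθ.2⟩
    have cw : cos θ ≤ w := by
      rw [← Real.sin_pi_div_two_sub]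
      have := Real.sin_le (x := π / 2 - θ) (by linarith [hθ.2])
      linarith [hθ.1]
    have cwα : cos θ ^ α ≤ w ^ α := Real.rpow_le_rpow c0 cw hα
    have cα0 : 0 ≤ cos θ ^ α := Real.rpow_nonneg c0 _
    have hX : (cos θ - β * sin θ) ^ 2 / (β ^ 2 + 1) ≤ 1 := by
      rw [div_le_one hq]
      nlinarith [Real.sin_sq_add_cos_sq θ, sq_nonneg (β * cos θ + sin θ)]
    have hX0 : 0 ≤ (cos θ - β * sin θ) ^ 2 / (β ^ 2 + 1) := by positivity
    unfold Wf
    rw [Real.norm_eq_abs, abs_mul, abs_of_nonneg cα0, mul_comm (3 + α)]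
    have : |1 - (2 + α) * (cos θ - β * sin θ) ^ 2 / (β ^ 2 + 1)| ≤ 3 + α := by
      rw [mul_div_assoc, abs_le]
      constructor <;> nlinarith
    exact mul_le_mul cwα this (abs_nonneg _) (by positivity)
  rw [abs_of_nonneg (by linarith : 0 ≤ π / 2 - t1)] at hbound
  set I2 := ∫ θ in t1..(π/2), Wf α β θ
  set I1 := ∫ θ in (-arctan β)..t1, Wf α β θ
  have e : (a ^ (1 + α))⁻¹ * (β ^ 2 + 1) ^ (α / 2) * I1 - (β ^ 2 + 1) ^ (α / 2) * (I1 + I2) / a ^ (1 + α)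
    = -((a ^ (1 + α))⁻¹ * (β ^ 2 + 1) ^ (α / 2) * I2) := by ring
  rw [e, abs_neg, abs_mul, abs_of_pos (by positivity)]
  have hb2 : |I2| ≤ (3 + α) * w ^ (1 + α) := by
    refine hbound.trans ?_
    rw [add_comm 1 α, Real.rpow_add_one w0.ne', ← mul_assoc]
    gcongr
  have hw2 : w ^ (1 + α) = 2 ^ (1 + α) * a ^ (1 + α) / ((β ^ 2 + 1) ^ (1 + α) * H ^ (1 + α)) := by
    rw [hw, Real.div_rpow (by positivity) (by positivity), Real.mul_rpow (by norm_num) ha.le,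
      Real.mul_rpow hq.le hH.le]
  have hH2 : H ^ (1 + α) = M ^ (1 + α) / m ^ (1 + α) := Real.div_rpow hM.le m0.le _
  have hmm : m ^ (1 + α) ≤ (β ^ 2 + 1) ^ ((1 + α) / 2) := by
    have : m ^ (1 + α) = (m ^ 2) ^ ((1 + α) / 2) := by
      rw [← Real.rpow_natCast, ← Real.rpow_mul m0.le]; congr 1; push_cast; ring
    rw [this]
    exact Real.rpow_le_rpow (by positivity) hmq (by linarith)
  have hqq : (β ^ 2 + 1) ^ (α / 2) * (β ^ 2 + 1) ^ ((1 + α) / 2) ≤ (β ^ 2 + 1) ^ (1 + α) := by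
    rw [← Real.rpow_add hq]
    exact Real.rpow_le_rpow_of_exponent_le (by nlinarith [sq_nonneg β]) (by linarith)
  calc _ ≤ (a ^ (1 + α))⁻¹ * (β ^ 2 + 1) ^ (α / 2) * ((3 + α) * w ^ (1 + α)) := by gcongr
    _ = ((3 + α) * 2 ^ (1 + α) / M ^ (1 + α)) * (((β ^ 2 + 1) ^ (α / 2) * m ^ (1 + α)) / (β ^ 2 + 1) ^ (1 + α)) := by
        rw [hw2, hH2]; field_simp
    _ ≤ ((3 + α) * 2 ^ (1 + α) / M ^ (1 + α)) * 1 := by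
        gcongr
        rw [div_le_one (by positivity)]
        refine le_trans ?_ hqq
        gcongr
    _ = _ := mul_one _


def Tset (β M : ℝ) : Set (ℝ × ℝ) :=
  {y | 0 < y.1 ∧ 0 < y.2 ∧ β * y.2 < y.1 ∧ y.1 ≤ M ∧ y.2 ≤ M}

def Bset (a ε : ℝ) : Set (ℝ × ℝ) := {y | (y.1 - a) ^ 2 + y.2 ^ 2 ≤ ε ^ 2}

lemma Tset_meas (β M : ℝ) : MeasurableSet (Tset β M) := by
  have e : Tset β M = {y : ℝ × ℝ | 0 < y.1} ∩ ({y : ℝ × ℝ | 0 < y.2} ∩ ({y : ℝ × ℝ | β * y.2 < y.1} ∩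
      ({y : ℝ × ℝ | y.1 ≤ M} ∩ {y : ℝ × ℝ | y.2 ≤ M}))) := by
    ext y; simp [Tset]
  rw [e]
  have h1 : MeasurableSet {y : ℝ × ℝ | 0 < y.1} := measurableSet_lt (by fun_prop) (by fun_prop)
  have h2 : MeasurableSet {y : ℝ × ℝ | 0 < y.2} := measurableSet_lt (by fun_prop) (by fun_prop)
  have h3 : MeasurableSet {y : ℝ × ℝ | β * y.2 < y.1} := measurableSet_lt (by fun_prop) (by fun_prop)
  have h4 : MeasurableSet {y : ℝ × ℝ | y.1 ≤ M} := measurableSet_le (by fun_prop) (by fun_prop)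
  have h5 : MeasurableSet {y : ℝ × ℝ | y.2 ≤ M} := measurableSet_le (by fun_prop) (by fun_prop)
  exact h1.inter (h2.inter (h3.inter (h4.inter h5)))

lemma Bset_meas (a ε : ℝ) : MeasurableSet (Bset a ε) :=
  measurableSet_le (by fun_prop) (by fun_prop)

lemma Tset_fin (β M : ℝ) : volume (Tset β M) < ⊤ := by
  refine (measure_mono (t := Set.Icc ((0:ℝ), (0:ℝ)) (M, M)) ?_).trans_lt isCompact_Icc.measure_lt_top
  rintro ⟨x, y⟩ ⟨h1, h2, h3, h4, h5⟩
  exact ⟨⟨h1.le, h2.le⟩, ⟨h4, h5⟩⟩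

lemma k0_cont_x (p a y : ℝ) (hy : 0 < y) : Continuous (fun x => k0 p (a - x) y) := by
  simp only [k0_eq]
  have : Continuous fun x : ℝ => ((a - x) ^ 2 + y ^ 2) ^ (-p) :=
    Continuous.rpow_const (by fun_prop) (fun x => Or.inl (by positivity))
  fun_prop

lemma k0_ftc (p : ℝ) (φ : ℝ → ℝ)
    (hφ : ∀ s, 0 < s → HasDerivAt φ (-(1 / 2) * s ^ (-p)) s) (a y c d : ℝ) (hy : 0 < y) :
    ∫ x in c..d, k0 p (a - x) y = φ ((a - d) ^ 2 + y ^ 2) - φ ((a - c) ^ 2 + y ^ 2) := by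
  refine intervalIntegral.integral_eq_sub_of_hasDerivAt
    (f := fun x => φ ((a - x) ^ 2 + y ^ 2)) (fun x _ => ?_)
    ((k0_cont_x p a y hy).intervalIntegrable _ _)
  have := HasDerivAt.comp_const_sub (f := fun u => φ (u ^ 2 + y ^ 2)) a x
    (phi_deriv p φ hφ (a - x) y (by positivity))
  simpa using this

lemma inner_int (p : ℝ) (φ : ℝ → ℝ)
    (hφ : ∀ s, 0 < s → HasDerivAt φ (-(1 / 2) * s ^ (-p)) s) (a y β M ε : ℝ) (hy : 0 < y)
    (hβ : 0 ≤ β) (hε : 0 < ε) (h1 : (1 + β) * ε < a) (h2 : a + ε ≤ M) (h3 : β * y ≤ M) :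
    ∫ x in Set.Ioc (β * y) M \ {x | (x - a) ^ 2 + y ^ 2 ≤ ε ^ 2}, k0 p (a - x) y =
      φ ((a - M) ^ 2 + y ^ 2) - φ ((a - β * y) ^ 2 + y ^ 2) := by
  rw [← k0_ftc p φ hφ a y (β * y) M hy, intervalIntegral.integral_of_le h3]
  by_cases hyε : y ≤ ε
  · set s := √(ε ^ 2 - y ^ 2) with hs
    have hnn : 0 ≤ ε ^ 2 - y ^ 2 := by nlinarith
    have s0 : 0 ≤ s := Real.sqrt_nonneg _
    have ss : s ^ 2 = ε ^ 2 - y ^ 2 := Real.sq_sqrt hnn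
    have sε : s ≤ ε := by nlinarith
    have hset : {x | (x - a) ^ 2 + y ^ 2 ≤ ε ^ 2} = Set.Icc (a - s) (a + s) := by
      ext x
      simp only [Set.mem_ofPred_eq, Set.mem_Icc]
      constructor
      · intro h
        have : |x - a| ≤ s := abs_le_of_sq_le_sq (by linarith) s0
        rw [abs_le] at this
        constructor <;> linarith
      · rintro ⟨h, h'⟩
        nlinarith
    rw [hset, setIntegral_sdiff measurableSet_Icc]
    · rw [integral_Icc_eq_integral_Ioc, ← intervalIntegral.integral_of_le (by linarith : a - s ≤ a + s),
        k0_ftc p φ hφ a y (a - s) (a + s) hy]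
      have e : (a - (a + s)) ^ 2 = (a - (a - s)) ^ 2 := by ring
      rw [e]; ring
    · exact ((k0_cont_x p a y hy).integrableOn_Icc).mono_set Set.Ioc_subset_Icc_self
    · intro x hx
      have : β * y ≤ β * ε := by gcongr
      exact ⟨by nlinarith [hx.1], by linarith [hx.2]⟩
  · have hset : {x | (x - a) ^ 2 + y ^ 2 ≤ ε ^ 2} = ∅ := by
      ext x
      simp only [Set.mem_ofPred_eq, Set.mem_empty_iff_false, iff_false, not_le]
      nlinarith [sq_nonneg (x - a)]
    rw [hset, Set.sdiff_empty]

lemma TB_int (p : ℝ) (hp : 1 ≤ p) (a β M ε : ℝ) (hε : 0 < ε) :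
    IntegrableOn (fun y : ℝ × ℝ => k0 p (a - y.1) y.2) (Tset β M \ Bset a ε) := by
  have hm : MeasurableSet (Tset β M \ Bset a ε) := (Tset_meas β M).diff (Bset_meas a ε)
  have hf : volume (Tset β M \ Bset a ε) < ⊤ :=
    (measure_mono Set.sdiff_subset).trans_lt (Tset_fin β M)
  have : IsFiniteMeasure (volume.restrict (Tset β M \ Bset a ε)) := ⟨by simpa using hf⟩
  refine Integrable.of_bound
    ((k0_meas p).comp ((measurable_const.sub measurable_fst).prodMk measurable_snd)).aestronglyMeasurable
    (ε ^ (-(2 * p - 1))) (ae_restrict_of_forall_mem hm fun y hy => ?_)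
  refine k0_bound p _ _ ε hp hε ?_
  have := hy.2
  simp only [Bset, Set.mem_ofPred_eq, not_le] at this
  nlinarith

lemma pv_const (p : ℝ) (hp : 1 ≤ p) (φ : ℝ → ℝ)
    (hφ : ∀ s, 0 < s → HasDerivAt φ (-(1 / 2) * s ^ (-p)) s) (a β M ε : ℝ) (hM : 0 < M)
    (hβ : 0 ≤ β) (hε : 0 < ε) (h1 : (1 + β) * ε < a) (h2 : a + ε ≤ M) :
    ∫ y in Tset β M \ Bset a ε, k0 p (a - y.1) y.2 =
      ∫ y in Set.Ioc 0 (M / max 1 β),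
        (φ ((a - M) ^ 2 + y ^ 2) - φ ((a - β * y) ^ 2 + y ^ 2)) := by
  have hm : MeasurableSet (Tset β M \ Bset a ε) := (Tset_meas β M).diff (Bset_meas a ε)
  have hint := TB_int p hp a β M ε hε
  rw [← integral_indicator hm]
  rw [← integrable_indicator_iff hm] at hint
  rw [Measure.volume_eq_prod] at hint ⊢
  rw [integral_prod_symm _ hint, ← integral_indicator measurableSet_Ioc]
  set H := M / max 1 β with hH
  have m0 : 0 < max 1 β := lt_of_lt_of_le one_pos (le_max_left _ _)
  apply integral_congr_ae
  have hne : ∀ᵐ y : ℝ, y ≠ H := by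
    simp [ae_iff, measure_singleton]
  filter_upwards [hne] with y hyH
  by_cases hy : y ∈ Set.Ioc 0 H
  · rw [Set.indicator_of_mem hy]
    have hyl : y < H := lt_of_le_of_ne hy.2 hyH
    rw [hH, lt_div_iff₀ m0] at hyl
    have hy1 : y ≤ M := by
      have : y * 1 ≤ y * max 1 β := by
        have := hy.1; gcongr; exact le_max_left _ _
      linarith
    have hy2 : β * y ≤ M := by
      have : y * β ≤ y * max 1 β := by
        have := hy.1; gcongr; exact le_max_right _ _
      linarith
    rw [← inner_int p φ hφ a y β M ε hy.1 hβ hε h1 h2 hy2]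
    rw [← integral_indicator]
    · congr 1
      ext x
      have hy0 : 0 < y := hy.1
      have hβy : 0 ≤ β * y := by positivity
      have hiff : (x, y) ∈ Tset β M \ Bset a ε ↔
          x ∈ Set.Ioc (β * y) M \ {x | (x - a) ^ 2 + y ^ 2 ≤ ε ^ 2} := by
        simp only [Tset, Bset, Set.mem_sdiff, Set.mem_ofPred_eq, Set.mem_Ioc]
        constructor
        · rintro ⟨⟨_, _, h3, h4, _⟩, h5⟩; exact ⟨⟨h3, h4⟩, h5⟩
        · rintro ⟨⟨h3, h4⟩, h5⟩; exact ⟨⟨by linarith, hy0, h3, h4, hy1⟩, h5⟩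
      by_cases hx : (x, y) ∈ Tset β M \ Bset a ε
      · rw [Set.indicator_of_mem hx, Set.indicator_of_mem (hiff.1 hx)]
      · rw [Set.indicator_of_notMem hx, Set.indicator_of_notMem (fun h => hx (hiff.2 h))]
    · exact measurableSet_Ioc.diff (measurableSet_le (by fun_prop) (by fun_prop))
  · rw [Set.indicator_of_notMem hy]
    have : ∀ x, (Tset β M \ Bset a ε).indicator (fun y : ℝ × ℝ => k0 p (a - y.1) y.2) (x, y) = 0 := by
      intro x
      apply Set.indicator_of_notMem
      rintro ⟨⟨_, hy0, h3, h4, h5⟩, _⟩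
      simp only at hy0 h3 h4 h5
      apply hy
      refine ⟨hy0, ?_⟩
      rw [hH, le_div_iff₀ m0]
      rcases max_choice 1 β with h | h <;> rw [h] <;> nlinarith
    simp [this]


def Qset (M : ℝ) : Set (ℝ × ℝ) := {x | x.1 ∈ Set.Icc (-M) M ∧ x.2 ∈ Set.Icc (-M) M}
def Dset (δ : ℝ) : Set (ℝ × ℝ) := {x | x.1 ^ 2 + x.2 ^ 2 ≤ δ ^ 2}

lemma Dset_meas (δ : ℝ) : MeasurableSet (Dset δ) :=
  measurableSet_le (by fun_prop) (by fun_prop)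

lemma Qset_meas (M : ℝ) : MeasurableSet (Qset M) := by
  have : Qset M = Set.Icc (-M) M ×ˢ Set.Icc (-M) M := by
    ext x; simp only [Qset, Set.mem_ofPred_eq, Set.mem_prod]
  rw [this]; exact measurableSet_Icc.prod measurableSet_Icc

lemma Dset_vol (δ : ℝ) (hδ : 0 < δ) : volume (Dset δ) ≤ ENNReal.ofReal (4 * δ ^ 2) := by
  calc volume (Dset δ) ≤ volume (Set.Icc (-δ) δ ×ˢ Set.Icc (-δ) δ) := by
        apply measure_mono
        rintro ⟨x, y⟩ h
        simp only [Dset, Set.mem_ofPred_eq] at h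
        have h1 := abs_le.1 (abs_le_of_sq_le_sq (by nlinarith [sq_nonneg y] : x ^ 2 ≤ δ ^ 2) hδ.le)
        have h2 := abs_le.1 (abs_le_of_sq_le_sq (by nlinarith [sq_nonneg x] : y ^ 2 ≤ δ ^ 2) hδ.le)
        exact ⟨h1, h2⟩
    _ = _ := by
        rw [Measure.volume_eq_prod, Measure.prod_prod, Real.volume_Icc, ← ENNReal.ofReal_mul (by linarith)]
        congr 1; ring

lemma distQ (M d b : ℝ) (y : ℝ × ℝ) (hM : 0 < M) (hb : 0 ≤ b) (hd : 0 ≤ d) (hbd : b + d ≤ M)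
    (hy : y ∉ Qset M) : d ^ 2 < (b - y.1) ^ 2 + y.2 ^ 2 := by
  simp only [Qset, Set.mem_ofPred_eq, Set.mem_Icc, not_and_or, not_le] at hy
  rcases hy with (h | h) | (h | h)
  · nlinarith [sq_nonneg y.2]
  · nlinarith [sq_nonneg y.2]
  · nlinarith [sq_nonneg (b - y.1)]
  · nlinarith [sq_nonneg (b - y.1)]

lemma distD (δ d b : ℝ) (y : ℝ × ℝ) (hδ : 0 < δ) (hd : 0 ≤ d) (hbd : δ + d ≤ b)
    (hy : y ∈ Dset δ) : d ^ 2 ≤ (b - y.1) ^ 2 + y.2 ^ 2 := by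
  simp only [Dset, Set.mem_ofPred_eq] at hy
  have h1 := abs_le.1 (abs_le_of_sq_le_sq (by nlinarith [sq_nonneg y.2] : y.1 ^ 2 ≤ δ ^ 2) hδ.le)
  nlinarith [sq_nonneg y.2]

lemma distβ (δ β b y : ℝ) (hδ : 0 < δ) (hβ : 0 ≤ β) (hb : δ ≤ b) :
    (δ / (1 + β)) ^ 2 ≤ (b - β * y) ^ 2 + y ^ 2 := by
  rw [div_pow, div_le_iff₀ (by positivity)]
  have h1 : δ ^ 2 ≤ b ^ 2 := by gcongr
  have h2 : b ^ 2 ≤ ((b - β * y) ^ 2 + y ^ 2) * (1 + β ^ 2) := by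
    nlinarith [sq_nonneg (β * (b - β * y) - y)]
  have h3 : ((b - β * y) ^ 2 + y ^ 2) * (1 + β ^ 2) ≤ ((b - β * y) ^ 2 + y ^ 2) * (1 + β) ^ 2 := by
    gcongr; nlinarith
  linarith

lemma k2_int_bound (p a d m : ℝ) (hp : 1 ≤ p) (hd : 0 < d) (hm : 0 ≤ m) (S : Set (ℝ × ℝ))
    (hS : MeasurableSet S) (hv : volume S ≤ ENNReal.ofReal m)
    (h : ∀ y ∈ S, d ^ 2 ≤ (a - y.1) ^ 2 + y.2 ^ 2) :
    |∫ y in S, k2 p (a - y.1) y.2| ≤ (6 * p + 4 * p * (p + 1)) * d ^ (-(2 * p + 1)) * m := by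
  have hf : volume S < ⊤ := hv.trans_lt ENNReal.ofReal_lt_top
  have := norm_setIntegral_le_of_norm_le_const (f := fun y : ℝ × ℝ => k2 p (a - y.1) y.2) hf
    (fun y hy => k2_bound p _ _ d hp hd (h y hy))
  refine this.trans ?_
  have h2 : volume.real S ≤ m := ENNReal.toReal_le_of_le_ofReal hm hv
  gcongr

lemma half_rpow (x t : ℝ) (hx : 0 < x) : (x / 2) ^ (-t) = 2 ^ t / x ^ t := by
  rw [Real.rpow_neg (by positivity), Real.div_rpow hx.le (by norm_num), inv_div]

lemma decomp (p a β M δ ε : ℝ) (hp : 1 ≤ p) (Ω : Set (ℝ × ℝ)) (hM : 0 < M) (hδ : 0 < δ)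
    (hε : 0 < ε) (hε1 : δ + ε < a) (hε2 : a + ε ≤ M) (hΩm : MeasurableSet Ω)
    (hΩf : volume Ω < ⊤)
    (hW : ∀ y, y ∈ Qset M → y ∉ Dset δ → (y ∈ Ω ↔ y ∈ Tset β M)) (hTQ : Tset β M ⊆ Qset M) :
    ∫ y in Ω \ Bset a ε, k0 p (a - y.1) y.2 =
      (∫ y in Ω \ Qset M, k0 p (a - y.1) y.2) + (∫ y in Ω ∩ Qset M ∩ Dset δ, k0 p (a - y.1) y.2)
       - (∫ y in Tset β M ∩ Dset δ, k0 p (a - y.1) y.2)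
       + ∫ y in Tset β M \ Bset a ε, k0 p (a - y.1) y.2 := by
  have mQ := Qset_meas M
  have mD := Dset_meas δ
  have mT := Tset_meas β M
  have mB := Bset_meas a ε
  have dQ : ∀ y, y ∉ Qset M → y ∉ Bset a ε := by
    intro y hy hb
    have := distQ M ε a y hM (by linarith) hε.le hε2 hy
    simp only [Bset, Set.mem_ofPred_eq] at hb
    nlinarith
  have dD : ∀ y, y ∈ Dset δ → y ∉ Bset a ε := by
    intro y hy hb
    have := distD δ (a - δ) a y hδ (by linarith) (by linarith) hy
    simp only [Bset, Set.mem_ofPred_eq] at hb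
    nlinarith
  set f : ℝ × ℝ → ℝ := fun y => k0 p (a - y.1) y.2
  have fi : ∀ S : Set (ℝ × ℝ), MeasurableSet S → volume S < ⊤ → (∀ y ∈ S, y ∉ Bset a ε) →
      IntegrableOn f S := by
    intro S hS hf hSB
    have : IsFiniteMeasure (volume.restrict S) := ⟨by simpa using hf⟩
    refine Integrable.of_bound
      ((k0_meas p).comp ((measurable_const.sub measurable_fst).prodMk measurable_snd)).aestronglyMeasurable
      (ε ^ (-(2 * p - 1))) (ae_restrict_of_forall_mem hS fun y hy => ?_)
    refine k0_bound p _ _ ε hp hε ?_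
    have := hSB y hy
    simp only [Bset, Set.mem_ofPred_eq, not_le] at this
    nlinarith
  have hset : Ω \ Bset a ε = (Ω \ Qset M) ∪ ((Ω ∩ Qset M ∩ Dset δ) ∪ ((Tset β M \ Bset a ε) \ (Tset β M ∩ Dset δ))) := by
    ext y
    have := hW y
    have := dQ y
    have := dD y
    have := @hTQ y
    simp only [Set.mem_sdiff, Set.mem_union, Set.mem_inter_iff]
    tauto
  have iA : IntegrableOn f (Ω \ Qset M) := fi _ (hΩm.diff mQ)
    ((measure_mono Set.sdiff_subset).trans_lt hΩf) (fun y hy => dQ y hy.2)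
  have iE : IntegrableOn f (Ω ∩ Qset M ∩ Dset δ) := fi _ ((hΩm.inter mQ).inter mD)
    ((measure_mono (fun y hy => hy.1.1)).trans_lt hΩf) (fun y hy => dD y hy.2)
  have iT : IntegrableOn f (Tset β M \ Bset a ε) := fi _ (mT.diff mB)
    ((measure_mono Set.sdiff_subset).trans_lt (Tset_fin β M)) (fun y hy => hy.2)
  have mT' : MeasurableSet ((Tset β M \ Bset a ε) \ (Tset β M ∩ Dset δ)) :=
    (mT.diff mB).diff (mT.inter mD)
  have iT' : IntegrableOn f ((Tset β M \ Bset a ε) \ (Tset β M ∩ Dset δ)) :=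
    iT.mono_set Set.sdiff_subset
  rw [hset, setIntegral_union _ (((hΩm.inter mQ).inter mD).union mT') iA (iE.union iT'),
    setIntegral_union _ mT' iE iT', setIntegral_sdiff (mT.inter mD) iT]
  · ring
  · intro y hy; exact ⟨hy.1, dD y hy.2⟩
  · rw [Set.disjoint_left]
    intro y hy hy2
    exact hy2.2 ⟨hy2.1.1, hy.2⟩
  · rw [Set.disjoint_left]
    rintro y hy (hy2 | hy2)
    · exact hy.2 hy2.1.2
    · exact hy.2 (hTQ hy2.1.1)

lemma fin_arith (iA iE iE' iM iβ Fa X Y k k' c2 c3 : ℝ) (hX : 0 < X) (hY : 0 < Y) (hk : 0 < k * k')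
    (h2 : 0 < c2) (h3 : 0 < c3) (bA : |iA| ≤ 100 * k * k' * X) (bE : |iE| ≤ 4 * k * k' * Y)
    (bE' : |iE'| ≤ 4 * k * k' * Y) (bM : |iM| ≤ c2 * X) (bT : |iβ - Fa| ≤ c3 * X) :
    |iA + iE - iE' + (-iM - -iβ) - Fa| ≤ (100 * k * k' + 8 * k * k' + c2 + c3) * (X + Y) := by
  have w1 := mul_pos hk hX
  have w2 := mul_pos hk hY
  have w3 := mul_pos h2 hY
  have w4 := mul_pos h3 hY
  rw [abs_le] at *
  constructor
  · linarith [bA.1, bE.1, bE'.2, bM.2, bT.1]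
  · linarith [bA.2, bE.2, bE'.1, bM.1, bT.2]

theorem stmt15 (α : ℝ) (hα0 : 0 ≤ α) (hα2 : α < 2) :
    ∃ C : ℝ, 0 < C ∧ ∀ (β M δ : ℝ) (Ω₀ : Set (ℝ × ℝ)),
      0 ≤ β → 0 < M → 0 < δ → δ ≤ M / 4 →
      IsOpen Ω₀ → Bornology.IsBounded Ω₀ →
      volume Ω₀ ≤ ENNReal.ofReal (100 * M ^ 2) →
      Ω₀ ∩ {x : ℝ × ℝ | x.1 ∈ Set.Icc (-M) M ∧ x.2 ∈ Set.Icc (-M) M ∧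
          δ ^ 2 < x.1 ^ 2 + x.2 ^ 2} =
        {x : ℝ × ℝ | 0 < x.1 ∧ 0 < x.2 ∧ β * x.2 < x.1} ∩
          {x : ℝ × ℝ | x.1 ∈ Set.Icc (-M) M ∧ x.2 ∈ Set.Icc (-M) M ∧
            δ ^ 2 < x.1 ^ 2 + x.2 ^ 2} →
      ∃ V : ℝ → ℝ,
        (∀ a ∈ Set.Icc (2 * δ) (M / 2),
          Filter.Tendsto
            (fun ε : ℝ => ∫ y in Ω₀ \ {y : ℝ × ℝ | (y.1 - a) ^ 2 + y.2 ^ 2 ≤ ε ^ 2},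
              (a - y.1) / ((a - y.1) ^ 2 + y.2 ^ 2) ^ (1 + α / 2))
            (nhdsWithin 0 (Set.Ioi 0)) (nhds (V a))) ∧
        ∃ V' V'' : ℝ → ℝ, ∀ a ∈ Set.Icc (2 * δ) (M / 2),
          HasDerivWithinAt V (V' a) (Set.Icc (2 * δ) (M / 2)) a ∧
          HasDerivWithinAt V' (V'' a) (Set.Icc (2 * δ) (M / 2)) a ∧
          |V'' a - F α β / a ^ (1 + α)| ≤
            C * (1 / M ^ (1 + α) + δ ^ 2 / a ^ (3 + α)) := by
  set p := 1 + α / 2 with hpdef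
  have hp : 1 ≤ p := by rw [hpdef]; linarith
  obtain ⟨φ, hφm, hφ⟩ := phi_exists p
  set B2 := 6 * p + 4 * p * (p + 1) with hB2
  have B2pos : 0 < B2 := by positivity
  refine ⟨100 * B2 * 2 ^ (3 + α) + 8 * B2 * 2 ^ (3 + α) + (3 + α) * 2 ^ (2 + α) +
    (3 + α) * 2 ^ (1 + α), by positivity, ?_⟩
  intro β M δ Ω hβ hM hδ hδM hΩo hΩb hΩv hΩ
  have hΩf : volume Ω < ⊤ := hΩv.trans_lt ENNReal.ofReal_lt_top
  have hΩm := hΩo.measurableSet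
  have mQ := Qset_meas M
  have mD := Dset_meas δ
  have mT := Tset_meas β M
  have hTQ : Tset β M ⊆ Qset M := by
    rintro ⟨x, y⟩ ⟨h1, h2, h3, h4, h5⟩
    simp only at h1 h2 h3 h4 h5
    exact ⟨⟨by simp only; linarith, h4⟩, ⟨by simp only; linarith, h5⟩⟩
  have hW : ∀ y, y ∈ Qset M → y ∉ Dset δ → (y ∈ Ω ↔ y ∈ Tset β M) := by
    intro y hyQ hyD
    have h := Set.ext_iff.1 hΩ y
    simp only [Qset, Dset, Tset, Set.mem_inter_iff, Set.mem_ofPred_eq, not_le, Set.mem_Icc] at *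
    tauto
  set A := Ω \ Qset M with hA
  set E := Ω ∩ Qset M ∩ Dset δ with hE
  set E' := Tset β M ∩ Dset δ with hE'
  set H := M / max 1 β with hH
  have m1 : 1 ≤ max 1 β := le_max_left _ _
  have H0 : 0 < H := by positivity
  have HM : H ≤ M := div_le_self hM.le m1
  have mA : MeasurableSet A := hΩm.diff mQ
  have mE : MeasurableSet E := (hΩm.inter mQ).inter mD
  have mE' : MeasurableSet E' := mT.inter mD
  have vA : volume A ≤ ENNReal.ofReal (100 * M ^ 2) := (measure_mono Set.sdiff_subset).trans hΩv
  have vE : volume E ≤ ENNReal.ofReal (4 * δ ^ 2) :=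
    (measure_mono Set.inter_subset_right).trans (Dset_vol δ hδ)
  have vE' : volume E' ≤ ENNReal.ofReal (4 * δ ^ 2) :=
    (measure_mono Set.inter_subset_right).trans (Dset_vol δ hδ)
  set J := Set.Ioo (3 * δ / 2) (3 * M / 4) with hJ
  have oJ : IsOpen J := isOpen_Ioo
  have IJ : ∀ a ∈ Set.Icc (2 * δ) (M / 2), a ∈ J := fun a ha =>
    ⟨by linarith [ha.1], by linarith [ha.2]⟩
  have dA : ∀ b ∈ J, ∀ y ∈ A, (M / 4) ^ 2 ≤ (b - y.1) ^ 2 + y.2 ^ 2 := fun b hb y hy =>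
    (distQ M (M / 4) b y hM (by linarith [hb.1]) (by linarith) (by linarith [hb.2]) hy.2).le
  have dE : ∀ b ∈ J, ∀ y ∈ E, (δ / 2) ^ 2 ≤ (b - y.1) ^ 2 + y.2 ^ 2 := fun b hb y hy =>
    distD δ (δ / 2) b y hδ (by linarith) (by linarith [hb.1]) hy.2
  have dE' : ∀ b ∈ J, ∀ y ∈ E', (δ / 2) ^ 2 ≤ (b - y.1) ^ 2 + y.2 ^ 2 := fun b hb y hy =>
    distD δ (δ / 2) b y hδ (by linarith) (by linarith [hb.1]) hy.2
  have dM : ∀ b ∈ J, ∀ y : ℝ, (M / 4) ^ 2 ≤ (b - M) ^ 2 + y ^ 2 := fun b hb y => by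
    have := hb.2
    nlinarith [sq_nonneg y]
  have dβ : ∀ b ∈ J, ∀ y : ℝ, (δ / (1 + β)) ^ 2 ≤ (b - β * y) ^ 2 + y ^ 2 := fun b hb y =>
    distβ δ β b y hδ hβ (by linarith [hb.1])
  have M4 : 0 < M / 4 := by positivity
  have δ2 : 0 < δ / 2 := by positivity
  have δβ : 0 < δ / (1 + β) := by positivity
  have KA := diffK volume A mA (vA.trans_lt ENNReal.ofReal_lt_top) Prod.fst Prod.snd measurable_fst
    measurable_snd p hp J oJ (M / 4) M4 dA
  have KE := diffK volume E mE (vE.trans_lt ENNReal.ofReal_lt_top) Prod.fst Prod.snd measurable_fst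
    measurable_snd p hp J oJ (δ / 2) δ2 dE
  have KE' := diffK volume E' mE' (vE'.trans_lt ENNReal.ofReal_lt_top) Prod.fst Prod.snd measurable_fst
    measurable_snd p hp J oJ (δ / 2) δ2 dE'
  have KM := diffK volume (Set.Ioc 0 H) measurableSet_Ioc (by simp) (fun _ => M) (fun y => y)
    measurable_const measurable_id p hp J oJ (M / 4) M4 (fun b hb y _ => dM b hb y)
  have Kβ := diffK volume (Set.Ioc 0 H) measurableSet_Ioc (by simp) (fun y => β * y) (fun y => y)
    (by fun_prop) measurable_id p hp J oJ (δ / (1 + β)) δβ (fun b hb y _ => dβ b hb y)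
  have PM := diffPhi p hp φ hφm hφ H H0.le (fun _ => M) continuous_const J oJ (M / 4) M4
    (fun b hb y _ => dM b hb y)
  have Pβ := diffPhi p hp φ hφm hφ H H0.le (fun y => β * y) (by fun_prop) J oJ (δ / (1 + β)) δβ
    (fun b hb y _ => dβ b hb y)
  simp only [integral_neg] at PM Pβ
  refine ⟨fun a => (∫ y in A, k0 p (a - y.1) y.2) + (∫ y in E, k0 p (a - y.1) y.2)
       - (∫ y in E', k0 p (a - y.1) y.2)
       + ((∫ y in Set.Ioc 0 H, φ ((a - M) ^ 2 + y ^ 2))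
        - ∫ y in Set.Ioc 0 H, φ ((a - β * y) ^ 2 + y ^ 2)), ?_,
    fun a => (∫ y in A, k1 p (a - y.1) y.2) + (∫ y in E, k1 p (a - y.1) y.2)
       - (∫ y in E', k1 p (a - y.1) y.2)
       + (-(∫ y in Set.Ioc 0 H, k0 p (a - M) y) - -∫ y in Set.Ioc 0 H, k0 p (a - β * y) y),
    fun a => (∫ y in A, k2 p (a - y.1) y.2) + (∫ y in E, k2 p (a - y.1) y.2)
       - (∫ y in E', k2 p (a - y.1) y.2)
       + (-(∫ y in Set.Ioc 0 H, k1 p (a - M) y) - -∫ y in Set.Ioc 0 H, k1 p (a - β * y) y), ?_⟩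
  · intro a ha
    refine tendsto_const_nhds.congr' ?_
    have ha1 := ha.1
    have ha2 := ha.2
    have ha0 : 0 < a := by linarith
    set ε₀ := min (a / (2 * (1 + β))) (min (δ / 2) (M / 2)) with hε₀
    have ε₀pos : 0 < ε₀ := by positivity
    filter_upwards [Ioo_mem_nhdsGT ε₀pos] with ε hε
    have hε0 : 0 < ε := hε.1
    have e1 : ε < a / (2 * (1 + β)) := hε.2.trans_le (min_le_left _ _)
    have e2 : ε < δ / 2 := hε.2.trans_le ((min_le_right _ _).trans (min_le_left _ _))
    have e3 : ε < M / 2 := hε.2.trans_le ((min_le_right _ _).trans (min_le_right _ _))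
    rw [lt_div_iff₀ (by positivity)] at e1
    rw [← integral_sub (PM a (IJ a ha)).1 (Pβ a (IJ a ha)).1,
      ← pv_const p hp φ hφ a β M ε hM hβ hε0 (by nlinarith) (by linarith)]
    rw [← decomp p a β M δ ε hp Ω hM hδ hε0 (by linarith) (by linarith) hΩm hΩf hW hTQ]
    simp only [k0_def]
    rfl
  · intro a ha
    have haJ := IJ a ha
    have ha1 := ha.1
    have ha2 := ha.2
    have ha0 : 0 < a := by linarith
    refine ⟨?_, ?_, ?_⟩
    · exact ((((KA a haJ).2.2.1.add (KE a haJ).2.2.1).sub (KE' a haJ).2.2.1).add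
        ((PM a haJ).2.sub (Pβ a haJ).2)).hasDerivWithinAt
    · exact ((((KA a haJ).2.2.2.add (KE a haJ).2.2.2).sub (KE' a haJ).2.2.2).add
        ((KM a haJ).2.2.1.neg.sub (Kβ a haJ).2.2.1.neg)).hasDerivWithinAt
    · have bA := k2_int_bound p a (M / 2) (100 * M ^ 2) hp (by positivity) (by positivity) A mA vA
        (fun y hy => (distQ M (M / 2) a y hM ha0.le (by linarith) (by linarith) hy.2).le)
      have bE := k2_int_bound p a (a / 2) (4 * δ ^ 2) hp (by positivity) (by positivity) E mE vE
        (fun y hy => distD δ (a / 2) a y hδ (by linarith) (by linarith) hy.2)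
      have bE' := k2_int_bound p a (a / 2) (4 * δ ^ 2) hp (by positivity) (by positivity) E' mE' vE'
        (fun y hy => distD δ (a / 2) a y hδ (by linarith) (by linarith) hy.2)
      have bM : |∫ y in Set.Ioc 0 H, k1 p (a - M) y| ≤ (1 + 2 * p) * (M / 2) ^ (-(2 * p)) * M := by
        have := norm_setIntegral_le_of_norm_le_const (μ := volume) (s := Set.Ioc 0 H)
          (f := fun y : ℝ => k1 p (a - M) y) (by simp)
          (fun y _ => k1_bound p (a - M) y (M / 2) hp (by positivity) (by nlinarith [sq_nonneg y]))
        refine this.trans ?_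
        rw [Real.volume_real_Ioc_of_le H0.le, sub_zero]
        gcongr
      have bT := tail α β a M hα0 hβ hM ha0 ha2
      rw [intervalIntegral.integral_of_le H0.le] at bT
      have x1 : 2 * p + 1 = 3 + α := by rw [hpdef]; ring
      have x2 : 2 * p = 2 + α := by rw [hpdef]; ring
      rw [x1, half_rpow _ _ hM] at bA
      rw [x1, half_rpow _ _ ha0] at bE bE'
      rw [x2, half_rpow _ _ hM] at bM
      have y1 : M ^ (3 + α) = M ^ (1 + α) * M ^ 2 := by
        rw [← Real.rpow_natCast, ← Real.rpow_add hM]; congr 1; push_cast; ring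
      have y2 : M ^ (2 + α) = M ^ (1 + α) * M := by
        rw [← Real.rpow_add_one hM.ne']; congr 1; ring
      have zA : B2 * (2 ^ (3 + α) / M ^ (3 + α)) * (100 * M ^ 2) =
          (100 * B2 * 2 ^ (3 + α)) * (1 / M ^ (1 + α)) := by
        rw [y1]; field_simp
      have zM : (1 + (2 + α)) * (2 ^ (2 + α) / M ^ (2 + α)) * M =
          ((3 + α) * 2 ^ (2 + α)) * (1 / M ^ (1 + α)) := by
        rw [y2]; field_simp; ring
      have zE : B2 * (2 ^ (3 + α) / a ^ (3 + α)) * (4 * δ ^ 2) =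
          (4 * B2 * 2 ^ (3 + α)) * (δ ^ 2 / a ^ (3 + α)) := by
        ring
      have zT : (3 + α) * 2 ^ (1 + α) / M ^ (1 + α) = ((3 + α) * 2 ^ (1 + α)) * (1 / M ^ (1 + α)) := by
        ring
      rw [zA] at bA
      rw [zE] at bE bE'
      rw [zM] at bM
      rw [zT] at bT
      exact fin_arith _ _ _ _ _ _ _ _ B2 _ _ _ (by positivity) (by positivity) (by positivity)
        (by positivity) (by positivity) bA bE bE' bM bT
end
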